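/- arXiv:2508.02615 — 2 statements merged into one kernel-verified Lean document; each statement's English description precedes it below -/
import Mathlib

section
/- Let (E,d_E) be a separable metric space, let p ≥ 1 and let μ ∈ 𝒫_p(E). Let J = {2^k : k ∈ ℕ ∪ {0}}. Suppose that (μ^{(n)})_{n∈J} is a sequence of probability measures on E such that each μ^{(n)} has the form (1/n)∑_{i=1}^n δ_{x_i} for some x₁,…,x_n ∈ E. If W_p(μ^{(2n)}, μ) ≥ 2^{−1/(2p)} · W_p(μ^{(n)}, μ) for all n ∈ J, then W_p(μ^{(n)}, μ) ≥ (1/(5(1 + log₂ n))) · 𝔼[W_p(μ_n, μ)] for all n ∈ J, where μ_n is the empirical measure of μ with sample size n. -/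
open MeasureTheory ENNReal Filter

noncomputable section

/-- The `p`-Wasserstein distance between two measures on a metric space, as an
extended nonnegative real: the infimum over all couplings `γ` (measures on `E × E`
with the prescribed marginals) of `(∫ d(x,y)^p dγ)^(1/p)`. -/
def Wp {E : Type*} [MetricSpace E] [MeasurableSpace E] (p : ℝ) (μ ν : Measure E) : ℝ≥0∞ :=
  ⨅ γ ∈ {γ : Measure (E × E) | γ.map Prod.fst = μ ∧ γ.map Prod.snd = ν},
    (∫⁻ z, edist z.1 z.2 ^ p ∂γ) ^ (1 / p)

/-- The (uniform) discrete measure `(1/n) ∑ δ_{X i}`. -/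
def empiricalMeasure {E : Type*} [MeasurableSpace E] (n : ℕ) (X : Fin n → E) : Measure E :=
  (n : ℝ≥0∞)⁻¹ • ∑ i, Measure.dirac (X i)

/-- The law of `n` independent samples of `μ`. -/
def sampleMeasure {E : Type*} [MeasurableSpace E] (μ : Measure E) (n : ℕ) :
    Measure (Fin n → E) :=
  Measure.pi fun _ => μ

/-- `𝔼[W_p(μ_n, μ)]`, where `μ_n` is the empirical measure of `μ` with sample size `n`. -/
def expWp {E : Type*} [MetricSpace E] [MeasurableSpace E] (p : ℝ) (μ : Measure E) (n : ℕ) :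
    ℝ≥0∞ :=
  ∫⁻ X, Wp p (empiricalMeasure n X) μ ∂(sampleMeasure μ n)

/-- `(𝔼[W_p(μ_n, μ)^p])^{1/p}`, where `μ_n` is the empirical measure of `μ` with
sample size `n`. -/
def expWpPow {E : Type*} [MetricSpace E] [MeasurableSpace E] (p : ℝ) (μ : Measure E) (n : ℕ) :
    ℝ≥0∞ :=
  (∫⁻ X, (Wp p (empiricalMeasure n X) μ) ^ p ∂(sampleMeasure μ n)) ^ (1 / p)

/-- The optimal uniform quantization error
`b_{n,p}(μ) = inf_{x₁,…,x_n} W_p(μ, (1/n) ∑ δ_{x_i})`. -/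
def unifQuantErr {E : Type*} [MetricSpace E] [MeasurableSpace E] (p : ℝ) (n : ℕ)
    (μ : Measure E) : ℝ≥0∞ :=
  ⨅ x : Fin n → E, Wp p μ (empiricalMeasure n x)

/-- The optimal quantization error `e_{n,p}(μ)`: the infimum of `W_p(μ, ν)` over all
probability measures `ν` supported on at most `n` points. -/
def quantErr {E : Type*} [MetricSpace E] [MeasurableSpace E] (p : ℝ) (n : ℕ)
    (μ : Measure E) : ℝ≥0∞ :=
  ⨅ ν ∈ {ν : Measure E | IsProbabilityMeasure ν ∧
      ∃ S : Finset E, S.card ≤ n ∧ ν (↑S : Set E)ᶜ = 0}, Wp p μ ν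

/-- `μ` has a finite `p`-th moment: `∫ d(x, x₀)^p dμ(x) < ∞` for some `x₀`. -/
def HasFiniteMoment {E : Type*} [MetricSpace E] [MeasurableSpace E] (p : ℝ)
    (μ : Measure E) : Prop :=
  ∃ x₀ : E, ∫⁻ x, edist x x₀ ^ p ∂μ ≠ ∞

end

namespace QuantAux

open ProbabilityTheory

lemma Wp_le_of_coupling {E : Type*} [MetricSpace E] [MeasurableSpace E] {p : ℝ}
    {α β : Measure E} (γ : Measure (E × E)) (h1 : γ.map Prod.fst = α) (h2 : γ.map Prod.snd = β) :
    Wp p α β ≤ (∫⁻ z, edist z.1 z.2 ^ p ∂γ) ^ (1 / p) := by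
  unfold Wp
  exact iInf₂_le γ ⟨h1, h2⟩

lemma exists_coupling {E : Type*} [MetricSpace E] [MeasurableSpace E] {p : ℝ}
    {α β : Measure E} {c : ℝ≥0∞} (h : Wp p α β < c) :
    ∃ γ : Measure (E × E), γ.map Prod.fst = α ∧ γ.map Prod.snd = β ∧
      (∫⁻ z, edist z.1 z.2 ^ p ∂γ) ^ (1 / p) < c := by
  unfold Wp at h
  simp only [iInf_lt_iff] at h
  obtain ⟨γ, ⟨h1, h2⟩, h3⟩ := h
  exact ⟨γ, h1, h2, h3⟩

section
variable {E : Type*} [MetricSpace E] [TopologicalSpace.SeparableSpace E]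
    [MeasurableSpace E] [BorelSpace E]

lemma measurable_edist_pow (p : ℝ) : Measurable fun z : E × E => edist z.1 z.2 ^ p := by
  haveI : SecondCountableTopology E := UniformSpace.secondCountable_of_separable E
  exact (measurable_edist).pow_const p

lemma Wp_symm (p : ℝ) (α β : Measure E) : Wp p α β ≤ Wp p β α := by
  apply le_of_forall_gt
  intro c hc
  obtain ⟨γ, h1, h2, h3⟩ := exists_coupling hc
  refine lt_of_le_of_lt (Wp_le_of_coupling (γ.map Prod.swap) ?_ ?_) (lt_of_eq_of_lt ?_ h3)
  · rw [Measure.map_map measurable_fst measurable_swap]; exact h2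
  · rw [Measure.map_map measurable_snd measurable_swap]; exact h1
  · rw [lintegral_map (measurable_edist_pow p) measurable_swap]
    simp [edist_comm]

lemma Wp_add_left {p : ℝ} (hp : 1 ≤ p) (κ α β : Measure E) : Wp p (κ + α) (κ + β) ≤ Wp p α β := by
  apply le_of_forall_gt
  intro c hc
  obtain ⟨γ, h1, h2, h3⟩ := exists_coupling hc
  have hd : Measurable fun x : E => (x, x) := measurable_id.prodMk measurable_id
  refine lt_of_le_of_lt (Wp_le_of_coupling (κ.map (fun x => (x, x)) + γ) ?_ ?_) (lt_of_eq_of_lt ?_ h3)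
  · rw [Measure.map_add _ _ measurable_fst, Measure.map_map measurable_fst hd, h1]
    congr 1
    exact Measure.map_id
  · rw [Measure.map_add _ _ measurable_snd, Measure.map_map measurable_snd hd, h2]
    congr 1
    exact Measure.map_id
  · rw [lintegral_add_measure, lintegral_map (measurable_edist_pow p) hd]
    have : (0 : ℝ) < p := by linarith
    simp [this]

/-- gluing three couplings on a triple space -/
lemma Wp_le_of_triple {p : ℝ} (hp : 1 ≤ p) {α δ : Measure E} {γ₁ γ₂ : Measure (E × E)}
    (τ : Measure (E × E × E)) (h1 : τ.map (fun z => (z.1, z.2.1)) = γ₁)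
    (h2 : τ.map (fun z => z.2) = γ₂) (hα : γ₁.map Prod.fst = α) (hδ : γ₂.map Prod.snd = δ) :
    Wp p α δ ≤ (∫⁻ z, edist z.1 z.2 ^ p ∂γ₁) ^ (1 / p) +
      (∫⁻ z, edist z.1 z.2 ^ p ∂γ₂) ^ (1 / p) := by
  haveI : SecondCountableTopology E := UniformSpace.secondCountable_of_separable E
  have m1 : Measurable fun z : E × E × E => (z.1, z.2.1) := by fun_prop
  have m2 : Measurable fun z : E × E × E => z.2 := by fun_prop
  have m3 : Measurable fun z : E × E × E => (z.1, z.2.2) := by fun_prop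
  refine (Wp_le_of_coupling (τ.map (fun z => (z.1, z.2.2))) ?_ ?_).trans ?_
  · rw [← hα, ← h1, Measure.map_map measurable_fst m3, Measure.map_map measurable_fst m1]; rfl
  · rw [← hδ, ← h2, Measure.map_map measurable_snd m3, Measure.map_map measurable_snd m2]; rfl
  rw [← h1, ← h2, lintegral_map (measurable_edist_pow p) m1, lintegral_map (measurable_edist_pow p) m2,
    lintegral_map (measurable_edist_pow p) m3]
  have hp0 : 0 ≤ p := by linarith
  refine le_trans ?_ (ENNReal.lintegral_Lp_add_le (μ := τ) (f := fun z => edist z.1 z.2.1)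
    (g := fun z => edist z.2.1 z.2.2) ?_ ?_ hp)
  · gcongr with z
    exact edist_triangle _ _ _
  · exact (measurable_edist.comp m1).aemeasurable
  · exact (measurable_edist.comp m2).aemeasurable

lemma sum_restrict_of_null {Ω : Type*} [MeasurableSpace Ω] (γ : Measure Ω) (f : Ω → E)
    (hf : Measurable f) (S : Finset E) (h : γ (f ⁻¹' (S : Set E)ᶜ) = 0) :
    ∑ y ∈ S, γ.restrict (f ⁻¹' {y}) = γ := by
  ext A hA
  rw [Measure.finsetSum_apply]
  have : ∀ y ∈ S, (γ.restrict (f ⁻¹' {y})) A = γ (A ∩ f ⁻¹' {y}) :=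
    fun y _ => Measure.restrict_apply hA
  rw [Finset.sum_congr rfl this, ← measure_biUnion_finset]
  · apply le_antisymm
    · apply measure_mono; intro z hz; simp at hz; exact hz.1
    · rw [← measure_diff_null (s := A) h]
      apply measure_mono
      intro z hz
      simp at hz ⊢
      exact hz
  · intro a _ b _ hab
    refine Set.disjoint_left.2 ?_
    rintro z ⟨_, hz⟩ ⟨_, hz'⟩
    simp at hz hz'
    exact hab (hz.symm.trans hz')
  · intro y _
    exact hA.inter (hf (measurableSet_singleton y))

lemma Wp_triangle {p : ℝ} (hp : 1 ≤ p) (α β δ : Measure E) [IsFiniteMeasure β]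
    (S : Finset E) (hS : β (S : Set E)ᶜ = 0) :
    Wp p α δ ≤ Wp p α β + Wp p β δ := by
  classical
  by_cases hT : Wp p α β = ∞
  · simp [hT]
  by_cases hT' : Wp p β δ = ∞
  · simp [hT']
  apply ENNReal.le_of_forall_pos_le_add
  intro ε hε _
  have hε2 : (ε / 2 : ℝ≥0∞) ≠ 0 := by
    simp [hε.ne']
  obtain ⟨γ₁, a1, a2, a3⟩ := exists_coupling (ENNReal.lt_add_right hT hε2)
  obtain ⟨γ₂, b1, b2, b3⟩ := exists_coupling (ENNReal.lt_add_right hT' hε2)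
  have key : Wp p α δ ≤ (∫⁻ z, edist z.1 z.2 ^ p ∂γ₁) ^ (1 / p) +
      (∫⁻ z, edist z.1 z.2 ^ p ∂γ₂) ^ (1 / p) := by
    let A : E → Measure E := fun y => (γ₁.restrict (Prod.snd ⁻¹' {y})).map Prod.fst
    let B : E → Measure E := fun y => (γ₂.restrict (Prod.fst ⁻¹' {y})).map Prod.snd
    have hA : ∀ y, A y Set.univ = β {y} := by
      intro y
      simp only [A]
      rw [Measure.map_apply measurable_fst MeasurableSet.univ, ← a2,
        Measure.map_apply measurable_snd (measurableSet_singleton y)]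
      simp
    have hB : ∀ y, B y Set.univ = β {y} := by
      intro y
      simp only [B]
      rw [Measure.map_apply measurable_snd MeasurableSet.univ, ← b1,
        Measure.map_apply measurable_fst (measurableSet_singleton y)]
      simp
    have fA : ∀ y, IsFiniteMeasure (A y) := fun y => ⟨by rw [hA]; exact measure_lt_top _ _⟩
    have fB : ∀ y, IsFiniteMeasure (B y) := fun y => ⟨by rw [hB]; exact measure_lt_top _ _⟩
    have mm : ∀ y : E, Measurable fun z : E × E => (z.1, y, z.2) := by intro y; fun_prop
    let τ : Measure (E × E × E) := ∑ y ∈ S, (β {y})⁻¹ • ((A y).prod (B y)).map (fun z => (z.1, y, z.2))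
    have m1 : Measurable fun z : E × E × E => (z.1, z.2.1) := by fun_prop
    have m2 : Measurable fun z : E × E × E => z.2 := by fun_prop
    refine Wp_le_of_triple hp τ ?_ ?_ a1 b2
    · have n1 : γ₁ (Prod.snd ⁻¹' (S : Set E)ᶜ) = 0 := by
        rw [← Measure.map_apply measurable_snd S.measurableSet.compl, a2, hS]
      conv_rhs => rw [← sum_restrict_of_null γ₁ Prod.snd measurable_snd S n1]
      simp only [τ]
      rw [Measure.map_finset_sum m1.aemeasurable]
      refine Finset.sum_congr rfl fun y _ => ?_
      rw [Measure.map_smul, Measure.map_map m1 (mm y)]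
      have e1 : (fun z : E × E × E => (z.1, z.2.1)) ∘ (fun z : E × E => (z.1, y, z.2))
          = (fun a => (a, y)) ∘ Prod.fst := rfl
      rw [e1, ← Measure.map_map (by fun_prop) measurable_fst, Measure.map_fst_prod, hB,
        Measure.map_smul, smul_smul]
      have e2 : (A y).map (fun a => (a, y)) = γ₁.restrict (Prod.snd ⁻¹' {y}) := by
        simp only [A]
        rw [Measure.map_map (by fun_prop) measurable_fst]
        conv_rhs => rw [← Measure.map_id (μ := γ₁.restrict (Prod.snd ⁻¹' {y}))]
        apply Measure.map_congr
        filter_upwards [ae_restrict_mem (measurable_snd (measurableSet_singleton y))] with z hz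
        simp at hz
        simp [← hz]
      rw [e2]
      by_cases h0 : β {y} = 0
      · have : γ₁.restrict (Prod.snd ⁻¹' {y}) = 0 := by
          rw [Measure.restrict_eq_zero, ← Measure.map_apply measurable_snd (measurableSet_singleton y),
            a2, h0]
        rw [this]; simp
      · rw [ENNReal.inv_mul_cancel h0 (measure_ne_top _ _), one_smul]
    · have n1 : γ₂ (Prod.fst ⁻¹' (S : Set E)ᶜ) = 0 := by
        rw [← Measure.map_apply measurable_fst S.measurableSet.compl, b1, hS]
      conv_rhs => rw [← sum_restrict_of_null γ₂ Prod.fst measurable_fst S n1]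
      simp only [τ]
      rw [Measure.map_finset_sum m2.aemeasurable]
      refine Finset.sum_congr rfl fun y _ => ?_
      rw [Measure.map_smul, Measure.map_map m2 (mm y)]
      have e1 : (fun z : E × E × E => z.2) ∘ (fun z : E × E => (z.1, y, z.2))
          = (fun a => (y, a)) ∘ Prod.snd := rfl
      rw [e1, ← Measure.map_map (by fun_prop) measurable_snd, Measure.map_snd_prod, hA,
        Measure.map_smul, smul_smul]
      have e2 : (B y).map (fun a => (y, a)) = γ₂.restrict (Prod.fst ⁻¹' {y}) := by
        simp only [B]
        rw [Measure.map_map (by fun_prop) measurable_snd]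
        conv_rhs => rw [← Measure.map_id (μ := γ₂.restrict (Prod.fst ⁻¹' {y}))]
        apply Measure.map_congr
        filter_upwards [ae_restrict_mem (measurable_fst (measurableSet_singleton y))] with z hz
        simp at hz
        simp [← hz]
      rw [e2]
      by_cases h0 : β {y} = 0
      · have : γ₂.restrict (Prod.fst ⁻¹' {y}) = 0 := by
          rw [Measure.restrict_eq_zero, ← Measure.map_apply measurable_fst (measurableSet_singleton y),
            b1, h0]
        rw [this]; simp
      · rw [ENNReal.inv_mul_cancel h0 (measure_ne_top _ _), one_smul]
  calc _ ≤ _ := key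
    _ ≤ (Wp p α β + ε / 2) + (Wp p β δ + ε / 2) := add_le_add a3.le b3.le
    _ = Wp p α β + Wp p β δ + (ε / 2 + ε / 2) := by ring
    _ = _ := by rw [ENNReal.add_halves]

end

/-- finitely supported measure with weights `max (w i) 0` at the points `x i` -/
noncomputable def disc {E ι : Type*} [MeasurableSpace E] [Fintype ι] (x : ι → E) (w : ι → ℝ) :
    Measure E :=
  ∑ i, ENNReal.ofReal (w i) • Measure.dirac (x i)

section
variable {E : Type*} [MetricSpace E] [TopologicalSpace.SeparableSpace E]
    [MeasurableSpace E] [BorelSpace E] {ι κ : Type*} [Fintype ι] [Fintype κ]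


lemma Wp_triangle_disc {p : ℝ} (hp : 1 ≤ p) (α δ : Measure E) (x : ι → E) (w : ι → ℝ) :
    Wp p α δ ≤ Wp p α (disc x w) + Wp p (disc x w) δ := by
  classical
  have : IsFiniteMeasure (disc x w) := by
    constructor
    simp only [disc, Measure.finsetSum_apply, Measure.smul_apply, measure_univ, smul_eq_mul, mul_one]
    exact ENNReal.sum_lt_top.2 fun i _ => ENNReal.ofReal_lt_top
  refine Wp_triangle hp _ _ _ (Finset.univ.image x) ?_
  simp only [disc, Measure.finsetSum_apply, Measure.smul_apply, smul_eq_mul]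
  refine Finset.sum_eq_zero fun i _ => ?_
  rw [Measure.dirac_apply' _ (Finset.measurableSet _).compl]
  simp

lemma empirical_eq_disc (n : ℕ) (hn : 0 < n) (X : Fin n → E) :
    empiricalMeasure n X = disc X (fun _ => 1 / (n : ℝ)) := by
  have : ENNReal.ofReal (1 / (n : ℝ)) = (n : ℝ≥0∞)⁻¹ := by
    rw [one_div, ENNReal.ofReal_inv_of_pos (by exact_mod_cast hn), ENNReal.ofReal_natCast]
  simp only [empiricalMeasure, disc, this, Finset.smul_sum]

lemma Wp_disc_transport {p : ℝ} (x : ι → E) (y : κ → E) (w : ι → ℝ) (hw : ∀ i, 0 ≤ w i)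
    (P : ι → κ → ℝ) (hP : ∀ i j, 0 ≤ P i j) (hP1 : ∀ i, ∑ j, P i j = 1) :
    Wp p (disc x w) (disc y (fun j => ∑ i, w i * P i j)) ≤
      (∑ i, ENNReal.ofReal (w i) * ∑ j, ENNReal.ofReal (P i j) * edist (x i) (y j) ^ p) ^ (1 / p) := by
  refine (Wp_le_of_coupling (∑ i, ENNReal.ofReal (w i) • ∑ j, ENNReal.ofReal (P i j) •
    Measure.dirac (x i, y j)) ?_ ?_).trans (le_of_eq ?_)
  · rw [Measure.map_finset_sum measurable_fst.aemeasurable]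
    refine Finset.sum_congr rfl fun i _ => ?_
    rw [Measure.map_smul, Measure.map_finset_sum measurable_fst.aemeasurable]
    simp only [Measure.map_smul, Measure.map_dirac' measurable_fst]
    rw [← Finset.sum_smul, ← ENNReal.ofReal_sum_of_nonneg (fun j _ => hP i j), hP1]
    simp
  · rw [Measure.map_finset_sum measurable_snd.aemeasurable]
    simp only [Measure.map_smul, Measure.map_finset_sum measurable_snd.aemeasurable,
      Measure.map_dirac' measurable_snd, Finset.smul_sum, smul_smul, disc]
    rw [Finset.sum_comm]
    refine Finset.sum_congr rfl fun j _ => ?_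
    rw [← Finset.sum_smul, ENNReal.ofReal_sum_of_nonneg (fun i _ => mul_nonneg (hw i) (hP i j))]
    simp only [ENNReal.ofReal_mul (hw _)]
  · congr 1
    simp only [lintegral_finsetSum_measure, lintegral_smul_measure,
      lintegral_dirac' _ (measurable_edist_pow p), smul_eq_mul]

lemma Wp_disc_common {p : ℝ} (hp : 1 ≤ p) (x : ι → E) (u v : ι → ℝ) (hu : ∀ i, 0 ≤ u i)
    (hv : ∀ i, 0 ≤ v i) :
    Wp p (disc x u) (disc x v) ≤
      Wp p (disc x (fun i => u i - v i)) (disc x (fun i => -(u i - v i))) := by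
  have h1 : disc x u = disc x (fun i => min (u i) (v i)) + disc x (fun i => u i - v i) := by
    simp only [disc, ← Finset.sum_add_distrib, ← add_smul]
    refine Finset.sum_congr rfl fun i _ => ?_
    congr 1
    rcases le_total (u i) (v i) with h | h
    · rw [min_eq_left h, ENNReal.ofReal_of_nonpos (sub_nonpos.2 h), add_zero]
    · rw [min_eq_right h, ← ENNReal.ofReal_add (hv i) (sub_nonneg.2 h)]; congr 1; ring
  have h2 : disc x v = disc x (fun i => min (u i) (v i)) + disc x (fun i => -(u i - v i)) := by
    simp only [disc, ← Finset.sum_add_distrib, ← add_smul]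
    refine Finset.sum_congr rfl fun i _ => ?_
    congr 1
    rcases le_total (v i) (u i) with h | h
    · rw [min_eq_right h, ENNReal.ofReal_of_nonpos (p := -(u i - v i)) (by linarith), add_zero]
    · rw [min_eq_left h, ← ENNReal.ofReal_add (hu i) (by linarith)]; congr 1; ring
  rw [h1, h2]
  exact Wp_add_left hp _ _ _

lemma disc_pos_part (x : ι → E) (a : ι → ℝ) : disc x (fun i => max (a i) 0) = disc x a := by
  simp only [disc]
  refine Finset.sum_congr rfl fun i _ => ?_
  congr 1
  rcases le_total (a i) 0 with h | h
  · rw [max_eq_right h, ENNReal.ofReal_of_nonpos h, ENNReal.ofReal_zero]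
  · rw [max_eq_left h]

/-- one step of the multiscale argument, deterministic -/
lemma Wp_step {p : ℝ} (hp : 1 ≤ p) (x : ι → E) (y : κ → E) (a : ι → ℝ)
    (P : ι → κ → ℝ) (hP : ∀ i j, 0 ≤ P i j) (hP1 : ∀ i, ∑ j, P i j = 1) :
    Wp p (disc x a) (disc x (fun i => - a i)) ≤
      2 * (∑ i, ENNReal.ofReal |a i| * ∑ j, ENNReal.ofReal (P i j) * edist (x i) (y j) ^ p) ^ (1 / p)
      + Wp p (disc y (fun j => ∑ i, a i * P i j)) (disc y (fun j => -∑ i, a i * P i j)) := by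
  have hp0 : 0 ≤ 1 / p := by positivity
  have g : ∀ b : ι → ℝ, (∀ i, b i ≤ |a i|) →
      Wp p (disc x b) (disc y (fun j => ∑ i, max (b i) 0 * P i j)) ≤
      (∑ i, ENNReal.ofReal |a i| * ∑ j, ENNReal.ofReal (P i j) * edist (x i) (y j) ^ p) ^ (1 / p) := by
    intro b hb
    have := Wp_disc_transport (p := p) x y (fun i => max (b i) 0) (fun i => le_max_right _ _) P hP hP1
    rw [disc_pos_part] at this
    refine this.trans ?_
    gcongr with i
    exact max_le (hb i) (abs_nonneg _)
  have g1 := g a (fun i => le_abs_self _)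
  have g2 := g (fun i => -a i) (fun i => neg_le_abs _)
  have g3 := Wp_disc_common hp y (fun j => ∑ i, max (a i) 0 * P i j)
    (fun j => ∑ i, max (-a i) 0 * P i j)
    (fun j => Finset.sum_nonneg fun i _ => mul_nonneg (le_max_right _ _) (hP i j))
    (fun j => Finset.sum_nonneg fun i _ => mul_nonneg (le_max_right _ _) (hP i j))
  have e : ∀ j, ∑ i, max (a i) 0 * P i j - ∑ i, max (-a i) 0 * P i j = ∑ i, a i * P i j := by
    intro j
    rw [← Finset.sum_sub_distrib]
    refine Finset.sum_congr rfl fun i _ => ?_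
    rcases le_total (a i) 0 with h | h
    · rw [max_eq_right h, max_eq_left (by linarith)]; ring
    · rw [max_eq_left h, max_eq_right (by linarith)]; ring
  simp only [e] at g3
  have t1 := Wp_triangle_disc hp (disc x a) (disc x (fun i => - a i)) y
    (fun j => ∑ i, max (a i) 0 * P i j)
  have t2 := Wp_triangle_disc hp (disc y (fun j => ∑ i, max (a i) 0 * P i j))
    (disc x (fun i => - a i)) y (fun j => ∑ i, max (-a i) 0 * P i j)
  have g2' := (Wp_symm p _ _).trans g2
  calc _ ≤ _ := t1
    _ ≤ _ := add_le_add g1 (t2.trans (add_le_add g3 g2'))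
    _ = _ := by ring

end

section
variable {E : Type*} [MetricSpace E] [TopologicalSpace.SeparableSpace E]
    [MeasurableSpace E] [BorelSpace E]

open Classical in
lemma sum_inv_card {M : Type*} [AddCommMonoid M] [Module ℝ≥0∞ M] {N : ℕ} (x : Fin N → E)
    (f : E → M) :
    ∑ i, ((Finset.univ.filter (fun j => x j = x i)).card : ℝ≥0∞)⁻¹ • f (x i) =
      ∑ y ∈ Finset.univ.image x, f y := by
  rw [Finset.sum_comp (fun y => ((Finset.univ.filter (fun j => x j = y)).card : ℝ≥0∞)⁻¹ • f y) x]
  refine Finset.sum_congr rfl fun y hy => ?_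
  rw [← Nat.cast_smul_eq_nsmul ℝ≥0∞, smul_smul, ENNReal.mul_inv_cancel, one_smul]
  · simp only [Finset.mem_image] at hy
    obtain ⟨i, _, hi⟩ := hy
    have : (Finset.univ.filter (fun j => x j = y)).Nonempty := ⟨i, by simp [hi]⟩
    exact_mod_cast this.card_pos.ne'
  · exact ENNReal.natCast_ne_top _

lemma extract {p : ℝ} {N : ℕ} (hN : 0 < N) (x : Fin N → E) (μ : Measure E)
    [IsProbabilityMeasure μ] {c : ℝ≥0∞} (h : Wp p (empiricalMeasure N x) μ < c) (hp : 1 ≤ p) :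
    ∃ g : Fin N → E → ℝ, (∀ i, Measurable (g i)) ∧ (∀ i y, 0 ≤ g i y) ∧ (∀ y, ∑ i, g i y = 1) ∧
      (∀ i, ∫ y, g i y ∂μ = 1 / N) ∧
      (∑ i, ∫⁻ y, ENNReal.ofReal (g i y) * edist (x i) y ^ p ∂μ) ^ (1 / p) ≤ c := by
  classical
  have : SecondCountableTopology E := UniformSpace.secondCountable_of_separable E
  obtain ⟨γ, h1, h2, h3⟩ := exists_coupling h
  let S : Finset E := Finset.univ.image x
  let cnt : E → ℝ≥0∞ := fun y => ((Finset.univ.filter (fun j => x j = y)).card : ℝ≥0∞)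
  let ρ : E → Measure E := fun y => (γ.restrict (Prod.fst ⁻¹' {y})).map Prod.snd
  have hcnt0 : ∀ i, cnt (x i) ≠ 0 := by
    intro i
    have : (Finset.univ.filter (fun j => x j = x i)).Nonempty := ⟨i, by simp⟩
    simp only [cnt]
    exact_mod_cast this.card_pos.ne'
  have hcntT : ∀ y, cnt y ≠ ∞ := fun y => ENNReal.natCast_ne_top _
  let m : Fin N → Measure E := fun i => (cnt (x i))⁻¹ • ρ (x i)
  have hnull : γ (Prod.fst ⁻¹' (S : Set E)ᶜ) = 0 := by
    rw [← Measure.map_apply measurable_fst S.measurableSet.compl, h1]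
    simp only [empiricalMeasure, Measure.smul_apply, Measure.finsetSum_apply, smul_eq_mul]
    rw [Finset.sum_eq_zero, mul_zero]
    intro i _
    rw [Measure.dirac_apply' _ (Finset.measurableSet _).compl]
    simp [S]
  have hsum : ∑ y ∈ S, γ.restrict (Prod.fst ⁻¹' {y}) = γ :=
    sum_restrict_of_null γ Prod.fst measurable_fst S hnull
  have hm : ∑ i, m i = μ := by
    have := sum_inv_card x ρ
    rw [show ∑ i, m i = ∑ y ∈ S, ρ y from this, ← h2]
    conv_rhs => rw [← hsum]
    rw [Measure.map_finset_sum measurable_snd.aemeasurable]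
  have hmu : ∀ i, m i Set.univ = (N : ℝ≥0∞)⁻¹ := by
    intro i
    simp only [m, ρ, Measure.smul_apply, smul_eq_mul]
    rw [Measure.map_apply measurable_snd MeasurableSet.univ]
    have : γ (Prod.fst ⁻¹' {x i}) = (N : ℝ≥0∞)⁻¹ * cnt (x i) := by
      rw [← Measure.map_apply measurable_fst (measurableSet_singleton _), h1]
      simp only [empiricalMeasure, Measure.smul_apply, Measure.finsetSum_apply, smul_eq_mul, cnt]
      congr 1
      simp [Set.indicator_apply, Finset.sum_boole]
    simp only [Set.preimage_univ, Measure.restrict_apply_univ, this]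
    rw [mul_comm, mul_assoc, ENNReal.mul_inv_cancel (hcnt0 i) (hcntT _), mul_one]
  have hmle : ∀ i, m i ≤ μ := by
    intro i
    rw [← hm]
    exact Finset.single_le_sum (f := m) (fun j _ => bot_le) (Finset.mem_univ i)
  have hmac : ∀ i, m i ≪ μ := fun i => Measure.absolutelyContinuous_of_le (hmle i)
  have hfin : ∀ i, IsFiniteMeasure (m i) := fun i => isFiniteMeasure_of_le μ (hmle i)
  let φ : Fin N → E → ℝ≥0∞ := fun i => (m i).rnDeriv μ
  have hφm : ∀ i, Measurable (φ i) := fun i => Measure.measurable_rnDeriv _ _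
  have hφ : ∀ i, μ.withDensity (φ i) = m i := fun i => Measure.withDensity_rnDeriv_eq _ _ (hmac i)
  have hone : (fun y => ∑ i, φ i y) =ᵐ[μ] fun _ => 1 := by
    refine ae_eq_of_forall_setLIntegral_eq_of_sigmaFinite
      (Finset.measurable_sum _ fun i _ => hφm i) measurable_const ?_
    intro A hA _
    rw [lintegral_finsetSum _ fun i _ => hφm i]
    simp only [← withDensity_apply _ hA, hφ]
    rw [← Measure.finsetSum_apply, hm]
    simp
  let g : Fin N → E → ℝ := fun i y => if ∑ j, φ j y = 1 then (φ i y).toReal else 1 / N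
  have hφT : ∀ i y, ∑ j, φ j y = 1 → φ i y ≠ ∞ := by
    intro i y hy
    have : φ i y ≤ 1 := by
      rw [← hy]; exact Finset.single_le_sum (f := fun j => φ j y) (fun j _ => bot_le) (Finset.mem_univ i)
    exact ne_top_of_le_ne_top one_ne_top this
  have hg0 : ∀ i y, 0 ≤ g i y := by
    intro i y
    simp only [g]; split_ifs <;> positivity
  have hgm : ∀ i, Measurable (g i) := by
    intro i
    refine Measurable.ite ?_ (hφm i).ennreal_toReal measurable_const
    exact (Finset.measurable_sum _ fun i _ => hφm i) (measurableSet_singleton (1 : ℝ≥0∞))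
  have hgφ : ∀ i, (fun y => ENNReal.ofReal (g i y)) =ᵐ[μ] φ i := by
    intro i
    filter_upwards [hone] with y hy
    simp only [g, hy, if_true]
    exact ENNReal.ofReal_toReal (hφT i y hy)
  refine ⟨g, hgm, hg0, ?_, ?_, ?_⟩
  · intro y
    by_cases hy : ∑ j, φ j y = 1
    · simp only [g, hy, if_true]
      rw [← ENNReal.toReal_sum (fun i _ => hφT i y hy), hy, ENNReal.toReal_one]
    · simp only [g, hy, if_false]
      have : (N : ℝ) ≠ 0 := by exact_mod_cast hN.ne'
      simp [this]
  · intro i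
    rw [integral_eq_lintegral_of_nonneg_ae (ae_of_all _ (hg0 i)) (hgm i).aestronglyMeasurable,
      lintegral_congr_ae (hgφ i), ← setLIntegral_univ, ← withDensity_apply _ MeasurableSet.univ, hφ, hmu]
    simp
  · refine le_trans (le_of_eq ?_) h3.le
    congr 1
    have e1 : ∀ i, ∫⁻ y, ENNReal.ofReal (g i y) * edist (x i) y ^ p ∂μ
        = (cnt (x i))⁻¹ • ∫⁻ y, edist (x i) y ^ p ∂(ρ (x i)) := by
      intro i
      rw [← lintegral_smul_measure]
      change _ = ∫⁻ y, edist (x i) y ^ p ∂(m i)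
      have hme : Measurable fun y => edist (x i) y ^ p :=
        (measurable_edist_right).pow_const p
      rw [← hφ i, lintegral_withDensity_eq_lintegral_mul _ (hφm i) hme]
      refine lintegral_congr_ae ?_
      filter_upwards [hgφ i] with y hy
      simp only [Pi.mul_apply, hy]
    simp only [e1]
    have := sum_inv_card x (fun z => ∫⁻ y, edist z y ^ p ∂(ρ z))
    rw [show ∑ i, (cnt (x i))⁻¹ • ∫⁻ y, edist (x i) y ^ p ∂(ρ (x i)) = _ from this]
    conv_rhs => rw [← hsum]
    rw [lintegral_finsetSum_measure]
    refine Finset.sum_congr rfl fun z _ => ?_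
    simp only [ρ]
    rw [lintegral_map ((measurable_edist_right).pow_const p) measurable_snd]
    refine lintegral_congr_ae ?_
    filter_upwards [ae_restrict_mem (measurable_fst (measurableSet_singleton z))] with w hw
    simp at hw
    simp [hw]

end

lemma jensen_rpow {Ω : Type*} [MeasurableSpace Ω] (P : Measure Ω) [IsProbabilityMeasure P] {p : ℝ}
    (hp : 1 ≤ p) (f : Ω → ℝ≥0∞) (hf : Measurable f) :
    ∫⁻ z, f z ^ (1 / p) ∂P ≤ (∫⁻ z, f z ∂P) ^ (1 / p) := by
  have hp0 : 0 < p := by linarith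
  have := eLpNorm'_le_eLpNorm'_of_exponent_le (f := fun z => f z ^ (1 / p)) zero_lt_one hp P
    (hf.pow_const _).aestronglyMeasurable
  simp only [eLpNorm'_eq_lintegral_enorm, enorm_eq_self, ENNReal.rpow_one, div_one] at this
  refine this.trans (le_of_eq ?_)
  congr 2
  ext z
  rw [← ENNReal.rpow_mul, one_div_mul_cancel hp0.ne', ENNReal.rpow_one]

section
variable {E : Type*} [MetricSpace E] [TopologicalSpace.SeparableSpace E]
    [MeasurableSpace E] [BorelSpace E]

instance (μ : Measure E) [IsProbabilityMeasure μ] (n : ℕ) : IsProbabilityMeasure (sampleMeasure μ n) := by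
  unfold sampleMeasure; infer_instance

lemma dev_bound (μ : Measure E) [IsProbabilityMeasure μ] {n : ℕ} (hn : 0 < n) (g : E → ℝ)
    (hg : Measurable g) (h0 : ∀ y, 0 ≤ g y) (h1 : ∀ y, g y ≤ 1) (q : ℝ) (hq : ∫ y, g y ∂μ = q) :
    ∫⁻ X, ENNReal.ofReal |1 / (n : ℝ) * ∑ s, g (X s) - q| ∂(sampleMeasure μ n) ≤
      ENNReal.ofReal (Real.sqrt (q / n)) := by
  have hn' : (0 : ℝ) < n := by exact_mod_cast hn
  have hL : MemLp g 2 μ := by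
    refine MemLp.of_bound hg.aestronglyMeasurable 1 (ae_of_all _ fun y => ?_)
    rw [Real.norm_eq_abs, abs_of_nonneg (h0 y)]; exact h1 y
  have hI : Integrable g μ := hL.integrable (by norm_num)
  let Z : (Fin n → E) → ℝ := ∑ s : Fin n, fun X => g (X s)
  have hZ : ∀ X, Z X = ∑ s, g (X s) := fun X => by simp [Z]
  have hLs : ∀ s : Fin n, MemLp (fun X : Fin n → E => g (X s)) 2 (sampleMeasure μ n) :=
    fun s => hL.comp_measurePreserving (measurePreserving_eval (fun _ : Fin n => μ) s)
  have hZL : MemLp Z 2 (sampleMeasure μ n) := memLp_finsetSum' _ fun s _ => hLs s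
  have hvar : Var[Z; sampleMeasure μ n] = n * Var[g; μ] := by
    have := variance_sum_pi (μ := fun _ : Fin n => μ) (X := fun _ => g) (fun _ => hL)
    rw [show Var[Z; sampleMeasure μ n] = _ from this]
    simp
  have hvg : Var[g; μ] ≤ q := by
    refine (variance_le_expectation_sq hg.aestronglyMeasurable).trans ?_
    rw [← hq]
    refine integral_mono_of_nonneg (ae_of_all _ fun y => sq_nonneg (g y)) hI (ae_of_all _ fun y => ?_)
    have := h0 y; have := h1 y
    simp only [Pi.pow_apply]
    nlinarith
  have hmean : ∫ X, Z X ∂(sampleMeasure μ n) = n * q := by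
    simp only [hZ]
    rw [integral_finsetSum _ (fun s _ => (hLs s).integrable (by norm_num))]
    have : ∀ s : Fin n, ∫ X, g (X s) ∂(sampleMeasure μ n) = q := by
      intro s
      rw [← hq]
      exact integral_comp_eval (μ := fun _ : Fin n => μ) (i := s) hg.aestronglyMeasurable
    simp [this]
  have hmZ : Measurable Z := by
    have : Z = fun X => ∑ s, g (X s) := funext hZ
    rw [this]
    fun_prop
  have hev : ∫⁻ X, ENNReal.ofReal ((1 / (n : ℝ) * Z X - q) ^ 2) ∂(sampleMeasure μ n) ≤
      ENNReal.ofReal (q / n) := by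
    rw [← ofReal_integral_eq_lintegral_ofReal]
    · apply ENNReal.ofReal_le_ofReal
      rw [variance_eq_integral hmZ.aemeasurable, hmean] at hvar
      have e : ∀ X, (1 / (n : ℝ) * Z X - q) ^ 2 = (1 / (n : ℝ) ^ 2) * (Z X - n * q) ^ 2 := by
        intro X; field_simp
      simp only [e]
      rw [integral_const_mul, hvar]
      calc 1 / (n : ℝ) ^ 2 * (n * Var[g; μ]) = Var[g; μ] / n := by field_simp
        _ ≤ q / n := by gcongr
    · exact ((hZL.const_mul _).sub (memLp_const q)).integrable_sq
    · exact ae_of_all _ fun X => by positivity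
  have hJ := jensen_rpow (sampleMeasure μ n) (p := 2) (by norm_num)
    (fun X => ENNReal.ofReal ((1 / (n : ℝ) * Z X - q) ^ 2)) (by fun_prop)
  have e2 : ∀ t : ℝ, 0 ≤ t → ENNReal.ofReal t ^ (1 / 2 : ℝ) = ENNReal.ofReal (Real.sqrt t) := by
    intro t ht
    rw [ENNReal.ofReal_rpow_of_nonneg ht (by norm_num), Real.sqrt_eq_rpow]
  have hq0 : 0 ≤ q := by rw [← hq]; exact integral_nonneg h0
  calc ∫⁻ X, ENNReal.ofReal |1 / (n : ℝ) * ∑ s, g (X s) - q| ∂(sampleMeasure μ n)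
      = ∫⁻ X, ENNReal.ofReal ((1 / (n : ℝ) * Z X - q) ^ 2) ^ (1 / 2 : ℝ) ∂(sampleMeasure μ n) := by
        refine lintegral_congr fun X => ?_
        rw [e2 _ (by positivity), Real.sqrt_sq_eq_abs, hZ]
    _ ≤ _ := hJ
    _ ≤ ENNReal.ofReal (q / n) ^ (1 / 2 : ℝ) := by gcongr
    _ = _ := e2 _ (by positivity)

lemma pi_cost {p : ℝ} (hp : 1 ≤ p) (μ : Measure E) [IsProbabilityMeasure μ]
    {ι κ : Type*} [Fintype ι] [Fintype κ] (x : ι → E) (y : κ → E) (f : ι → E → ℝ) (h : κ → E → ℝ)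
    (hfm : ∀ i, Measurable (f i)) (hf0 : ∀ i z, 0 ≤ f i z) (hf1 : ∀ z, ∑ i, f i z = 1)
    (hhm : ∀ i, Measurable (h i)) (hh0 : ∀ i z, 0 ≤ h i z) (hh1 : ∀ z, ∑ i, h i z = 1) :
    (∑ i, ∑ j, ENNReal.ofReal (∫ z, f i z * h j z ∂μ) * edist (x i) (y j) ^ p) ^ (1 / p) ≤
      (∑ i, ∫⁻ z, ENNReal.ofReal (f i z) * edist (x i) z ^ p ∂μ) ^ (1 / p) +
      (∑ i, ∫⁻ z, ENNReal.ofReal (h i z) * edist (y i) z ^ p ∂μ) ^ (1 / p) := by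
  have : SecondCountableTopology E := UniformSpace.secondCountable_of_separable E
  have hp0 : 0 ≤ p := by linarith
  have hfle : ∀ i z, f i z ≤ 1 := by
    intro i z
    rw [← hf1 z]; exact Finset.single_le_sum (f := fun j => f j z) (fun j _ => hf0 j z) (Finset.mem_univ i)
  have hhle : ∀ i z, h i z ≤ 1 := by
    intro i z
    rw [← hh1 z]; exact Finset.single_le_sum (f := fun j => h j z) (fun j _ => hh0 j z) (Finset.mem_univ i)
  let τ : Measure (E × E × E) := ∑ i, ∑ j,
    (μ.withDensity (fun z => ENNReal.ofReal (f i z * h j z))).map (fun z => (x i, z, y j))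
  have hτ : ∀ F : E × E × E → ℝ≥0∞, Measurable F → ∫⁻ w, F w ∂τ =
      ∑ i, ∑ j, ∫⁻ z, ENNReal.ofReal (f i z) * ENNReal.ofReal (h j z) * F (x i, z, y j) ∂μ := by
    intro F hF
    simp only [τ, lintegral_finsetSum_measure]
    refine Finset.sum_congr rfl fun i _ => Finset.sum_congr rfl fun j _ => ?_
    have hmz : Measurable fun z : E => (x i, z, y j) := by fun_prop
    have := hfm i
    have := hhm j
    rw [lintegral_map hF hmz, lintegral_withDensity_eq_lintegral_mul _ (by fun_prop) (g := fun z => F (x i, z, y j)) (hF.comp hmz)]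
    refine lintegral_congr fun z => ?_
    simp only [Pi.mul_apply, ENNReal.ofReal_mul (hf0 i z)]
  have M := ENNReal.lintegral_Lp_add_le (μ := τ) (f := fun z => edist z.1 z.2.1)
    (g := fun z => edist z.2.1 z.2.2) (by fun_prop) (by fun_prop) hp
  have L : ∑ i, ∑ j, ENNReal.ofReal (∫ z, f i z * h j z ∂μ) * edist (x i) (y j) ^ p =
      ∫⁻ w, edist w.1 w.2.2 ^ p ∂τ := by
    rw [hτ _ (by fun_prop)]
    refine Finset.sum_congr rfl fun i _ => Finset.sum_congr rfl fun j _ => ?_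
    have := hfm i
    have := hhm j
    dsimp only
    rw [lintegral_mul_const _ (by fun_prop), ofReal_integral_eq_lintegral_ofReal]
    · simp only [ENNReal.ofReal_mul (hf0 i _)]
    · refine Integrable.of_bound (by fun_prop) 1 (ae_of_all _ fun z => ?_)
      rw [Real.norm_eq_abs, abs_of_nonneg (mul_nonneg (hf0 i z) (hh0 j z))]
      exact mul_le_one₀ (hfle i z) (hh0 j z) (hhle j z)
    · exact ae_of_all _ fun z => mul_nonneg (hf0 i z) (hh0 j z)
  rw [L]
  have R1 : ∫⁻ w, edist w.1 w.2.1 ^ p ∂τ =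
      ∑ i, ∫⁻ z, ENNReal.ofReal (f i z) * edist (x i) z ^ p ∂μ := by
    rw [hτ _ (by fun_prop)]
    refine Finset.sum_congr rfl fun i _ => ?_
    have := hfm i
    rw [← lintegral_finsetSum _ (fun j _ => by have := hhm j; fun_prop)]
    refine lintegral_congr fun z => ?_
    dsimp only
    rw [← Finset.sum_mul, ← Finset.mul_sum, ← ENNReal.ofReal_sum_of_nonneg (fun j _ => hh0 j z), hh1]
    simp
  have R2 : ∫⁻ w, edist w.2.1 w.2.2 ^ p ∂τ =
      ∑ i, ∫⁻ z, ENNReal.ofReal (h i z) * edist (y i) z ^ p ∂μ := by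
    rw [hτ _ (by fun_prop), Finset.sum_comm]
    refine Finset.sum_congr rfl fun j _ => ?_
    have := hhm j
    rw [← lintegral_finsetSum _ (fun i _ => by have := hfm i; fun_prop)]
    refine lintegral_congr fun z => ?_
    dsimp only
    rw [← Finset.sum_mul, ← Finset.sum_mul, ← ENNReal.ofReal_sum_of_nonneg (fun j _ => hf0 j z), hf1]
    simp [edist_comm]
  rw [← R1, ← R2]
  refine le_trans ?_ M
  gcongr with z
  exact edist_triangle _ _ _

end

section
variable {E : Type*} [MetricSpace E] [TopologicalSpace.SeparableSpace E]
    [MeasurableSpace E] [BorelSpace E]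

/-- a measurable partition of unity with equal masses -/
structure Good {E : Type*} [MeasurableSpace E] (μ : Measure E) (N : ℕ) (g : Fin N → E → ℝ) : Prop where
  meas : ∀ i, Measurable (g i)
  nonneg : ∀ i y, 0 ≤ g i y
  sum : ∀ y, ∑ i, g i y = 1
  mean : ∀ i, ∫ y, g i y ∂μ = 1 / N

lemma Good.le_one {μ : Measure E} {N : ℕ} {g : Fin N → E → ℝ} (h : Good μ N g) (i : Fin N) (y : E) :
    g i y ≤ 1 := by
  rw [← h.sum y]
  exact Finset.single_le_sum (f := fun j => g j y) (fun j _ => h.nonneg j y) (Finset.mem_univ i)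

lemma Good.integrable {μ : Measure E} [IsProbabilityMeasure μ] {N : ℕ} {g : Fin N → E → ℝ}
    (h : Good μ N g) (i : Fin N) : Integrable (g i) μ := by
  refine Integrable.of_bound (h.meas i).aestronglyMeasurable 1 (ae_of_all _ fun z => ?_)
  rw [Real.norm_eq_abs, abs_of_nonneg (h.nonneg i z)]
  exact h.le_one i z

/-- deviation of the empirical cell masses -/
noncomputable def dev {E : Type*} (n N : ℕ) (g : Fin N → E → ℝ) (X : Fin n → E) : Fin N → ℝ :=
  fun i => 1 / (n : ℝ) * ∑ s, g i (X s) - 1 / N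

lemma step {p : ℝ} (hp : 1 ≤ p) (μ : Measure E) [IsProbabilityMeasure μ] {n N N' : ℕ}
    (hn : 0 < n) (hN : 0 < N) (x : Fin N → E) (y : Fin N' → E)
    (f : Fin N → E → ℝ) (h : Fin N' → E → ℝ) (hf : Good μ N f) (hh : Good μ N' h)
    {c c' : ℝ≥0∞}
    (hc : (∑ i, ∫⁻ z, ENNReal.ofReal (f i z) * edist (x i) z ^ p ∂μ) ^ (1 / p) ≤ c)
    (hc' : (∑ i, ∫⁻ z, ENNReal.ofReal (h i z) * edist (y i) z ^ p ∂μ) ^ (1 / p) ≤ c')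
    (g : Fin N → E → ℝ) (hg : Good μ N g) :
    ∃ g', Good μ N' g' ∧
      ∫⁻ X, Wp p (disc x (dev n N g X)) (disc x (fun i => - dev n N g X i)) ∂(sampleMeasure μ n) ≤
      2 * (ENNReal.ofReal (Real.sqrt ((N : ℝ) / n)) ^ (1 / p) * (c + c')) +
      ∫⁻ X, Wp p (disc y (dev n N' g' X)) (disc y (fun i => - dev n N' g' X i)) ∂(sampleMeasure μ n) := by
  have hp0 : 0 ≤ 1 / p := by positivity
  have hNr : (0 : ℝ) < N := by exact_mod_cast hN
  have hnr : (0 : ℝ) < n := by exact_mod_cast hn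
  have hint : ∀ i j, Integrable (fun z => f i z * h j z) μ := by
    intro i j
    have := hf.meas i
    have := hh.meas j
    refine Integrable.of_bound (by fun_prop) 1 (ae_of_all _ fun z => ?_)
    rw [Real.norm_eq_abs, abs_of_nonneg (mul_nonneg (hf.nonneg i z) (hh.nonneg j z))]
    exact mul_le_one₀ (hf.le_one i z) (hh.nonneg j z) (hh.le_one j z)
  let P : Fin N → Fin N' → ℝ := fun i j => N * ∫ z, f i z * h j z ∂μ
  have hI0 : ∀ i j, 0 ≤ ∫ z, f i z * h j z ∂μ :=
    fun i j => integral_nonneg fun z => mul_nonneg (hf.nonneg i z) (hh.nonneg j z)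
  have hP : ∀ i j, 0 ≤ P i j := fun i j => mul_nonneg hNr.le (hI0 i j)
  have hP1 : ∀ i, ∑ j, P i j = 1 := by
    intro i
    simp only [P]
    rw [← Finset.mul_sum, ← integral_finsetSum _ (fun j _ => hint i j)]
    simp only [← Finset.mul_sum, hh.sum, mul_one, hf.mean]
    field_simp
  have hP2 : ∀ j, ∑ i, 1 / (N : ℝ) * P i j = 1 / N' := by
    intro j
    have : ∀ i, 1 / (N : ℝ) * P i j = ∫ z, f i z * h j z ∂μ := by
      intro i; simp only [P]; field_simp
    simp only [this]
    rw [← integral_finsetSum _ (fun i _ => hint i j)]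
    simp only [← Finset.sum_mul, hf.sum, one_mul, hh.mean]
  let g' : Fin N' → E → ℝ := fun j z => ∑ i, g i z * P i j
  have hg' : Good μ N' g' := by
    refine ⟨?_, ?_, ?_, ?_⟩
    · intro j
      exact Finset.measurable_sum _ fun i _ => (hg.meas i).mul_const _
    · intro j z
      exact Finset.sum_nonneg fun i _ => mul_nonneg (hg.nonneg i z) (hP i j)
    · intro z
      simp only [g']
      rw [Finset.sum_comm]
      simp only [← Finset.mul_sum, hP1, mul_one, hg.sum]
    · intro j
      simp only [g']
      rw [integral_finsetSum _ (fun i _ => (hg.integrable i).mul_const _)]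
      simp only [integral_mul_const, hg.mean, hP2]
  have hdev : ∀ X j, dev n N' g' X j = ∑ i, dev n N g X i * P i j := by
    intro X j
    simp only [dev, g', sub_mul, Finset.sum_sub_distrib, hP2]
    congr 1
    rw [Finset.sum_comm, Finset.mul_sum]
    refine Finset.sum_congr rfl fun i _ => ?_
    rw [← Finset.sum_mul, mul_assoc]
  refine ⟨g', hg', ?_⟩
  let K : Fin N → ℝ≥0∞ := fun i => ∑ j, ENNReal.ofReal (P i j) * edist (x i) (y j) ^ p
  have hdm : ∀ i, Measurable fun X : Fin n → E => ENNReal.ofReal |dev n N g X i| := by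
    intro i
    have := hg.meas i
    simp only [dev]
    have : Measurable fun X : Fin n → E => 1 / (n : ℝ) * ∑ s, g i (X s) - 1 / N := by fun_prop
    simp only [← Real.norm_eq_abs]
    exact this.norm.ennreal_ofReal
  have hsm : Measurable fun X : Fin n → E => ∑ i, ENNReal.ofReal |dev n N g X i| * K i :=
    Finset.measurable_sum _ fun i _ => (hdm i).mul_const _
  calc ∫⁻ X, Wp p (disc x (dev n N g X)) (disc x (fun i => - dev n N g X i)) ∂(sampleMeasure μ n)
      ≤ ∫⁻ X, (2 * (∑ i, ENNReal.ofReal |dev n N g X i| * K i) ^ (1 / p) +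
          Wp p (disc y (dev n N' g' X)) (disc y (fun i => - dev n N' g' X i))) ∂(sampleMeasure μ n) := by
        refine lintegral_mono fun X => ?_
        have := Wp_step hp x y (dev n N g X) P hP hP1
        simp only [← hdev] at this
        exact this
    _ = 2 * ∫⁻ X, (∑ i, ENNReal.ofReal |dev n N g X i| * K i) ^ (1 / p) ∂(sampleMeasure μ n) +
        ∫⁻ X, Wp p (disc y (dev n N' g' X)) (disc y (fun i => - dev n N' g' X i)) ∂(sampleMeasure μ n) := by
        rw [lintegral_add_left ((hsm.pow_const _).const_mul _), lintegral_const_mul _ (hsm.pow_const _)]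
    _ ≤ _ := by
        gcongr
        refine (jensen_rpow _ hp _ hsm).trans ?_
        rw [lintegral_finsetSum _ (fun i _ => (hdm i).mul_const _)]
        simp only [lintegral_mul_const _ (hdm _)]
        calc (∑ i, (∫⁻ X, ENNReal.ofReal |dev n N g X i| ∂(sampleMeasure μ n)) * K i) ^ (1 / p)
            ≤ (∑ i, ENNReal.ofReal (Real.sqrt ((1 / N : ℝ) / n)) * K i) ^ (1 / p) := by
              gcongr with i
              exact dev_bound μ hn (g i) (hg.meas i) (hg.nonneg i) (hg.le_one i) _ (hg.mean i)
          _ = (ENNReal.ofReal (Real.sqrt ((N : ℝ) / n)) *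
                ∑ i, ∑ j, ENNReal.ofReal (∫ z, f i z * h j z ∂μ) * edist (x i) (y j) ^ p) ^ (1 / p) := by
              congr 1
              rw [Finset.mul_sum]
              refine Finset.sum_congr rfl fun i _ => ?_
              simp only [K, Finset.mul_sum]
              refine Finset.sum_congr rfl fun j _ => ?_
              rw [← mul_assoc, ← mul_assoc, ← ENNReal.ofReal_mul (Real.sqrt_nonneg _),
                ← ENNReal.ofReal_mul (Real.sqrt_nonneg _)]
              congr 2
              simp only [P]
              rw [← mul_assoc]
              congr 1
              have : (N : ℝ) / n = (1 / N : ℝ) / n * N ^ 2 := by field_simp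
              rw [this, Real.sqrt_mul (by positivity), Real.sqrt_sq hNr.le]
          _ ≤ _ := by
              rw [ENNReal.mul_rpow_of_nonneg _ _ hp0]
              gcongr
              exact (pi_cost hp μ x y f h hf.meas hf.nonneg hf.sum hh.meas hh.nonneg hh.sum).trans
                (add_le_add hc hc')

lemma multi {p : ℝ} (hp : 1 ≤ p) (μ : Measure E) [IsProbabilityMeasure μ] {n : ℕ}
    (hn : 0 < n) (k : ℕ) (x : ∀ j, Fin (2 ^ j) → E) (f : ∀ j, Fin (2 ^ j) → E → ℝ)
    (hf : ∀ j ≤ k, Good μ (2 ^ j) (f j)) (c : ℕ → ℝ≥0∞)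
    (hc : ∀ j ≤ k, (∑ i, ∫⁻ z, ENNReal.ofReal (f j i z) * edist (x j i) z ^ p ∂μ) ^ (1 / p) ≤ c j)
    (C : ℝ≥0∞) (hC : ∀ j, j + 1 ≤ k → 2 * (ENNReal.ofReal (Real.sqrt (((2 ^ (j + 1) : ℕ) : ℝ) / n)) ^ (1 / p)
      * (c (j + 1) + c j)) ≤ C) :
    ∀ j ≤ k, ∀ g, Good μ (2 ^ j) g →
      ∫⁻ X, Wp p (disc (x j) (dev n (2 ^ j) g X)) (disc (x j) (fun i => - dev n (2 ^ j) g X i))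
        ∂(sampleMeasure μ n) ≤ j * C := by
  intro j
  induction j with
  | zero =>
    intro _ g hg
    have hnr : (n : ℝ) ≠ 0 := by exact_mod_cast hn.ne'
    have hz : ∀ X i, dev n (2 ^ 0) g X i = 0 := by
      intro X i
      have : ∀ y, g i y = 1 := by
        intro y
        have h := hg.sum y
        have hs : (Finset.univ : Finset (Fin (2 ^ 0))) = {i} := by
          ext a; simp only [Finset.mem_univ, Finset.mem_singleton, true_iff]; exact Subsingleton.elim (α := Fin 1) a i
        rw [hs] at h
        simpa using h
      simp [dev, this, hnr]
    have hp0 : 0 < p := by linarith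
    simp only [Nat.cast_zero, zero_mul]
    rw [lintegral_eq_zero_of_ae_eq_zero]
    refine ae_of_all _ fun X => ?_
    have e1 : disc (x 0) (dev n (2 ^ 0) g X) = 0 := by
      simp only [disc, hz, ENNReal.ofReal_zero, zero_smul, Finset.sum_const_zero]
    have e2 : disc (x 0) (fun i => - dev n (2 ^ 0) g X i) = 0 := by
      simp only [disc, hz, neg_zero, ENNReal.ofReal_zero, zero_smul, Finset.sum_const_zero]
    simp only [e1, e2]
    have := Wp_le_of_coupling (p := p) (α := (0 : Measure E)) (β := 0) 0 (by simp) (by simp)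
    simp [hp0] at this
    simpa using this
  | succ j ih =>
    intro hj g hg
    obtain ⟨g', hg', hle⟩ := step hp μ hn (by positivity) (x (j + 1)) (x j) (f (j + 1)) (f j)
      (hf _ hj) (hf _ (by omega)) (hc _ hj) (hc _ (by omega)) g hg
    refine hle.trans ?_
    refine (add_le_add (hC j hj) (ih (by omega) g' hg')).trans (le_of_eq ?_)
    push_cast
    ring

end

section
variable {E : Type*} [MetricSpace E] [TopologicalSpace.SeparableSpace E]
    [MeasurableSpace E] [BorelSpace E]

lemma scale_eq {p : ℝ} (hp : 1 ≤ p) (j t : ℕ) :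
    ENNReal.ofReal (Real.sqrt (((2 ^ (j + 1) : ℕ) : ℝ) / ((2 ^ (j + 1 + t) : ℕ) : ℝ))) ^ (1 / p) *
      ENNReal.ofReal ((2 : ℝ) ^ (1 / (2 * p))) ^ t = 1 := by
  have hp0 : 0 < p := by linarith
  have e : ((2 ^ (j + 1) : ℕ) : ℝ) / ((2 ^ (j + 1 + t) : ℕ) : ℝ) = (2 : ℝ) ^ (-(t : ℝ)) := by
    rw [Real.rpow_neg (by norm_num), Real.rpow_natCast]
    push_cast
    rw [pow_add _ (j + 1) t]
    field_simp
  rw [e, Real.sqrt_eq_rpow, ← Real.rpow_mul (by norm_num),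
    ENNReal.ofReal_rpow_of_nonneg (by positivity) (by positivity), ← Real.rpow_mul (by norm_num),
    ← ENNReal.ofReal_pow (by positivity), ← Real.rpow_natCast, ← Real.rpow_mul (by norm_num),
    ← ENNReal.ofReal_mul (by positivity), ← Real.rpow_add (by norm_num)]
  have : -(t : ℝ) * (1 / 2) * (1 / p) + 1 / (2 * p) * t = 0 := by field_simp; ring
  rw [this]; simp

lemma ratio_le {p : ℝ} (hp : 1 ≤ p) : ENNReal.ofReal ((2 : ℝ) ^ (1 / (2 * p))) ≤ ENNReal.ofReal (3 / 2) := by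
  apply ENNReal.ofReal_le_ofReal
  have h1 : (2 : ℝ) ^ (1 / (2 * p)) ≤ 2 ^ (1 / 2 : ℝ) := by
    apply Real.rpow_le_rpow_of_exponent_le (by norm_num)
    apply one_div_le_one_div_of_le <;> linarith
  rw [← Real.sqrt_eq_rpow] at h1
  refine h1.trans ?_
  rw [Real.sqrt_le_left (by norm_num)]
  norm_num

lemma final_bound {p : ℝ} (hp : 1 ≤ p) (μ : Measure E) [IsProbabilityMeasure μ] {n N : ℕ}
    (hn : 0 < n) (hN : 0 < N) (x : Fin N → E) (g : Fin N → E → ℝ) (hg : Good μ N g) (c D : ℝ≥0∞)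
    (hc : (∑ i, ∫⁻ z, ENNReal.ofReal (g i z) * edist (x i) z ^ p ∂μ) ^ (1 / p) ≤ c)
    (hW : Wp p (empiricalMeasure N x) μ ≤ c)
    (hD : ∫⁻ X, Wp p (disc x (dev n N g X)) (disc x (fun i => - dev n N g X i))
        ∂(sampleMeasure μ n) ≤ D) :
    expWp p μ n ≤ c + D + c := by
  have : SecondCountableTopology E := UniformSpace.secondCountable_of_separable E
  let T : (Fin n → E) → ℝ≥0∞ := fun X => ∑ s, ENNReal.ofReal (1 / (n : ℝ)) *
      ∑ i, ENNReal.ofReal (g i (X s)) * edist (X s) (x i) ^ p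
  have hm1 : ∀ i, Measurable fun z => ENNReal.ofReal (g i z) * edist z (x i) ^ p := by
    intro i
    have := hg.meas i
    fun_prop
  have hm2 : Measurable fun z => ∑ i, ENNReal.ofReal (g i z) * edist z (x i) ^ p :=
    Finset.measurable_sum _ fun i _ => hm1 i
  have hm3 : ∀ s : Fin n, Measurable fun X : Fin n → E =>
      ∑ i, ENNReal.ofReal (g i (X s)) * edist (X s) (x i) ^ p :=
    fun s => hm2.comp (measurable_pi_apply s)
  have hTm : Measurable T := Finset.measurable_sum _ fun s _ => (hm3 s).const_mul _
  have hpt : ∀ X, Wp p (empiricalMeasure n X) μ ≤ T X ^ (1 / p) +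
      (Wp p (disc x (dev n N g X)) (disc x (fun i => - dev n N g X i)) + c) := by
    intro X
    have t1 := Wp_triangle_disc hp (empiricalMeasure n X) μ x
      (fun i => ∑ s, 1 / (n : ℝ) * g i (X s))
    have t2 := Wp_triangle_disc hp (disc x (fun i => ∑ s, 1 / (n : ℝ) * g i (X s))) μ x
      (fun i => 1 / (N : ℝ))
    rw [← empirical_eq_disc N hN x] at t2
    have t3 := Wp_disc_transport (p := p) X x (fun _ => 1 / (n : ℝ)) (fun _ => by positivity)
      (fun s i => g i (X s)) (fun s i => hg.nonneg i _) (fun s => hg.sum _)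
    rw [← empirical_eq_disc n hn X] at t3
    have t4 := Wp_disc_common hp x (fun i => ∑ s, 1 / (n : ℝ) * g i (X s)) (fun i => 1 / (N : ℝ))
      (fun i => Finset.sum_nonneg fun s _ => mul_nonneg (by positivity) (hg.nonneg i _))
      (fun i => by positivity)
    rw [← empirical_eq_disc N hN x] at t4
    have e : ∀ i, ∑ s, 1 / (n : ℝ) * g i (X s) - 1 / (N : ℝ) = dev n N g X i := by
      intro i; rw [← Finset.mul_sum]; rfl
    simp only [e] at t4
    exact t1.trans (add_le_add t3 (t2.trans (add_le_add t4 hW)))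
  have hT : ∫⁻ X, T X ^ (1 / p) ∂(sampleMeasure μ n) ≤ c := by
    refine (jensen_rpow _ hp T hTm).trans (le_trans (le_of_eq ?_) hc)
    congr 1
    simp only [T]
    rw [lintegral_finsetSum _ (fun s _ => (hm3 s).const_mul _)]
    have e : ∀ s : Fin n, ∫⁻ X, ENNReal.ofReal (1 / (n : ℝ)) *
        ∑ i, ENNReal.ofReal (g i (X s)) * edist (X s) (x i) ^ p ∂(sampleMeasure μ n) =
        ENNReal.ofReal (1 / (n : ℝ)) * ∑ i, ∫⁻ z, ENNReal.ofReal (g i z) * edist (x i) z ^ p ∂μ := by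
      intro s
      rw [lintegral_const_mul _ (hm3 s)]
      congr 1
      have := (measurePreserving_eval (fun _ : Fin n => μ) s).lintegral_comp hm2
      rw [show ∫⁻ X, ∑ i, ENNReal.ofReal (g i (X s)) * edist (X s) (x i) ^ p ∂(sampleMeasure μ n) = _
        from this, lintegral_finsetSum _ (fun i _ => hm1 i)]
      simp only [edist_comm]
    simp only [e]
    rw [Finset.sum_const, Finset.card_univ, Fintype.card_fin, nsmul_eq_mul, ← mul_assoc,
      ← ENNReal.ofReal_natCast, ← ENNReal.ofReal_mul (by positivity)]
    have hnr : (n : ℝ) ≠ 0 := by exact_mod_cast hn.ne'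
    rw [mul_one_div_cancel hnr]; simp
  unfold expWp
  calc _ ≤ ∫⁻ X, (T X ^ (1 / p) +
      (Wp p (disc x (dev n N g X)) (disc x (fun i => - dev n N g X i)) + c)) ∂(sampleMeasure μ n) :=
        lintegral_mono hpt
    _ ≤ c + (D + c) := by
        rw [lintegral_add_left (hTm.pow_const _), lintegral_add_right _ measurable_const]
        gcongr
        simp
    _ = _ := by ring

end

end QuantAux

/-- **Corollary.** Let `(E, d_E)` be a separable metric space, `p ≥ 1` and
`μ ∈ 𝒫_p(E)`. Suppose `(μ^{(2^k)})_k` is a sequence of uniform quantizers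
(each `μ^{(2^k)} = (1/2^k) ∑ δ_{x_i}` for some points `x_i ∈ E`) with
`W_p(μ^{(2n)}, μ) ≥ 2^{-1/(2p)} W_p(μ^{(n)}, μ)` for every `n` in
`J = {2^k : k ≥ 0}`. Then `W_p(μ^{(n)}, μ) ≥ (1/(5(1 + log₂ n))) 𝔼[W_p(μ_n, μ)]` for
all `n ∈ J`. (Here the sequence is indexed by the exponent `k`, so `n = 2^k` and
`log₂ n = k`.) -/
theorem stmt_2 {E : Type*} [MetricSpace E] [TopologicalSpace.SeparableSpace E]
    [MeasurableSpace E] [BorelSpace E]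
    (p : ℝ) (hp : 1 ≤ p)
    (μ : Measure E) [IsProbabilityMeasure μ] (hμ : HasFiniteMoment p μ)
    (ν : ℕ → Measure E)
    (hform : ∀ k : ℕ, ∃ x : Fin (2 ^ k) → E, ν k = empiricalMeasure (2 ^ k) x)
    (hdecay : ∀ k : ℕ,
      ENNReal.ofReal ((2 : ℝ) ^ (-(1 / (2 * p)))) * Wp p (ν k) μ ≤ Wp p (ν (k + 1)) μ) :
    ∀ k : ℕ,
      ENNReal.ofReal (1 / (5 * (1 + (k : ℝ)))) * expWp p μ (2 ^ k) ≤ Wp p (ν k) μ := by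

  intro k
  choose x hx using hform
  have hp0 : 0 < p := by linarith
  set r : ℝ≥0∞ := ENNReal.ofReal ((2 : ℝ) ^ (1 / (2 * p))) with hr
  have hr0 : r ≠ 0 := by
    rw [hr, Ne, ENNReal.ofReal_eq_zero, not_le]; positivity
  have hrT : r ≠ ∞ := ENNReal.ofReal_ne_top
  have hstep : ∀ j, Wp p (ν j) μ ≤ r * Wp p (ν (j + 1)) μ := by
    intro j
    have hinv : r * ENNReal.ofReal ((2 : ℝ) ^ (-(1 / (2 * p)))) = 1 := by
      rw [hr, ← ENNReal.ofReal_mul (by positivity), ← Real.rpow_add (by norm_num)]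
      simp
    calc Wp p (ν j) μ = r * (ENNReal.ofReal ((2 : ℝ) ^ (-(1 / (2 * p)))) * Wp p (ν j) μ) := by
          rw [← mul_assoc, hinv, one_mul]
      _ ≤ _ := by gcongr; exact hdecay j
  have hchain : ∀ t j, Wp p (ν j) μ ≤ r ^ t * Wp p (ν (j + t)) μ := by
    intro t
    induction t with
    | zero => intro j; simp
    | succ t ih =>
      intro j
      calc _ ≤ _ := ih j
        _ ≤ r ^ t * (r * Wp p (ν (j + t + 1)) μ) := by gcongr; exact hstep _
        _ = _ := by rw [← mul_assoc, ← pow_succ]; rfl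
  apply le_of_forall_gt_imp_ge_of_dense
  intro c hc
  by_cases hcT : c = ∞
  · rw [hcT]; exact le_top
  let cc : ℕ → ℝ≥0∞ := fun j => r ^ (k - j) * c
  have hlt : ∀ j ≤ k, Wp p (empiricalMeasure (2 ^ j) (x j)) μ < cc j := by
    intro j hj
    rw [← hx j]
    have h := hchain (k - j) j
    rw [Nat.add_sub_cancel' hj] at h
    refine lt_of_le_of_lt h ?_
    exact (ENNReal.mul_lt_mul_iff_right (pow_ne_zero _ hr0) (ENNReal.pow_ne_top hrT)).2 hc
  have hex : ∀ j, ∃ g : Fin (2 ^ j) → E → ℝ, j ≤ k → QuantAux.Good μ (2 ^ j) g ∧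
      (∑ i, ∫⁻ z, ENNReal.ofReal (g i z) * edist (x j i) z ^ p ∂μ) ^ (1 / p) ≤ cc j := by
    intro j
    by_cases hj : j ≤ k
    · obtain ⟨g, h1, h2, h3, h4, h5⟩ := QuantAux.extract (by positivity) (x j) μ (hlt j hj) hp
      exact ⟨g, fun _ => ⟨⟨h1, h2, h3, h4⟩, h5⟩⟩
    · exact ⟨fun _ _ => 0, fun h => absurd h hj⟩
  choose f hf using hex
  have hC : ∀ j, j + 1 ≤ k →
      2 * (ENNReal.ofReal (Real.sqrt (((2 ^ (j + 1) : ℕ) : ℝ) / ((2 ^ k : ℕ) : ℝ))) ^ (1 / p)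
      * (cc (j + 1) + cc j)) ≤ 5 * c := by
    intro j hj
    obtain ⟨t, rfl⟩ := Nat.exists_eq_add_of_le hj
    have e1 : cc (j + 1) = r ^ t * c := by
      simp only [cc]; congr 2; omega
    have e2 : cc j = r ^ t * (r * c) := by
      simp only [cc]; rw [← mul_assoc, ← pow_succ]; congr 2; omega
    have hsc := QuantAux.scale_eq hp j t
    rw [← hr] at hsc
    rw [e1, e2, ← mul_add, ← mul_assoc (ENNReal.ofReal _ ^ (1 / p)), hsc, one_mul]
    have h32 : ENNReal.ofReal (3 / 2) = 3 / 2 := by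
      rw [ENNReal.ofReal_div_of_pos (by norm_num)]; simp
    calc 2 * (c + r * c) ≤ 2 * (c + 3 / 2 * c) := by
          gcongr
          rw [← h32]; exact QuantAux.ratio_le hp
      _ = (2 + 2 * (3 / 2)) * c := by ring
      _ = 5 * c := by
          rw [ENNReal.mul_div_cancel (by norm_num) (by norm_num)]; norm_num
  have hD := QuantAux.multi hp μ (n := 2 ^ k) (by positivity) k x f (fun j hj => (hf j hj).1) cc
    (fun j hj => (hf j hj).2) (5 * c) hC k le_rfl (f k) (hf k le_rfl).1
  have hcck : cc k = c := by simp [cc]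
  have hfin := QuantAux.final_bound hp μ (n := 2 ^ k) (by positivity) (by positivity) (x k) (f k)
    (hf k le_rfl).1 c _ ((hf k le_rfl).2.trans_eq hcck) ((hlt k le_rfl).le.trans_eq hcck) hD
  calc ENNReal.ofReal (1 / (5 * (1 + (k : ℝ)))) * expWp p μ (2 ^ k)
      ≤ ENNReal.ofReal (1 / (5 * (1 + (k : ℝ)))) * (ENNReal.ofReal (5 * (1 + (k : ℝ))) * c) := by
        gcongr
        refine hfin.trans ?_
        rw [ENNReal.ofReal_mul (by norm_num), ENNReal.ofReal_add (by norm_num) (by positivity)]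
        simp only [ENNReal.ofReal_natCast, ENNReal.ofReal_one, ENNReal.ofReal_ofNat]
        calc c + k * (5 * c) + c = 2 * c + k * (5 * c) := by ring
          _ ≤ 5 * c + k * (5 * c) := by gcongr; norm_num
          _ = _ := by ring
    _ = c := by
        rw [← mul_assoc, ← ENNReal.ofReal_mul (by positivity), one_div_mul_cancel (by positivity)]
        simp
end

section
/- Let (E,d_E) be a separable metric space, let p ≥ 1 and let μ ∈ 𝒫_p(E) be supported on more than one point (i.e., μ is not a Dirac measure δ_x). Then max(−1/2, limsup_{n→∞} ln b_{n,p}(μ)/ln n) ≤ limsup_{n→∞} ln((𝔼[W_p(μ_n,μ)^p])^{1/p})/ln n ≤ max(−1/(2p), limsup_{n→∞} ln b_{n,p}(μ)/ln n), where μ_n is the empirical measure of μ with sample size n. -/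
open MeasureTheory ENNReal Filter

lemma partial_coupling {A B : Type*} [Fintype A] [Fintype B] (f : A → ℕ) (g : B → ℕ)
    (w : A → ℝ) (u : B → ℝ) (hw : ∀ a, 0 ≤ w a) (hu : ∀ b, 0 ≤ u b) :
    ∃ Q : A → B → ℝ, (∀ a b, 0 ≤ Q a b) ∧ (∀ a b, f a ≠ g b → Q a b = 0) ∧
      (∀ a, ∑ b, Q a b ≤ w a) ∧ (∀ b, ∑ a, Q a b ≤ u b) ∧
      (∀ v, (∑ a, if f a = v then w a - ∑ b, Q a b else 0) =
        max ((∑ a, if f a = v then w a else 0) - ∑ b, if g b = v then u b else 0) 0) ∧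
      (∀ v, (∑ b, if g b = v then u b - ∑ a, Q a b else 0) =
        max ((∑ b, if g b = v then u b else 0) - ∑ a, if f a = v then w a else 0) 0) := by
  set W : ℕ → ℝ := fun v => ∑ a, if f a = v then w a else 0 with hW
  set U : ℕ → ℝ := fun v => ∑ b, if g b = v then u b else 0 with hU
  have hW0 : ∀ v, 0 ≤ W v := fun v => Finset.sum_nonneg fun a _ => by split_ifs <;> simp [hw]
  have hU0 : ∀ v, 0 ≤ U v := fun v => Finset.sum_nonneg fun a _ => by split_ifs <;> simp [hu]
  have hrow : ∀ a, ∑ b, (if f a = g b then w a * u b / max (W (f a)) (U (f a)) else 0)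
      = w a * (U (f a) / max (W (f a)) (U (f a))) := by
    intro a
    rw [hU]
    simp only [mul_div_assoc, Finset.sum_div, Finset.mul_sum]
    refine Finset.sum_congr rfl fun b _ => ?_
    by_cases h : f a = g b
    · simp [h]
    · simp [h, Ne.symm h]
  have hcol : ∀ b, ∑ a, (if f a = g b then w a * u b / max (W (f a)) (U (f a)) else 0)
      = u b * (W (g b) / max (W (g b)) (U (g b))) := by
    intro b
    rw [hW]
    simp only [Finset.sum_div, Finset.mul_sum]
    refine Finset.sum_congr rfl fun a _ => ?_
    by_cases h : f a = g b
    · simp [h]; ring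
    · simp [h]
  have hm0 : ∀ v, 0 ≤ max (W v) (U v) := fun v => le_max_of_le_left (hW0 v)
  refine ⟨fun a b => if f a = g b then w a * u b / max (W (f a)) (U (f a)) else 0,
    ?_, ?_, ?_, ?_, ?_, ?_⟩
  · intro a b
    dsimp only
    split_ifs
    · exact div_nonneg (mul_nonneg (hw a) (hu b)) (hm0 _)
    · rfl
  · intro a b h; simp [h]
  · intro a
    rw [hrow]
    exact mul_le_of_le_one_right (hw a) (div_le_one_of_le₀ (le_max_right _ _) (hm0 _))
  · intro b
    rw [hcol]
    exact mul_le_of_le_one_right (hu b) (div_le_one_of_le₀ (le_max_left _ _) (hm0 _))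
  · intro v
    have : (∑ a, if f a = v then w a - ∑ b, (if f a = g b then w a * u b / max (W (f a)) (U (f a)) else 0) else 0) = W v * (1 - U v / max (W v) (U v)) := by
      rw [hW, Finset.sum_mul]
      refine Finset.sum_congr rfl fun a _ => ?_
      by_cases h : f a = v
      · rw [hrow]; simp [h]; ring
      · simp [h]
    rw [this]
    rcases le_total (W v) (U v) with h | h
    · rw [max_eq_right h, max_eq_right (by linarith : W v - U v ≤ 0)]
      rcases eq_or_ne (U v) 0 with h0 | h0
      · have : W v = 0 := le_antisymm (h0 ▸ h) (hW0 v)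
        simp [this]
      · rw [div_self h0]; ring
    · rw [max_eq_left h, max_eq_left (by linarith : 0 ≤ W v - U v)]
      rcases eq_or_ne (W v) 0 with h0 | h0
      · have : U v = 0 := le_antisymm (h0 ▸ h) (hU0 v)
        simp [this, h0]
      · field_simp
  · intro v
    have : (∑ b, if g b = v then u b - ∑ a, (if f a = g b then w a * u b / max (W (f a)) (U (f a)) else 0) else 0) = U v * (1 - W v / max (W v) (U v)) := by
      rw [hU, Finset.sum_mul]
      refine Finset.sum_congr rfl fun a _ => ?_
      by_cases h : g a = v
      · rw [hcol]; simp [h]; ring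
      · simp [h]
    rw [this]
    rcases le_total (W v) (U v) with h | h
    · rw [max_eq_right h, max_eq_left (by linarith : 0 ≤ U v - W v)]
      rcases eq_or_ne (U v) 0 with h0 | h0
      · have : W v = 0 := le_antisymm (h0 ▸ h) (hW0 v)
        simp [this, h0]
      · field_simp
    · rw [max_eq_left h, max_eq_right (by linarith : U v - W v ≤ 0)]
      rcases eq_or_ne (W v) 0 with h0 | h0
      · have : U v = 0 := le_antisymm (h0 ▸ h) (hU0 v)
        simp [this]
      · rw [div_self h0]; ring

lemma sum_label {A : Type*} [Fintype A] (f : A → ℕ) (V : ℕ) (hf : ∀ a, f a < V) (L : ℕ → ℝ)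
    (r : A → ℝ) : ∑ a, r a * L (f a) = ∑ v ∈ Finset.range V, L v * ∑ a, if f a = v then r a else 0 := by
  simp only [Finset.mul_sum]
  rw [Finset.sum_comm]
  refine Finset.sum_congr rfl fun a _ => ?_
  rw [Finset.sum_eq_single (f a)]
  · simp [mul_comm]
  · intro v _ hv; simp [Ne.symm hv]
  · intro h; simp [hf a] at h

lemma tree_coupling {A B : Type*} [Fintype A] [Fintype B] (f : ℕ → A → ℕ) (g : ℕ → B → ℕ)
    (V : ℕ → ℕ) (hfV : ∀ s a, f s a < V s) (hgV : ∀ s b, g s b < V s)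
    (hfg : ∀ s a b, f (s+1) a = g (s+1) b → f s a = g s b)
    (L : ℕ → ℕ → ℝ) (hL : ∀ s v, 0 ≤ L s v) (k : ℕ) :
    ∀ (w : A → ℝ) (u : B → ℝ), (∀ a, 0 ≤ w a) → (∀ b, 0 ≤ u b) → ∑ a, w a = ∑ b, u b →
    ∃ Q : A → B → ℝ, (∀ a b, 0 ≤ Q a b) ∧ (∀ a, ∑ b, Q a b = w a) ∧ (∀ b, ∑ a, Q a b = u b) ∧
      ∑ a, ∑ b, Q a b * (∑ s ∈ Finset.range k,
        if f s a = g s b then 0 else L s (f s a) + L s (g s b)) ≤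
      ∑ s ∈ Finset.range k, ∑ v ∈ Finset.range (V s), L s v *
        |(∑ a, if f s a = v then w a else 0) - ∑ b, if g s b = v then u b else 0| := by
  induction k with
  | zero =>
    intro w u hw hu hwu
    rcases eq_or_ne (∑ b, u b) 0 with h0 | h0
    · have hw' : ∀ a, w a = 0 := fun a =>
        (Finset.sum_eq_zero_iff_of_nonneg (fun a _ => hw a)).1 (hwu.trans h0) a (Finset.mem_univ _)
      have hu' : ∀ a, u a = 0 := fun a =>
        (Finset.sum_eq_zero_iff_of_nonneg (fun a _ => hu a)).1 h0 a (Finset.mem_univ _)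
      exact ⟨fun _ _ => 0, by simp, by simp [hw'], by simp [hu'], by simp⟩
    · refine ⟨fun a b => w a * u b / ∑ b, u b, ?_, ?_, ?_, by simp⟩
      · intro a b
        exact div_nonneg (mul_nonneg (hw a) (hu b)) (Finset.sum_nonneg fun b _ => hu b)
      · intro a
        rw [← Finset.sum_div, ← Finset.mul_sum]; field_simp
      · intro b
        rw [← Finset.sum_div, ← Finset.sum_mul, hwu]; field_simp
  | succ k ih =>
    intro w u hw hu hwu
    have hfgle : ∀ s, s ≤ k → ∀ a b, f k a = g k b → f s a = g s b := by
      intro s hs a b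
      induction k, hs using Nat.le_induction with
      | base => exact id
      | succ m hm ihm => 
        intro h
        have := hfg m a b h
        clear ih
        clear h
        revert this
        clear ihm
        induction m, hm using Nat.le_induction with
        | base => exact id
        | succ m hm ihm => exact fun h => ihm (hfg _ _ _ h)
    obtain ⟨Q', hQ0, hQs, hQw, hQu, hQW, hQU⟩ := partial_coupling (f k) (g k) w u hw hu
    obtain ⟨Q, h0, h1, h2, h3⟩ := ih (fun a => w a - ∑ b, Q' a b) (fun b => u b - ∑ a, Q' a b)
      (fun a => sub_nonneg.2 (hQw a)) (fun b => sub_nonneg.2 (hQu b)) (by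
        simp only [Finset.sum_sub_distrib]
        rw [hwu, Finset.sum_comm])
    refine ⟨fun a b => Q' a b + Q a b, fun a b => add_nonneg (hQ0 a b) (h0 a b), ?_, ?_, ?_⟩
    · intro a; rw [Finset.sum_add_distrib, h1]; ring
    · intro b; rw [Finset.sum_add_distrib, h2]; ring
    · have hres : ∀ s, s ≤ k → ∀ v,
          (∑ a, if f s a = v then w a - ∑ b, Q' a b else 0) -
            (∑ b, if g s b = v then u b - ∑ a, Q' a b else 0) =
          (∑ a, if f s a = v then w a else 0) - ∑ b, if g s b = v then u b else 0 := by
        intro s hs v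
        have e1 : (∑ a, if f s a = v then w a - ∑ b, Q' a b else 0) =
          (∑ a, if f s a = v then w a else 0) - ∑ a, ∑ b, if f s a = v then Q' a b else 0 := by
          rw [← Finset.sum_sub_distrib]
          refine Finset.sum_congr rfl fun a _ => ?_
          split_ifs <;> simp
        have e2 : (∑ b, if g s b = v then u b - ∑ a, Q' a b else 0) =
          (∑ b, if g s b = v then u b else 0) - ∑ b, ∑ a, if g s b = v then Q' a b else 0 := by
          rw [← Finset.sum_sub_distrib]
          refine Finset.sum_congr rfl fun a _ => ?_
          split_ifs <;> simp
        have e3 : (∑ a, ∑ b, if f s a = v then Q' a b else 0) =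
            ∑ b, ∑ a, if g s b = v then Q' a b else 0 := by
          rw [Finset.sum_comm]
          refine Finset.sum_congr rfl fun b _ => Finset.sum_congr rfl fun a _ => ?_
          by_cases h : f k a = g k b
          · rw [hfgle s hs a b h]
          · simp [hQs a b h]
        rw [e1, e2, e3]; ring
      have hc : ∀ a b, (Q' a b + Q a b) * (∑ s ∈ Finset.range (k+1),
          if f s a = g s b then 0 else L s (f s a) + L s (g s b)) ≤
          Q a b * (∑ s ∈ Finset.range k,
            if f s a = g s b then 0 else L s (f s a) + L s (g s b)) +
          (Q a b * L k (f k a) + Q a b * L k (g k b)) := by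
        intro a b
        rw [add_mul]
        have z : Q' a b * (∑ s ∈ Finset.range (k+1),
          if f s a = g s b then 0 else L s (f s a) + L s (g s b)) = 0 := by
          by_cases h : f k a = g k b
          · rw [Finset.sum_eq_zero, mul_zero]
            intro s hs
            rw [if_pos (hfgle s (by simpa [Nat.lt_succ_iff] using hs) a b h)]
          · rw [hQs a b h, zero_mul]
        rw [z, zero_add, Finset.sum_range_succ, mul_add, ← mul_add (Q a b) (L _ _)]
        gcongr
        · exact h0 a b
        · have := hL k (f k a)
          have := hL k (g k b)
          split_ifs <;> linarith
      refine (Finset.sum_le_sum fun a _ => Finset.sum_le_sum fun b _ => hc a b).trans ?_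
      simp only [Finset.sum_add_distrib]
      rw [Finset.sum_range_succ]
      refine add_le_add ?_ ?_
      · refine h3.trans (le_of_eq ?_)
        refine Finset.sum_congr rfl fun s hs => Finset.sum_congr rfl fun v _ => ?_
        rw [hres s (Finset.mem_range.1 hs).le v]
      · rw [Finset.sum_comm (f := fun a b => Q a b * L k (g k b))]
        simp only [← Finset.sum_mul, h1, h2]
        rw [sum_label (f k) (V k) (hfV k), sum_label (g k) (V k) (hgV k), ← Finset.sum_add_distrib]
        refine le_of_eq (Finset.sum_congr rfl fun v _ => ?_)
        rw [hQW, hQU, ← mul_add]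
        congr 1
        generalize (∑ a, if f k a = v then w a else 0) = x
        generalize (∑ a, if g k a = v then u a else 0) = y
        rcases le_total x y with h | h
        · rw [max_eq_right (by linarith), max_eq_left (by linarith), abs_of_nonpos (by linarith)]; ring
        · rw [max_eq_left (by linarith), max_eq_right (by linarith), abs_of_nonneg (by linarith)]; ring


lemma birkhoff_min {n : Type*} [Fintype n] [DecidableEq n] (M : Matrix n n ℝ)
    (hM : M ∈ doublyStochastic ℝ n) (c : n → n → ℝ) :
    ∃ σ : Equiv.Perm n, ∑ i, c i (σ i) ≤ ∑ i, ∑ l, M i l * c i l := by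
  obtain ⟨w, hw0, hw1, hw⟩ := exists_eq_sum_perm_of_mem_doublyStochastic hM
  by_contra! hcon
  have key : ∑ i, ∑ l, M i l * c i l = ∑ σ, w σ * ∑ i, c i (σ i) := by
    have : ∀ i l, M i l = ∑ σ : Equiv.Perm n, w σ * (if σ i = l then 1 else 0) := by
      intro i l
      rw [← hw, Matrix.sum_apply]
      refine Finset.sum_congr rfl fun σ _ => ?_
      simp [Equiv.Perm.permMatrix, PEquiv.toMatrix_apply, Equiv.toPEquiv_apply, eq_comm]
    simp only [this, Finset.sum_mul, Finset.mul_sum]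
    rw [Finset.sum_comm' (t' := Finset.univ) (s' := fun _ => Finset.univ) (by simp)]
    rw [Finset.sum_congr rfl fun l _ => Finset.sum_comm, Finset.sum_comm]
    refine Finset.sum_congr rfl fun σ _ => ?_
    rw [Finset.sum_comm]
    refine Finset.sum_congr rfl fun i _ => ?_
    simp
  have h2 : ∑ σ, w σ * (∑ i, ∑ l, M i l * c i l) < ∑ σ, w σ * ∑ i, c i (σ i) := by
    refine Finset.sum_lt_sum (fun σ _ => mul_le_mul_of_nonneg_left (hcon σ).le (hw0 σ)) ?_
    have : ∃ σ, 0 < w σ := by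
      by_contra! h
      have : ∑ σ, w σ ≤ 0 := Finset.sum_nonpos fun σ _ => h σ
      linarith
    obtain ⟨σ, hσ⟩ := this
    exact ⟨σ, Finset.mem_univ _, mul_lt_mul_of_pos_left (hcon σ) hσ⟩
  rw [← Finset.sum_mul, hw1, one_mul, key] at h2
  exact lt_irrefl _ h2

/-- A soft partition: `h i` are the densities (w.r.t. `μ`) of the parts of `μ` sent to `y i`. -/
structure SP {E : Type*} [MetricSpace E] [MeasurableSpace E] (p : ℝ) (μ : Measure E) (m : ℕ)
    (y : ℕ → E) (h : ℕ → E → ℝ≥0∞) (c : ℝ≥0∞) : Prop where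
  meas : ∀ i, Measurable (h i)
  sum_one : ∀ᵐ x ∂μ, ∑ i ∈ Finset.range m, h i x = 1
  int : ∀ i, i < m → ∫⁻ x, h i x ∂μ = (m : ℝ≥0∞)⁻¹
  cost : ∑ i ∈ Finset.range m, ∫⁻ x, h i x * edist x (y i) ^ p ∂μ ≤ c

section
variable {E : Type*} [MetricSpace E] [TopologicalSpace.SeparableSpace E]
    [MeasurableSpace E] [BorelSpace E]

lemma SP.double {p : ℝ} {μ : Measure E} {m : ℕ} {y : ℕ → E} {h : ℕ → E → ℝ≥0∞} {c : ℝ≥0∞}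
    (H : SP p μ m y h c) : SP p μ (2 * m) (fun i => y (i / 2)) (fun i x => 2⁻¹ * h (i / 2) x) c := by
  have sumd : ∀ (F : ℕ → ℝ≥0∞), ∑ i ∈ Finset.range (2 * m), 2⁻¹ * F (i / 2) =
      ∑ i ∈ Finset.range m, F i := by
    intro F
    clear H
    induction m with
    | zero => simp
    | succ m ih =>
      rw [show 2 * (m + 1) = 2 * m + 1 + 1 by ring, Finset.sum_range_succ, Finset.sum_range_succ,
        ih, Finset.sum_range_succ, add_assoc, show (2 * m + 1) / 2 = m by omega,
        show (2 * m) / 2 = m by omega, ← add_mul, ENNReal.inv_two_add_inv_two, one_mul]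
  refine ⟨fun i => (H.meas _).const_mul _, ?_, ?_, ?_⟩
  · filter_upwards [H.sum_one] with x hx
    rw [sumd (fun i => h i x), hx]
  · intro i hi
    rw [lintegral_const_mul _ (H.meas _), H.int _ (by omega), Nat.cast_mul,
      ENNReal.mul_inv (by simp) (by simp)]
    simp
  · refine le_trans (le_of_eq ?_) H.cost
    rw [← sumd]
    refine Finset.sum_congr rfl fun i _ => ?_
    simp only [mul_assoc]
    have hm1 : Measurable fun x => edist x (y (i / 2)) ^ p := by fun_prop
    exact lintegral_const_mul _ ((H.meas (i / 2)).mul hm1)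

lemma SP.extract {p : ℝ} {μ : Measure E} [IsProbabilityMeasure μ] {m : ℕ} (hm : 0 < m) (hp : 1 ≤ p)
    (y : ℕ → E) {B : ℝ≥0∞} (hB : Wp p μ (empiricalMeasure m fun i : Fin m => y i) < B) :
    ∃ h, SP p μ m y h (B ^ p) := by
  have hp0 : 0 < p := by linarith
  simp only [Wp, iInf_lt_iff, Set.mem_ofPred_eq] at hB
  obtain ⟨γ, ⟨hγ1, hγ2⟩, hγ⟩ := hB
  have hcost : ∫⁻ z, edist z.1 z.2 ^ p ∂γ ≤ B ^ p := by
    rw [one_div] at hγ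
    exact ((ENNReal.rpow_inv_lt_iff hp0).1 hγ).le
  have : IsProbabilityMeasure γ := by
    constructor
    have : (γ.map Prod.fst) Set.univ = 1 := by rw [hγ1]; simp
    rwa [Measure.map_apply measurable_fst MeasurableSet.univ, Set.preimage_univ] at this
  classical
  set mult : ℕ → ℕ := fun i => ((Finset.range m).filter fun j => y j = y i).card with hmult
  set κ : ℕ → E → ℝ≥0∞ := fun i z => if z = y i then ((mult i : ℝ≥0∞))⁻¹ else 0 with hκ
  have hκm : ∀ i, Measurable (κ i) := fun i =>
    Measurable.ite (measurableSet_singleton _) measurable_const measurable_const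
  have hmult0 : ∀ i, i < m → (mult i : ℝ≥0∞) ≠ 0 := by
    intro i hi
    have : 0 < mult i := Finset.card_pos.2 ⟨i, by simp [hi]⟩
    exact_mod_cast this.ne'
  have hκsum : ∀ j, j < m → ∑ i ∈ Finset.range m, κ i (y j) = 1 := by
    intro j hj
    have : ∀ i ∈ Finset.range m, κ i (y j) = if y i = y j then (mult j : ℝ≥0∞)⁻¹ else 0 := by
      intro i _
      simp only [hκ]
      by_cases h : y j = y i
      · simp [h, hmult]
      · simp [h, Ne.symm h]
    rw [Finset.sum_congr rfl this, ← Finset.sum_filter, Finset.sum_const, nsmul_eq_mul]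
    exact ENNReal.mul_inv_cancel (hmult0 j hj) (by simp)
  have hκae : ∀ᵐ z ∂γ, ∑ i ∈ Finset.range m, κ i z.2 = 1 := by
    have : ∀ᵐ z ∂(γ.map Prod.snd), ∑ i ∈ Finset.range m, κ i z = 1 := by
      rw [hγ2, empiricalMeasure]
      have hs : MeasurableSet {z | ∑ i ∈ Finset.range m, κ i z = 1} :=
        measurableSet_eq_fun (Finset.measurable_sum _ fun i _ => hκm i) measurable_const
      rw [ae_iff]
      simp only [Measure.smul_apply, Measure.finsetSum_apply, smul_eq_mul]
      rw [Finset.sum_eq_zero, mul_zero]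
      intro i _
      have := hs.compl
      rw [Measure.dirac_apply' _ (by simpa [Set.compl_ofPred] using this)]
      simp [hκsum i i.2]
    exact ae_of_ae_map measurable_snd.aemeasurable this
  have hκint : ∀ i, i < m → ∫⁻ z, κ i z.2 ∂γ = (m : ℝ≥0∞)⁻¹ := by
    intro i hi
    rw [← lintegral_map (hκm i) measurable_snd, hγ2, empiricalMeasure, lintegral_smul_measure,
      lintegral_finsetSum_measure]
    simp only [lintegral_dirac' _ (hκm i), smul_eq_mul]
    rw [← Finset.sum_range (fun j => κ i (y j))]
    simp only [hκ]
    rw [← Finset.sum_filter, Finset.sum_const, nsmul_eq_mul, ENNReal.mul_inv_cancel (hmult0 i hi) (by simp), mul_one]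
  set ρ : ℕ → Measure E := fun i => (γ.withDensity fun z => κ i z.2).map Prod.fst with hρ
  have hκm2 : ∀ i, Measurable fun z : E × E => κ i z.2 := fun i => (hκm i).comp measurable_snd
  have hρint : ∀ i (F : E → ℝ≥0∞), Measurable F → ∫⁻ x, F x ∂(ρ i) = ∫⁻ z, κ i z.2 * F z.1 ∂γ := by
    intro i F hF
    rw [hρ, lintegral_map hF measurable_fst]
    exact lintegral_withDensity_eq_lintegral_mul _ (hκm2 i) (hF.comp measurable_fst)
  have hρsum : ∑ i ∈ Finset.range m, ρ i = μ := by
    ext S hS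
    rw [Measure.finsetSum_apply, ← hγ1, Measure.map_apply measurable_fst hS]
    have : ∀ i, ρ i S = ∫⁻ z in Prod.fst ⁻¹' S, κ i z.2 ∂γ := by
      intro i
      rw [hρ, Measure.map_apply measurable_fst hS, withDensity_apply _ (measurable_fst hS)]
    simp only [this]
    rw [← lintegral_finsetSum _ (fun i _ => hκm2 i)]
    rw [lintegral_congr_ae (ae_restrict_of_ae hκae)]
    simp
  have hρfin : ∀ i, i < m → ρ i Set.univ = (m : ℝ≥0∞)⁻¹ := by
    intro i hi
    rw [hρ, Measure.map_apply measurable_fst MeasurableSet.univ, Set.preimage_univ,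
      withDensity_apply _ MeasurableSet.univ, Measure.restrict_univ, hκint i hi]
  have hρle : ∀ i, i < m → ρ i ≤ μ := by
    intro i hi
    rw [← hρsum]
    exact Finset.single_le_sum (f := ρ) (fun j _ => Measure.zero_le _) (Finset.mem_range.2 hi)
  have hwd : ∀ i, i < m → μ.withDensity ((ρ i).rnDeriv μ) = ρ i := by
    intro i hi
    have : IsFiniteMeasure (ρ i) := ⟨by rw [hρfin i hi]; simp [hm]⟩
    exact Measure.withDensity_rnDeriv_eq _ _ (Measure.absolutelyContinuous_of_le (hρle i hi))
  refine ⟨fun i => (ρ i).rnDeriv μ, fun i => Measure.measurable_rnDeriv _ _, ?_, ?_, ?_⟩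
  · have e : μ.withDensity (fun x => ∑ i ∈ Finset.range m, (ρ i).rnDeriv μ x) = μ.withDensity 1 := by
      rw [withDensity_one]
      ext S hS
      rw [withDensity_apply _ hS, lintegral_finsetSum _ (fun i _ => Measure.measurable_rnDeriv _ _)]
      nth_rw 3 [← hρsum]
      rw [Measure.finsetSum_apply]
      refine Finset.sum_congr rfl fun i hi => ?_
      rw [← withDensity_apply _ hS, hwd i (Finset.mem_range.1 hi)]
    have := (withDensity_eq_iff (by
      exact (Finset.measurable_sum _ (fun i _ => Measure.measurable_rnDeriv _ _)).aemeasurable) (by exact measurable_const.aemeasurable) ?_).1 e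
    · filter_upwards [this] with x hx
      simpa using hx
    · have h2 := congrArg (fun ν => ν Set.univ) e
      simp only [withDensity_apply _ MeasurableSet.univ, Measure.restrict_univ] at h2
      rw [h2]; simp
  · intro i hi
    rw [← hρfin i hi]
    nth_rw 2 [← hwd i hi]
    rw [withDensity_apply _ MeasurableSet.univ, Measure.restrict_univ]
  · refine le_trans (le_of_eq ?_) hcost
    have : ∀ i ∈ Finset.range m, ∫⁻ x, (ρ i).rnDeriv μ x * edist x (y i) ^ p ∂μ =
        ∫⁻ z, κ i z.2 * edist z.1 z.2 ^ p ∂γ := by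
      intro i hi
      have hm1 : Measurable fun x => edist x (y i) ^ p := by fun_prop
      have := lintegral_withDensity_eq_lintegral_mul μ (Measure.measurable_rnDeriv (ρ i) μ) hm1
      simp only [Pi.mul_apply] at this
      rw [← this, hwd i (Finset.mem_range.1 hi), hρint i _ hm1]
      refine lintegral_congr fun z => ?_
      simp only [hκ]
      split_ifs with h
      · rw [h]
      · simp
    rw [Finset.sum_congr rfl this, ← lintegral_finsetSum]
    · refine lintegral_congr_ae ?_
      filter_upwards [hκae] with z hz
      rw [← Finset.sum_mul, hz, one_mul]
    · intro i _
      have : Measurable fun z : E × E => edist z.1 z.2 := measurable_edist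
      exact (hκm2 i).mul (this.pow_const p)


lemma edist_rpow {p : ℝ} (hp : 0 ≤ p) (x y : E) : edist x y ^ p = ENNReal.ofReal (dist x y ^ p) := by
  rw [edist_dist, ENNReal.ofReal_rpow_of_nonneg dist_nonneg hp]

lemma SP.matching {p : ℝ} (hp : 1 ≤ p) {μ : Measure E} [IsProbabilityMeasure μ] {m : ℕ} (hm : 0 < m)
    {y : ℕ → E} {h : ℕ → E → ℝ≥0∞} {c : ℝ≥0∞} (H : SP p μ m y h c)
    {y' : ℕ → E} {h' : ℕ → E → ℝ≥0∞} {c' : ℝ≥0∞} (H' : SP p μ m y' h' c') :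
    ∃ τ : ℕ → ℕ, SP p μ m (fun i => y' (τ i)) (fun i => h' (τ i)) c' ∧
      ∑ i ∈ Finset.range m, edist (y' (τ i)) (y i) ^ p ≤ m * (2 ^ (p - 1) * (c + c')) := by
  have hp0 : 0 ≤ p := by linarith
  set T : ℕ → ℕ → ℝ≥0∞ := fun i l => ∫⁻ x, h i x * h' l x ∂μ with hT
  have hrow : ∀ i, i < m → ∑ l ∈ Finset.range m, T i l = (m : ℝ≥0∞)⁻¹ := by
    intro i hi
    simp only [hT]
    rw [← lintegral_finsetSum _ (fun l _ => (H.meas i).fun_mul (H'.meas l)), ← H.int i hi]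
    refine lintegral_congr_ae ?_
    filter_upwards [H'.sum_one] with x hx
    rw [← Finset.mul_sum, hx, mul_one]
  have hcol : ∀ l, l < m → ∑ i ∈ Finset.range m, T i l = (m : ℝ≥0∞)⁻¹ := by
    intro l hl
    simp only [hT]
    rw [← lintegral_finsetSum _ (fun i _ => (H.meas i).fun_mul (H'.meas l)), ← H'.int l hl]
    refine lintegral_congr_ae ?_
    filter_upwards [H.sum_one] with x hx
    rw [← Finset.sum_mul, hx, one_mul]
  have hminv : (m : ℝ≥0∞)⁻¹ ≠ ∞ := by simp [hm.ne']
  have hTfin : ∀ i l, i < m → l < m → T i l ≠ ∞ := by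
    intro i l hi hl h
    have := Finset.single_le_sum (f := fun l => T i l) (fun j _ => zero_le) (Finset.mem_range.2 hl)
    rw [hrow i hi] at this
    simp only [h, top_le_iff] at this
    exact hminv this
  have hmR : (m : ℝ) ≠ 0 := by exact_mod_cast hm.ne'
  have hcostT : ∑ i ∈ Finset.range m, ∑ l ∈ Finset.range m, T i l * edist (y i) (y' l) ^ p ≤
      2 ^ (p - 1) * (c + c') := by
    have e1 : ∀ i l, T i l * edist (y i) (y' l) ^ p ≤ 2 ^ (p - 1) *
        (∫⁻ x, h i x * edist x (y i) ^ p * h' l x ∂μ +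
          ∫⁻ x, h i x * (h' l x * edist x (y' l) ^ p) ∂μ) := by
      intro i l
      have m1 : Measurable fun x => edist x (y i) ^ p := by fun_prop
      have m2 : Measurable fun x => edist x (y' l) ^ p := by fun_prop
      have m3 := ((H.meas i).fun_mul m1).fun_mul (H'.meas l)
      have m4 := (H.meas i).fun_mul ((H'.meas l).fun_mul m2)
      have e := lintegral_add_left (μ := μ) m3 (fun x => h i x * (h' l x * edist x (y' l) ^ p))
      simp only [hT]
      rw [← e, ← lintegral_mul_const _ ((H.meas i).fun_mul (H'.meas l)), ← lintegral_const_mul _ (m3.fun_add m4)]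
      refine lintegral_mono fun x => ?_
      have : edist (y i) (y' l) ^ p ≤ 2 ^ (p - 1) * (edist x (y i) ^ p + edist x (y' l) ^ p) := by
        refine le_trans ?_ (ENNReal.rpow_add_le_mul_rpow_add_rpow _ _ hp)
        gcongr
        rw [edist_comm x (y i)]
        exact edist_triangle _ _ _
      calc h i x * h' l x * edist (y i) (y' l) ^ p
          ≤ h i x * h' l x * (2 ^ (p - 1) * (edist x (y i) ^ p + edist x (y' l) ^ p)) := by gcongr
        _ = _ := by ring
    refine (Finset.sum_le_sum fun i _ => Finset.sum_le_sum fun l _ => e1 i l).trans ?_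
    simp only [← Finset.mul_sum, Finset.sum_add_distrib]
    gcongr
    · refine le_trans (Finset.sum_le_sum fun i _ => le_of_eq ?_) H.cost
      have m1 : Measurable fun x => edist x (y i) ^ p := by fun_prop
      rw [← lintegral_finsetSum _ (fun l _ => ((H.meas i).fun_mul m1).fun_mul (H'.meas l))]
      refine lintegral_congr_ae ?_
      filter_upwards [H'.sum_one] with x hx
      rw [← Finset.mul_sum, hx, mul_one]
    · rw [Finset.sum_comm]
      refine le_trans (Finset.sum_le_sum fun l _ => le_of_eq ?_) H'.cost
      have m1 : Measurable fun x => edist x (y' l) ^ p := by fun_prop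
      rw [← lintegral_finsetSum _ (fun i _ => (H.meas i).fun_mul ((H'.meas l).fun_mul m1))]
      refine lintegral_congr_ae ?_
      filter_upwards [H.sum_one] with x hx
      rw [← Finset.sum_mul, hx, one_mul]
  obtain ⟨σ, hσ⟩ := birkhoff_min (n := Fin m) (Matrix.of fun i l => (m : ℝ) * (T i l).toReal) (by
      rw [mem_doublyStochastic_iff_sum]
      simp only [Matrix.of_apply]
      refine ⟨fun i l => by positivity, fun i => ?_, fun l => ?_⟩
      · rw [← Finset.mul_sum, ← Finset.sum_range (fun l => (T i l).toReal),
          ← ENNReal.toReal_sum (fun l hl => hTfin i l i.2 (Finset.mem_range.1 hl)), hrow i i.2]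
        simp [hmR]
      · rw [← Finset.mul_sum, ← Finset.sum_range (fun i => (T i l).toReal),
          ← ENNReal.toReal_sum (fun i hi => hTfin i l (Finset.mem_range.1 hi) l.2), hcol l l.2]
        simp [hmR])
    (fun i l => dist (y i) (y' l) ^ p)
  have hτ : ∀ (F : ℕ → ℝ≥0∞), ∑ i ∈ Finset.range m, F (if hi : i < m then σ ⟨i, hi⟩ else i) =
      ∑ i ∈ Finset.range m, F i := by
    intro F
    rw [Finset.sum_range, Finset.sum_range]
    simp only [Fin.is_lt, dite_true, Fin.eta]
    exact Equiv.sum_comp σ (fun i => F i)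
  refine ⟨fun i => if hi : i < m then σ ⟨i, hi⟩ else i, ⟨fun i => H'.meas _, ?_, ?_, ?_⟩, ?_⟩
  · filter_upwards [H'.sum_one] with x hx
    rw [hτ (fun i => h' i x), hx]
  · intro i hi
    simp only [hi, dite_true]
    exact H'.int _ (σ ⟨i, hi⟩).2
  · rw [hτ (fun i => ∫⁻ x, h' i x * edist x (y' i) ^ p ∂μ)]
    exact H'.cost
  · rw [Finset.sum_range]
    simp only [Fin.is_lt, dite_true, Fin.eta]
    calc ∑ i : Fin m, edist (y' (σ i)) (y i) ^ p
        = ENNReal.ofReal (∑ i : Fin m, dist (y i) (y' (σ i)) ^ p) := by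
          rw [ENNReal.ofReal_sum_of_nonneg (fun i _ => by positivity)]
          refine Finset.sum_congr rfl fun i _ => ?_
          rw [edist_comm, edist_rpow hp0]
      _ ≤ ENNReal.ofReal (∑ i : Fin m, ∑ l : Fin m, (m : ℝ) * (T i l).toReal * dist (y i) (y' l) ^ p) :=
          ENNReal.ofReal_le_ofReal hσ
      _ = m * ∑ i ∈ Finset.range m, ∑ l ∈ Finset.range m, T i l * edist (y i) (y' l) ^ p := by
          rw [Finset.sum_range, ENNReal.ofReal_sum_of_nonneg (fun i _ => Finset.sum_nonneg fun l _ => by positivity), Finset.mul_sum]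
          refine Finset.sum_congr rfl fun i _ => ?_
          rw [Finset.sum_range, ENNReal.ofReal_sum_of_nonneg (fun l _ => by positivity), Finset.mul_sum]
          refine Finset.sum_congr rfl fun l _ => ?_
          rw [mul_assoc, ENNReal.ofReal_mul (by positivity), ENNReal.ofReal_mul (by positivity),
            ENNReal.ofReal_toReal (hTfin i l i.2 l.2), edist_rpow hp0]
          simp
      _ ≤ _ := by gcongr

end


section
variable {E : Type*} [MetricSpace E] [TopologicalSpace.SeparableSpace E]
    [MeasurableSpace E] [BorelSpace E]

lemma SP.chain {p : ℝ} (hp : 1 ≤ p) {μ : Measure E} [IsProbabilityMeasure μ] (c : ℕ → ℝ≥0∞)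
    (hc : ∀ s, ∃ y h, SP p μ (2 ^ s) y h (c s)) :
    ∃ (Y : ℕ → ℕ → E) (H : ℕ → ℕ → E → ℝ≥0∞), (∀ s, SP p μ (2 ^ s) (Y s) (H s) (c s)) ∧
      ∀ s, ∑ v ∈ Finset.range (2 ^ (s + 1)), edist (Y (s + 1) v) (Y s (v / 2)) ^ p ≤
        ((2 ^ (s + 1) : ℕ) : ℝ≥0∞) * (2 ^ (p - 1) * (c s + c (s + 1))) := by
  let St : ℕ → Type _ := fun s => {yh : (ℕ → E) × (ℕ → E → ℝ≥0∞) // SP p μ (2 ^ s) yh.1 yh.2 (c s)}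
  have step : ∀ s (a : St s), ∃ b : St (s + 1),
      ∑ v ∈ Finset.range (2 ^ (s + 1)), edist (b.1.1 v) (a.1.1 (v / 2)) ^ p ≤
        ((2 ^ (s + 1) : ℕ) : ℝ≥0∞) * (2 ^ (p - 1) * (c s + c (s + 1))) := by
    intro s a
    obtain ⟨y, h, H⟩ := hc (s + 1)
    have Hd := a.2.double
    rw [← pow_succ'] at Hd
    obtain ⟨τ, Hτ, hτ⟩ := SP.matching hp (by positivity) Hd H
    exact ⟨⟨(_, _), Hτ⟩, hτ⟩
  choose nxt hnxt using step
  obtain ⟨y0, h0, H0⟩ := hc 0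
  let seq : ∀ s, St s := fun s => Nat.rec (motive := St) ⟨(y0, h0), H0⟩ nxt s
  exact ⟨fun s => (seq s).1.1, fun s => (seq s).1.2, fun s => (seq s).2, fun s => hnxt s (seq s)⟩

lemma three_rpow {p : ℝ} (hp : 1 ≤ p) (a b c : ℝ≥0∞) :
    (a + b + c) ^ p ≤ 3 ^ (p - 1) * (a ^ p + b ^ p + c ^ p) := by
  have := ENNReal.rpow_sum_le_const_mul_sum_rpow Finset.univ ![a, b, c] hp
  simpa [Fin.sum_univ_three] using this

lemma path_bound {p : ℝ} (hp : 1 ≤ p) {μ : Measure E} [IsProbabilityMeasure μ] {n m : ℕ}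
    (hm : 0 < m) {y : ℕ → E} {h : ℕ → E → ℝ≥0∞} {c : ℝ≥0∞} (H : SP p μ m y h c)
    (X : Fin n → E) (I : Fin n → Fin m) (Q : Fin n → Fin m → ℝ) (hQ : ∀ t i, 0 ≤ Q t i)
    (hn : 0 < n)
    (hrow : ∀ t, ∑ i, Q t i = 1 / n) (hcol : ∀ i, ∑ t, Q t i = 1 / m) :
    Wp p (empiricalMeasure n X) μ ^ p ≤ 3 ^ (p - 1) *
      ((n : ℝ≥0∞)⁻¹ * ∑ t, edist (X t) (y (I t)) ^ p +
        ENNReal.ofReal (∑ t, ∑ i, Q t i * dist (y (I t)) (y i) ^ p) + c) := by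
  have hp0 : 0 < p := by linarith
  have hm0 : (m : ℝ≥0∞) ≠ 0 := by exact_mod_cast hm.ne'
  have hrow' : ∀ t, ∑ i, ENNReal.ofReal (Q t i) = (n : ℝ≥0∞)⁻¹ := by
    intro t
    rw [← ENNReal.ofReal_sum_of_nonneg fun i _ => hQ t i, hrow, one_div,
      ENNReal.ofReal_inv_of_pos (by exact_mod_cast hn)]
    simp
  have hcol' : ∀ i, ∑ t, ENNReal.ofReal (Q t i) = (m : ℝ≥0∞)⁻¹ := by
    intro i
    rw [← ENNReal.ofReal_sum_of_nonneg fun t _ => hQ t i, hcol, one_div,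
      ENNReal.ofReal_inv_of_pos (by exact_mod_cast hm)]
    simp
  have hmm : Measurable fun z : E × E => edist z.1 z.2 ^ p := by
    have : Measurable fun z : E × E => edist z.1 z.2 := measurable_edist
    exact this.pow_const p
  set γ : Measure (E × E) := ∑ t, ∑ i, (ENNReal.ofReal (Q t i) * m) •
    (μ.withDensity (h (i : Fin m))).map (Prod.mk (X t)) with hγ
  have hγapp : ∀ S, MeasurableSet S → γ S = ∑ t, ∑ i, (ENNReal.ofReal (Q t i) * m) *
      (μ.withDensity (h (i : Fin m))) (Prod.mk (X t) ⁻¹' S) := by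
    intro S hS
    simp only [hγ, Measure.finsetSum_apply, Measure.smul_apply, smul_eq_mul]
    refine Finset.sum_congr rfl fun t _ => Finset.sum_congr rfl fun i _ => ?_
    rw [Measure.map_apply measurable_prodMk_left hS]
  have htot : ∀ i : Fin m, μ.withDensity (h i) Set.univ = (m : ℝ≥0∞)⁻¹ := by
    intro i
    rw [withDensity_apply _ MeasurableSet.univ, Measure.restrict_univ, H.int i i.2]
  have h1 : γ.map Prod.fst = empiricalMeasure n X := by
    ext S hS
    rw [Measure.map_apply measurable_fst hS, hγapp _ (measurable_fst hS), empiricalMeasure]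
    simp only [Measure.smul_apply, Measure.finsetSum_apply, smul_eq_mul]
    rw [Finset.mul_sum]
    refine Finset.sum_congr rfl fun t _ => ?_
    rw [Measure.dirac_apply' _ hS]
    by_cases hX : X t ∈ S
    · have : Prod.mk (X t) ⁻¹' (Prod.fst ⁻¹' S : Set (E × E)) = Set.univ := by ext; simp [hX]
      simp only [this, htot, mul_assoc, ENNReal.mul_inv_cancel hm0 (by simp), mul_one, hrow']
      simp [hX]
    · have : Prod.mk (X t) ⁻¹' (Prod.fst ⁻¹' S : Set (E × E)) = ∅ := by ext; simp [hX]
      simp [this, hX]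
  have h2 : γ.map Prod.snd = μ := by
    ext S hS
    rw [Measure.map_apply measurable_snd hS, hγapp _ (measurable_snd hS)]
    have : ∀ t, Prod.mk (X t) ⁻¹' (Prod.snd ⁻¹' S : Set (E × E)) = S := fun t => by ext; simp
    simp only [this]
    rw [Finset.sum_comm]
    simp only [← Finset.sum_mul, hcol', ENNReal.inv_mul_cancel hm0 (by simp), one_mul]
    simp only [withDensity_apply _ hS]
    rw [← Finset.sum_range (fun i => ∫⁻ x in S, h i x ∂μ),
      ← lintegral_finsetSum _ (fun i _ => H.meas i), lintegral_congr_ae (ae_restrict_of_ae H.sum_one)]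
    simp
  have hW : Wp p (empiricalMeasure n X) μ ^ p ≤ ∫⁻ z, edist z.1 z.2 ^ p ∂γ := by
    have : Wp p (empiricalMeasure n X) μ ≤ (∫⁻ z, edist z.1 z.2 ^ p ∂γ) ^ (1 / p) :=
      iInf₂_le γ ⟨h1, h2⟩
    rw [one_div] at this
    exact (ENNReal.le_rpow_inv_iff hp0).1 this
  refine hW.trans ?_
  simp only [hγ, lintegral_finsetSum_measure, lintegral_smul_measure, smul_eq_mul]
  have hb : ∀ t, ∀ i : Fin m, (ENNReal.ofReal (Q t i) * m) *
      ∫⁻ z, edist z.1 z.2 ^ p ∂((μ.withDensity (h i)).map (Prod.mk (X t))) ≤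
      3 ^ (p - 1) * (ENNReal.ofReal (Q t i) * edist (X t) (y (I t)) ^ p +
        ENNReal.ofReal (Q t i * dist (y (I t)) (y i) ^ p) +
        ENNReal.ofReal (Q t i) * m * ∫⁻ x, h i x * edist x (y i) ^ p ∂μ) := by
    intro t i
    have m1 : Measurable fun x => edist x (y i) ^ p := by fun_prop
    rw [lintegral_map hmm measurable_prodMk_left]
    have e1 : ∫⁻ x, edist (X t) x ^ p ∂(μ.withDensity (h i)) ≤
        3 ^ (p - 1) * ((edist (X t) (y (I t)) ^ p + edist (y (I t)) (y i) ^ p) * (m : ℝ≥0∞)⁻¹ +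
          ∫⁻ x, h i x * edist x (y i) ^ p ∂μ) := by
      calc ∫⁻ x, edist (X t) x ^ p ∂(μ.withDensity (h i))
          ≤ ∫⁻ x, 3 ^ (p - 1) * (edist (X t) (y (I t)) ^ p + edist (y (I t)) (y i) ^ p + edist x (y i) ^ p)
            ∂(μ.withDensity (h i)) := by
            refine lintegral_mono fun x => le_trans ?_ (three_rpow hp _ _ _)
            gcongr
            refine (edist_triangle4 _ (y (I t)) (y i) _).trans ?_
            rw [edist_comm x]
        _ = _ := by
            rw [lintegral_const_mul _ (by fun_prop), lintegral_add_left measurable_const, lintegral_const, htot]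
            congr 2
            exact lintegral_withDensity_eq_lintegral_mul _ (H.meas i) m1
    refine (mul_le_mul_right e1 _).trans (le_of_eq ?_)
    rw [ENNReal.ofReal_mul (hQ t i), ← edist_rpow hp0.le]
    have : (m : ℝ≥0∞) * (m : ℝ≥0∞)⁻¹ = 1 := ENNReal.mul_inv_cancel hm0 (by simp)
    calc _ = 3 ^ (p - 1) * (ENNReal.ofReal (Q t i) * (edist (X t) (y (I t)) ^ p + edist (y (I t)) (y i) ^ p) * (m * (m : ℝ≥0∞)⁻¹) + ENNReal.ofReal (Q t i) * m * ∫⁻ x, h i x * edist x (y i) ^ p ∂μ) := by ring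
      _ = _ := by rw [this]; ring
  refine (Finset.sum_le_sum fun t _ => Finset.sum_le_sum fun i _ => hb t i).trans ?_
  simp only [← Finset.mul_sum, Finset.sum_add_distrib]
  gcongr
  · simp only [← Finset.sum_mul, hrow']
    rw [Finset.mul_sum]
  · rw [ENNReal.ofReal_sum_of_nonneg]
    · refine Finset.sum_le_sum fun t _ => ?_
      rw [ENNReal.ofReal_sum_of_nonneg]
      intro i _
      exact mul_nonneg (hQ t i) (by positivity)
    · intro t _
      refine Finset.sum_nonneg fun i _ => mul_nonneg (hQ t i) (by positivity)
  · rw [Finset.sum_comm]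
    simp only [← Finset.sum_mul, hcol', ENNReal.inv_mul_cancel hm0 (by simp), one_mul]
    rw [← Finset.sum_range (fun i => ∫⁻ x, h i x * edist x (y i) ^ p ∂μ)]
    exact H.cost

lemma tree_dist (Y : ℕ → ℕ → E) (J a b : ℕ) (ha : a < 2 ^ J) (hb : b < 2 ^ J) (k : ℕ) (hk : k ≤ J) :
    dist (Y k (a / 2 ^ (J - k))) (Y k (b / 2 ^ (J - k))) ≤ ∑ s ∈ Finset.range k,
      if a / 2 ^ (J - (s + 1)) = b / 2 ^ (J - (s + 1)) then 0 else
        dist (Y (s + 1) (a / 2 ^ (J - (s + 1)))) (Y s (a / 2 ^ (J - (s + 1)) / 2)) +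
        dist (Y (s + 1) (b / 2 ^ (J - (s + 1)))) (Y s (b / 2 ^ (J - (s + 1)) / 2)) := by
  induction k with
  | zero => simp [Nat.div_eq_of_lt ha, Nat.div_eq_of_lt hb]
  | succ k ih =>
    have e : ∀ c : ℕ, c / 2 ^ (J - k) = c / 2 ^ (J - (k + 1)) / 2 := by
      intro c
      rw [Nat.div_div_eq_div_mul, ← pow_succ, show J - k = J - (k + 1) + 1 by omega]
    have ih := ih (by omega)
    rw [Finset.sum_range_succ]
    rw [e, e] at ih
    split_ifs with h
    · rw [h, dist_self, add_zero]
      refine Finset.sum_nonneg fun s _ => ?_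
      split_ifs <;> positivity
    · have := dist_triangle4 (Y (k + 1) (a / 2 ^ (J - (k + 1)))) (Y k (a / 2 ^ (J - (k + 1)) / 2)) (Y k (b / 2 ^ (J - (k + 1)) / 2)) (Y (k + 1) (b / 2 ^ (J - (k + 1))))
      rw [dist_comm (Y k (b / 2 ^ (J - (k + 1)) / 2)) (Y (k + 1) (b / 2 ^ (J - (k + 1))))] at this
      linarith

lemma tree_dist_rpow {p : ℝ} (hp : 1 ≤ p) (Y : ℕ → ℕ → E) (J a b : ℕ) (ha : a < 2 ^ J) (hb : b < 2 ^ J) :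
    dist (Y J a) (Y J b) ^ p ≤ (J : ℝ) ^ (p - 1) * 2 ^ (p - 1) * ∑ s ∈ Finset.range J,
      if a / 2 ^ (J - (s + 1)) = b / 2 ^ (J - (s + 1)) then 0 else
        dist (Y (s + 1) (a / 2 ^ (J - (s + 1)))) (Y s (a / 2 ^ (J - (s + 1)) / 2)) ^ p +
        dist (Y (s + 1) (b / 2 ^ (J - (s + 1)))) (Y s (b / 2 ^ (J - (s + 1)) / 2)) ^ p := by
  have h := tree_dist Y J a b ha hb J le_rfl
  simp only [Nat.sub_self, pow_zero, Nat.div_one] at h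
  refine (Real.rpow_le_rpow dist_nonneg h (by linarith)).trans ?_
  refine (Real.rpow_sum_le_const_mul_sum_rpow_of_nonneg _ hp ?_).trans ?_
  · intro s _; split_ifs <;> positivity
  rw [Finset.card_range, mul_assoc]
  refine mul_le_mul_of_nonneg_left ?_ (by positivity)
  rw [Finset.mul_sum]
  refine Finset.sum_le_sum fun s _ => ?_
  split_ifs with h
  · rw [Real.zero_rpow (by linarith), mul_zero]
  · have := NNReal.rpow_add_le_mul_rpow_add_rpow (nndist (Y (s + 1) (a / 2 ^ (J - (s + 1)))) (Y s (a / 2 ^ (J - (s + 1)) / 2))) (nndist (Y (s + 1) (b / 2 ^ (J - (s + 1)))) (Y s (b / 2 ^ (J - (s + 1)) / 2))) hp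
    exact_mod_cast this

end


open ProbabilityTheory in
lemma emp_dev {Ω : Type*} [MeasurableSpace Ω] (P : Measure Ω) [IsProbabilityMeasure P] (n : ℕ)
    (hn : 0 < n) (A : Ω → Prop) [DecidablePred A] (hA : MeasurableSet {x | A x}) (q D : ℝ)
    (hq : P.real {x | A x} = q) (hqD : q ≤ D) (hD : 0 < D) :
    ∫⁻ Z, ENNReal.ofReal |(∑ t, if A (Z t) then (1 / n : ℝ) else 0) - q| ∂(Measure.pi fun _ : Fin n => P)
      ≤ ENNReal.ofReal (Real.sqrt (D / n)) := by
  have hnR : (0 : ℝ) < n := by exact_mod_cast hn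
  set g : Ω → ℝ := fun x => if A x then (1 / n : ℝ) else 0 with hg
  have hgm : Measurable g := Measurable.ite hA measurable_const measurable_const
  have hgi : g = Set.indicator {x | A x} (fun _ => (1 / n : ℝ)) := by
    ext x; simp [hg, Set.indicator]
  have hgL : MemLp g 2 P := by
    rw [hgi]; exact (memLp_const _).indicator hA
  have hgint : ∫ x, g x ∂P = q / n := by
    rw [hgi, integral_indicator hA, setIntegral_const, hq, smul_eq_mul]; ring
  have hvar : Var[g; P] ≤ D / n ^ 2 := by
    refine (variance_le_expectation_sq hgm.aestronglyMeasurable).trans ?_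
    have : g ^ 2 = Set.indicator {x | A x} (fun _ => (1 / n : ℝ) ^ 2) := by
      ext x; simp only [hg, Set.indicator, Pi.pow_apply, Set.mem_ofPred_eq]; split_ifs <;> simp
    rw [this, integral_indicator hA, setIntegral_const, hq, smul_eq_mul, one_div, inv_pow, ← div_eq_mul_inv]
    gcongr
  set S : (Fin n → Ω) → ℝ := ∑ t, fun Z : Fin n → Ω => g (Z t) with hS
  have hSapp : ∀ Z, S Z = ∑ t, g (Z t) := fun Z => by simp [hS]
  have hV : Var[S; Measure.pi fun _ : Fin n => P] ≤ D / n := by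
    rw [hS, variance_sum_pi (X := fun _ => g) (fun _ => hgL), Finset.sum_const, Finset.card_univ, Fintype.card_fin, nsmul_eq_mul]
    calc (n : ℝ) * Var[g; P] ≤ n * (D / n ^ 2) := by gcongr
      _ = D / n := by field_simp
  have hSL : MemLp S 2 (Measure.pi fun _ : Fin n => P) :=
    memLp_finsetSum' _ fun t _ => hgL.comp_measurePreserving (measurePreserving_eval (fun _ => P) t)
  have hES : ∫ Z, S Z ∂(Measure.pi fun _ : Fin n => P) = q := by
    simp only [hSapp]
    rw [integral_finsetSum]
    · have : ∀ t : Fin n, ∫ Z, g (Z t) ∂(Measure.pi fun _ : Fin n => P) = q / n := by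
        intro t
        rw [← hgint]
        exact integral_comp_eval (μ := fun _ => P) (i := t) hgm.aestronglyMeasurable
      simp only [this, Finset.sum_const, Finset.card_univ, Fintype.card_fin, nsmul_eq_mul]
      field_simp
    · intro t _
      exact (hgL.comp_measurePreserving (measurePreserving_eval (fun _ => P) t)).integrable (by norm_num)
  have hSm : Measurable S := by
    have : S = fun Z => ∑ t, g (Z t) := funext hSapp
    rw [this]
    exact Finset.measurable_sum _ fun t _ => hgm.comp (measurable_pi_apply t)
  rw [variance_eq_integral hSm.aemeasurable, hES] at hV
  set a := Real.sqrt (D / n) with ha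
  have ha0 : 0 < a := Real.sqrt_pos.2 (by positivity)
  have haa : a ^ 2 = D / n := Real.sq_sqrt (by positivity)
  have hi2 : Integrable (fun Z => (S Z - q) ^ 2) (Measure.pi fun _ : Fin n => P) :=
    (hSL.sub (memLp_const q)).integrable_sq
  have hi : Integrable (fun Z => (S Z - q) ^ 2 / (2 * a) + a / 2) (Measure.pi fun _ : Fin n => P) :=
    (hi2.div_const _).add (integrable_const _)
  calc ∫⁻ Z, ENNReal.ofReal |(∑ t, g (Z t)) - q| ∂(Measure.pi fun _ : Fin n => P)
      ≤ ∫⁻ Z, ENNReal.ofReal ((S Z - q) ^ 2 / (2 * a) + a / 2) ∂(Measure.pi fun _ : Fin n => P) := by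
        refine lintegral_mono fun Z => ENNReal.ofReal_le_ofReal ?_
        rw [← hSapp]
        have h1 : (S Z - q) ^ 2 / (2 * a) + a / 2 - |S Z - q| = (|S Z - q| - a) ^ 2 / (2 * a) := by
          rw [← sq_abs (S Z - q)]; field_simp; ring
        have h2 : 0 ≤ (|S Z - q| - a) ^ 2 / (2 * a) := by positivity
        linarith
    _ = ENNReal.ofReal (∫ Z, ((S Z - q) ^ 2 / (2 * a) + a / 2) ∂(Measure.pi fun _ : Fin n => P)) := by
        rw [ofReal_integral_eq_lintegral_ofReal hi]
        exact Filter.Eventually.of_forall fun Z => by positivity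
    _ ≤ ENNReal.ofReal a := by
        refine ENNReal.ofReal_le_ofReal ?_
        rw [integral_add (hi2.div_const _) (integrable_const _), integral_div, integral_const]
        simp only [probReal_univ, one_smul]
        calc _ ≤ D / n / (2 * a) + a / 2 := by gcongr
          _ = a := by rw [← haa]; field_simp; ring

lemma count_div_le (J s v : ℕ) :
    (∑ i : Fin (2 ^ J), if (i : ℕ) / 2 ^ (J - (s + 1)) = v then (1 / (2 ^ J : ℕ) : ℝ) else 0) ≤
      2 ^ (J - (s + 1)) / 2 ^ J := by
  rw [Finset.sum_ite, Finset.sum_const, Finset.sum_const_zero, add_zero, nsmul_eq_mul]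
  have : (Finset.univ.filter fun i : Fin (2 ^ J) => (i : ℕ) / 2 ^ (J - (s + 1)) = v).card ≤ 2 ^ (J - (s + 1)) := by
    calc _ = ((Finset.univ.filter fun i : Fin (2 ^ J) => (i : ℕ) / 2 ^ (J - (s + 1)) = v).map Fin.valEmbedding).card := by simp
      _ ≤ (Finset.Ico (v * 2 ^ (J - (s + 1))) (v * 2 ^ (J - (s + 1)) + 2 ^ (J - (s + 1)))).card := by
        refine Finset.card_le_card ?_
        intro i hi
        simp only [Finset.mem_map, Finset.mem_filter, Finset.mem_univ, true_and, Fin.valEmbedding_apply] at hi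
        obtain ⟨i, hi, rfl⟩ := hi
        rw [Nat.div_eq_iff (by positivity)] at hi
        rw [Finset.mem_Ico]
        have : 0 < 2 ^ (J - (s + 1)) := by positivity
        omega
      _ = _ := by simp
  rw [mul_one_div]
  push_cast
  gcongr
  exact_mod_cast this

section
variable {E : Type*} [MetricSpace E] [TopologicalSpace.SeparableSpace E]
    [MeasurableSpace E] [BorelSpace E]

lemma expect_bound {p : ℝ} (hp : 1 ≤ p) {μ : Measure E} [IsProbabilityMeasure μ] {n : ℕ} (hn : 0 < n)
    (c : ℕ → ℝ) (hc0 : ∀ s, 0 ≤ c s) (Y : ℕ → ℕ → E) (H : ℕ → ℕ → E → ℝ≥0∞)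
    (hSP : ∀ s, SP p μ (2 ^ s) (Y s) (H s) (ENNReal.ofReal (c s)))
    (hY : ∀ s, ∑ v ∈ Finset.range (2 ^ (s + 1)), dist (Y (s + 1) v) (Y s (v / 2)) ^ p ≤
        2 ^ (s + 1) * (2 ^ (p - 1) * (c s + c (s + 1)))) (J : ℕ) :
    ∫⁻ X, (Wp p (empiricalMeasure n X) μ) ^ p ∂(sampleMeasure μ n) ≤
      ENNReal.ofReal (3 ^ (p - 1) * (2 * c J + (J : ℝ) ^ (p - 1) * 2 ^ (p - 1) *
        ∑ s ∈ Finset.range J, Real.sqrt (2 ^ (s + 1) / n) * (2 ^ (p - 1) * (c s + c (s + 1))))) := by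
  have hp0 : 0 < p := by linarith
  set M := 2 ^ J with hM
  have hM0 : 0 < M := by positivity
  have hnR : (0 : ℝ) < n := by exact_mod_cast hn
  set Γ : Measure (E × Fin M) := ∑ i : Fin M, (μ.withDensity (H J i)).map (fun x => (x, i)) with hΓ
  have hmk : ∀ i : Fin M, Measurable fun x : E => (x, i) := fun i => measurable_prodMk_right
  have hΓapp : ∀ S, MeasurableSet S → Γ S = ∑ i : Fin M, μ.withDensity (H J i) ((fun x => (x, i)) ⁻¹' S) := by
    intro S hS
    rw [hΓ, Measure.finsetSum_apply]
    exact Finset.sum_congr rfl fun i _ => Measure.map_apply (hmk i) hS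
  have hfst : Γ.map Prod.fst = μ := by
    ext S hS
    rw [Measure.map_apply measurable_fst hS, hΓapp _ (measurable_fst hS)]
    have : ∀ i : Fin M, (fun x : E => (x, i)) ⁻¹' (Prod.fst ⁻¹' S) = S := fun i => by ext; simp
    simp only [this, withDensity_apply _ hS]
    rw [← Finset.sum_range (fun i => ∫⁻ x in S, H J i x ∂μ),
      ← lintegral_finsetSum _ (fun i _ => (hSP J).meas i), lintegral_congr_ae (ae_restrict_of_ae (hSP J).sum_one)]
    simp
  have hΓP : IsProbabilityMeasure Γ := by
    constructor
    have : (Γ.map Prod.fst) Set.univ = 1 := by rw [hfst]; simp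
    rwa [Measure.map_apply measurable_fst MeasurableSet.univ, Set.preimage_univ] at this
  set Pn := Measure.pi fun _ : Fin n => Γ with hPn
  have hmap : sampleMeasure μ n = Pn.map (fun Z t => (Z t).1) := by
    have : ∀ i : Fin n, SigmaFinite (Γ.map (Prod.fst : E × Fin M → E)) := fun i => by rw [hfst]; infer_instance
    have := Measure.pi_map_pi (μ := fun _ : Fin n => Γ) (f := fun _ => Prod.fst) (fun i => measurable_fst.aemeasurable)
    rw [hPn, this, hfst]; rfl
  set F : E × Fin M → ℝ≥0∞ := fun z => edist z.1 (Y J z.2) ^ p with hF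
  have hFm : Measurable F := by
    refine measurable_from_prod_countable_left fun i => ?_
    simp only [hF]; fun_prop
  have hFint : ∫⁻ z, F z ∂Γ ≤ ENNReal.ofReal (c J) := by
    rw [hΓ, lintegral_finsetSum_measure]
    refine le_trans (le_of_eq ?_) (hSP J).cost
    rw [Finset.sum_range]
    refine Finset.sum_congr rfl fun i _ => ?_
    rw [lintegral_map hFm (hmk i)]
    have m1 : Measurable fun x => edist x (Y J i) ^ p := by fun_prop
    exact lintegral_withDensity_eq_lintegral_mul _ ((hSP J).meas i) m1
  set U : ℕ → ℕ → ℝ := fun s v => ∑ i : Fin M, if (i : ℕ) / 2 ^ (J - (s + 1)) = v then (1 / M : ℝ) else 0 with hU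
  set Wt : ℕ → ℕ → (Fin n → E × Fin M) → ℝ := fun s v Z =>
    ∑ t, if ((Z t).2 : ℕ) / 2 ^ (J - (s + 1)) = v then (1 / n : ℝ) else 0 with hWt
  have hWm : ∀ s v, Measurable (Wt s v) := by
    intro s v
    refine Finset.measurable_sum _ fun t _ => ?_
    have h1 : Measurable fun Z : Fin n → E × Fin M => (Z t).2 := measurable_snd.comp (measurable_pi_apply t)
    exact (measurable_from_top (f := fun i : Fin M => if (i : ℕ) / 2 ^ (J - (s + 1)) = v then (1 / n : ℝ) else 0)).comp h1
  set K : ℝ := (J : ℝ) ^ (p - 1) * 2 ^ (p - 1) with hK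
  have hK0 : 0 ≤ K := by positivity
  set L : ℕ → ℕ → ℝ := fun s v => dist (Y (s + 1) v) (Y s (v / 2)) ^ p with hL
  have hL0 : ∀ s v, 0 ≤ L s v := fun s v => by positivity
  have hpath : ∀ Z : Fin n → E × Fin M, Wp p (empiricalMeasure n fun t => (Z t).1) μ ^ p ≤
      3 ^ (p - 1) * ((n : ℝ≥0∞)⁻¹ * ∑ t, F (Z t) +
        ENNReal.ofReal (K * ∑ s ∈ Finset.range J, ∑ v ∈ Finset.range (2 ^ (s + 1)), L s v * |Wt s v Z - U s v|)
        + ENNReal.ofReal (c J)) := by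
    intro Z
    obtain ⟨Q, hQ0, hQr, hQc, hQ⟩ := tree_coupling (A := Fin n) (B := Fin M)
      (fun s t => ((Z t).2 : ℕ) / 2 ^ (J - (s + 1))) (fun s i => (i : ℕ) / 2 ^ (J - (s + 1)))
      (fun s => 2 ^ (s + 1)) 
      (fun s t => by
        rw [Nat.div_lt_iff_lt_mul (by positivity), ← pow_add]
        exact (Z t).2.2.trans_le (Nat.pow_le_pow_right (by norm_num) (by omega)))
      (fun s i => by
        rw [Nat.div_lt_iff_lt_mul (by positivity), ← pow_add]
        exact i.2.trans_le (Nat.pow_le_pow_right (by norm_num) (by omega)))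
      (fun s t i h => by
        rcases Nat.lt_or_ge (s + 1) J with hs | hs
        · have e : ∀ c : ℕ, c / 2 ^ (J - (s + 1)) = c / 2 ^ (J - (s + 1 + 1)) / 2 := by
            intro c
            rw [Nat.div_div_eq_div_mul, ← pow_succ, show J - (s + 1) = J - (s + 1 + 1) + 1 by omega]
          rw [e, e, h]
        · rw [show J - (s + 1) = J - (s + 1 + 1) by omega]; exact h)
      L hL0 J (fun _ => 1 / n) (fun _ => 1 / M) (fun _ => by positivity) (fun _ => by positivity)
      (by
        have : (M : ℝ) ≠ 0 := by exact_mod_cast hM0.ne'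
        simp [hnR.ne', this])
    refine (path_bound hp hM0 (hSP J) _ (fun t => (Z t).2) Q hQ0 hn hQr hQc).trans ?_
    gcongr
    calc ∑ t, ∑ i, Q t i * dist (Y J (Z t).2) (Y J i) ^ p
        ≤ ∑ t, ∑ i, Q t i * (K * ∑ s ∈ Finset.range J,
            if ((Z t).2 : ℕ) / 2 ^ (J - (s + 1)) = (i : ℕ) / 2 ^ (J - (s + 1)) then 0
            else L s (((Z t).2 : ℕ) / 2 ^ (J - (s + 1))) + L s ((i : ℕ) / 2 ^ (J - (s + 1)))) := by
          refine Finset.sum_le_sum fun t _ => Finset.sum_le_sum fun i _ => ?_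
          exact mul_le_mul_of_nonneg_left (tree_dist_rpow hp Y J _ _ (Z t).2.2 i.2) (hQ0 t i)
      _ = K * ∑ t, ∑ i, Q t i * (∑ s ∈ Finset.range J,
            if ((Z t).2 : ℕ) / 2 ^ (J - (s + 1)) = (i : ℕ) / 2 ^ (J - (s + 1)) then 0
            else L s (((Z t).2 : ℕ) / 2 ^ (J - (s + 1))) + L s ((i : ℕ) / 2 ^ (J - (s + 1)))) := by
          simp only [Finset.mul_sum]
          refine Finset.sum_congr rfl fun t _ => Finset.sum_congr rfl fun i _ => Finset.sum_congr rfl fun s _ => ?_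
          ring
      _ ≤ _ := mul_le_mul_of_nonneg_left hQ hK0
  have hdev : ∀ s ∈ Finset.range J, ∀ v, ∫⁻ Z, ENNReal.ofReal |Wt s v Z - U s v| ∂Pn ≤
      ENNReal.ofReal (Real.sqrt (2 ^ (J - (s + 1)) / 2 ^ J / n)) := by
    intro s hs v
    have hAm : MeasurableSet {z : E × Fin M | (z.2 : ℕ) / 2 ^ (J - (s + 1)) = v} :=
      measurable_snd (MeasurableSet.of_discrete (s := {i : Fin M | (i : ℕ) / 2 ^ (J - (s + 1)) = v}))
    refine emp_dev Γ n hn (fun z : E × Fin M => (z.2 : ℕ) / 2 ^ (J - (s + 1)) = v) hAm _ _ ?_ (count_div_le J s v) (by positivity)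
    rw [Measure.real, hΓapp _ hAm]
    have : ∀ i : Fin M, μ.withDensity (H J i) ((fun x : E => (x, i)) ⁻¹' {z : E × Fin M | (z.2 : ℕ) / 2 ^ (J - (s + 1)) = v}) =
        ENNReal.ofReal (if (i : ℕ) / 2 ^ (J - (s + 1)) = v then (1 / M : ℝ) else 0) := by
      intro i
      by_cases h : (i : ℕ) / 2 ^ (J - (s + 1)) = v
      · have : (fun x : E => (x, i)) ⁻¹' {z : E × Fin M | (z.2 : ℕ) / 2 ^ (J - (s + 1)) = v} = Set.univ := by
          ext; simp [h]
        rw [this, withDensity_apply _ MeasurableSet.univ, Measure.restrict_univ, (hSP J).int i i.2, if_pos h,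
          one_div, ENNReal.ofReal_inv_of_pos (by exact_mod_cast hM0)]
        simp [hM]
      · have : (fun x : E => (x, i)) ⁻¹' {z : E × Fin M | (z.2 : ℕ) / 2 ^ (J - (s + 1)) = v} = ∅ := by
          ext; simp [h]
        simp [this, h]
    rw [Finset.sum_congr rfl fun i _ => this i, ← ENNReal.ofReal_sum_of_nonneg]
    · exact ENNReal.toReal_ofReal (Finset.sum_nonneg fun i _ => by split_ifs <;> positivity)
    · intro i _; split_ifs <;> positivity
  have hmid : ∫⁻ Z, ENNReal.ofReal (K * ∑ s ∈ Finset.range J, ∑ v ∈ Finset.range (2 ^ (s + 1)), L s v * |Wt s v Z - U s v|) ∂Pn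
      ≤ ENNReal.ofReal (K * ∑ s ∈ Finset.range J, Real.sqrt (2 ^ (s + 1) / n) * (2 ^ (p - 1) * (c s + c (s + 1)))) := by
    have e1 : ∀ Z, ENNReal.ofReal (K * ∑ s ∈ Finset.range J, ∑ v ∈ Finset.range (2 ^ (s + 1)), L s v * |Wt s v Z - U s v|) =
        ENNReal.ofReal K * ∑ s ∈ Finset.range J, ∑ v ∈ Finset.range (2 ^ (s + 1)), ENNReal.ofReal (L s v) * ENNReal.ofReal |Wt s v Z - U s v| := by
      intro Z
      rw [ENNReal.ofReal_mul hK0, ENNReal.ofReal_sum_of_nonneg (fun s _ => Finset.sum_nonneg fun v _ => mul_nonneg (hL0 s v) (abs_nonneg _))]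
      congr 1
      refine Finset.sum_congr rfl fun s _ => ?_
      rw [ENNReal.ofReal_sum_of_nonneg (fun v _ => mul_nonneg (hL0 s v) (abs_nonneg _))]
      exact Finset.sum_congr rfl fun v _ => ENNReal.ofReal_mul (hL0 s v)
    have hmeas : ∀ s v, Measurable fun Z => ENNReal.ofReal (L s v) * ENNReal.ofReal |Wt s v Z - U s v| := by
      intro s v
      have := hWm s v
      have h2 : Measurable fun Z => |Wt s v Z - U s v| := by
        have := (this.sub_const (U s v)).norm
        simpa [Real.norm_eq_abs] using this
      exact (h2.ennreal_ofReal).const_mul _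
    simp only [e1]
    rw [lintegral_const_mul _ (Finset.measurable_sum _ fun s _ => Finset.measurable_sum _ fun v _ => hmeas s v),
      lintegral_finsetSum _ (fun s _ => Finset.measurable_sum _ fun v _ => hmeas s v), ENNReal.ofReal_mul hK0,
      ENNReal.ofReal_sum_of_nonneg (fun s _ => by have := hc0 s; have := hc0 (s + 1); positivity)]
    gcongr with s hs
    rw [lintegral_finsetSum _ (fun v _ => hmeas s v)]
    have hsJ := Finset.mem_range.1 hs
    calc ∑ v ∈ Finset.range (2 ^ (s + 1)), ∫⁻ Z, ENNReal.ofReal (L s v) * ENNReal.ofReal |Wt s v Z - U s v| ∂Pn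
        ≤ ∑ v ∈ Finset.range (2 ^ (s + 1)), ENNReal.ofReal (L s v) * ENNReal.ofReal (Real.sqrt (2 ^ (J - (s + 1)) / 2 ^ J / n)) := by
          refine Finset.sum_le_sum fun v _ => ?_
          rw [lintegral_const_mul' _ _ ENNReal.ofReal_ne_top]
          gcongr
          exact hdev s hs v
      _ = ENNReal.ofReal ((∑ v ∈ Finset.range (2 ^ (s + 1)), L s v) * Real.sqrt (2 ^ (J - (s + 1)) / 2 ^ J / n)) := by
          rw [← Finset.sum_mul, ← ENNReal.ofReal_sum_of_nonneg (fun v _ => hL0 s v), ← ENNReal.ofReal_mul (Finset.sum_nonneg fun v _ => hL0 s v)]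
      _ ≤ _ := by
          refine ENNReal.ofReal_le_ofReal ?_
          refine (mul_le_mul_of_nonneg_right (hY s) (Real.sqrt_nonneg _)).trans (le_of_eq ?_)
          have e2 : (2 : ℝ) ^ (J - (s + 1)) / 2 ^ J / n = (2 ^ (s + 1) / n) / (2 ^ (s + 1)) ^ 2 := by
            have : (2 : ℝ) ^ J = 2 ^ (J - (s + 1)) * 2 ^ (s + 1) := by rw [← pow_add]; congr 1; omega
            rw [this]; field_simp
          rw [e2, Real.sqrt_div (by positivity), Real.sqrt_sq (by positivity)]
          field_simp
  rw [hmap]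
  refine (lintegral_map_le _ _).trans ?_
  refine (lintegral_mono hpath).trans ?_
  have hFt : ∀ t, Measurable fun Z : Fin n → E × Fin M => F (Z t) := fun t => hFm.comp (measurable_pi_apply t)
  have hsumF : Measurable fun Z : Fin n → E × Fin M => (n : ℝ≥0∞)⁻¹ * ∑ t, F (Z t) :=
    (Finset.measurable_sum _ fun t _ => hFt t).const_mul _
  have hsumFint : ∫⁻ Z, (n : ℝ≥0∞)⁻¹ * ∑ t, F (Z t) ∂Pn ≤ ENNReal.ofReal (c J) := by
    rw [lintegral_const_mul _ (Finset.measurable_sum _ fun t _ => hFt t),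
      lintegral_finsetSum _ (fun t _ => hFt t)]
    have : ∀ t : Fin n, ∫⁻ Z, F (Z t) ∂Pn = ∫⁻ z, F z ∂Γ := fun t =>
      (measurePreserving_eval (fun _ => Γ) t).lintegral_comp hFm
    simp only [this, Finset.sum_const, Finset.card_univ, Fintype.card_fin, nsmul_eq_mul]
    rw [← mul_assoc, ENNReal.inv_mul_cancel (by exact_mod_cast hn.ne') (by simp), one_mul]
    exact hFint
  have h3 : (3 : ℝ≥0∞) ^ (p - 1) = ENNReal.ofReal (3 ^ (p - 1)) := by
    rw [← ENNReal.ofReal_rpow_of_pos (by norm_num)]; norm_num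
  rw [lintegral_const_mul' _ _ (by rw [h3]; simp), lintegral_add_right _ measurable_const, lintegral_add_left hsumF,
    lintegral_const, measure_univ, mul_one, ENNReal.ofReal_mul (by positivity), h3]
  gcongr
  refine (add_le_add_left (add_le_add hsumFint hmid) _).trans (le_of_eq ?_)
  rw [← ENNReal.ofReal_add (hc0 J), ← ENNReal.ofReal_add _ (hc0 J)]
  · congr 1; ring
  · have : 0 ≤ ∑ s ∈ Finset.range J, Real.sqrt (2 ^ (s + 1) / n) * (2 ^ (p - 1) * (c s + c (s + 1))) :=
      Finset.sum_nonneg fun s _ => by have := hc0 s; have := hc0 (s + 1); positivity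
    have := mul_nonneg hK0 this
    linarith [hc0 J]
  · exact mul_nonneg hK0 (Finset.sum_nonneg fun s _ => by have := hc0 s; have := hc0 (s + 1); positivity)

end


open ProbabilityTheory in
lemma moments_sum {Ω : Type*} [MeasurableSpace Ω] (P : Measure Ω) [IsProbabilityMeasure P] {ι : Type*}
    (Y : ι → Ω → ℝ) (hI : iIndepFun Y P) (hm : ∀ i, Measurable (Y i)) (hb : ∀ i ω, |Y i ω| ≤ 1)
    (h0 : ∀ i, ∫ ω, Y i ω ∂P = 0) (σ2 : ℝ) (h2 : ∀ i, ∫ ω, Y i ω ^ 2 ∂P = σ2) (s : Finset ι) :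
    (∫ ω, (∑ i ∈ s, Y i ω) ∂P = 0) ∧ (∫ ω, (∑ i ∈ s, Y i ω) ^ 2 ∂P = s.card * σ2) ∧
    (∫ ω, (∑ i ∈ s, Y i ω) ^ 4 ∂P ≤ 3 * (s.card : ℝ) ^ 2) := by
  classical
  induction s using Finset.induction_on with
  | empty => simp
  | insert i s hi ih =>
    obtain ⟨ih1, ih2, ih4⟩ := ih
    set S : Ω → ℝ := fun ω => ∑ j ∈ s, Y j ω with hS
    have hSm : Measurable S := Finset.measurable_sum _ fun j _ => hm j
    have hSb : ∀ ω, |S ω| ≤ s.card := by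
      intro ω
      refine (Finset.abs_sum_le_sum_abs _ _).trans ?_
      refine (Finset.sum_le_sum fun j _ => hb j ω).trans ?_
      simp
    have hInd : IndepFun S (Y i) P := by
      have := hI.indepFun_finsetSum_of_notMem hm hi
      convert this using 1
      ext ω; simp [hS]
    have hInt : ∀ k l : ℕ, Integrable (fun ω => S ω ^ k * Y i ω ^ l) P := by
      intro k l
      refine Integrable.of_bound ((hSm.pow_const k).mul ((hm i).pow_const l)).aestronglyMeasurable
        ((s.card : ℝ) ^ k * 1 ^ l) (Filter.Eventually.of_forall fun ω => ?_)
      rw [norm_mul, norm_pow, norm_pow, Real.norm_eq_abs, Real.norm_eq_abs]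
      gcongr
      · exact hSb ω
      · exact hb i ω
    have hmul : ∀ k l : ℕ, ∫ ω, S ω ^ k * Y i ω ^ l ∂P = (∫ ω, S ω ^ k ∂P) * ∫ ω, Y i ω ^ l ∂P := by
      intro k l
      have := hInd.comp (φ := fun x : ℝ => x ^ k) (ψ := fun x : ℝ => x ^ l) (by fun_prop) (by fun_prop)
      exact this.integral_fun_mul_eq_mul_integral (hSm.pow_const k).aestronglyMeasurable
        ((hm i).pow_const l).aestronglyMeasurable
    have hσ1 : σ2 ≤ 1 := by
      rw [← h2 i]
      calc ∫ ω, Y i ω ^ 2 ∂P ≤ ∫ _, (1 : ℝ) ∂P := by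
            refine integral_mono (by simpa using hInt 0 2) (integrable_const _) fun ω => ?_
            have := hb i ω
            show Y i ω ^ 2 ≤ 1
            rwa [sq_le_one_iff_abs_le_one]
        _ = 1 := by simp
    have hY4 : ∫ ω, Y i ω ^ 4 ∂P ≤ 1 := by
      calc ∫ ω, Y i ω ^ 4 ∂P ≤ ∫ _, (1 : ℝ) ∂P := by
            refine integral_mono (by simpa using hInt 0 4) (integrable_const _) fun ω => ?_
            have := hb i ω
            show Y i ω ^ 4 ≤ 1
            rw [← Even.pow_abs (by decide)]
            exact pow_le_one₀ (abs_nonneg _) this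
        _ = 1 := by simp
    have hins : ∀ ω, ∑ j ∈ insert i s, Y j ω = Y i ω + S ω := fun ω => by
      rw [Finset.sum_insert hi]
    have i1 : ∫ ω, S ω ^ 1 ∂P = 0 := by simpa using ih1
    have j1 : ∫ ω, Y i ω ^ 1 ∂P = 0 := by simpa using h0 i
    have hσ0 : 0 ≤ σ2 := by rw [← h2 i]; exact integral_nonneg fun ω => sq_nonneg _
    simp only [hins, Finset.card_insert_of_notMem hi, Nat.cast_add, Nat.cast_one]
    refine ⟨?_, ?_, ?_⟩
    · rw [integral_add (by simpa using hInt 0 1) (by simpa using hInt 1 0), h0 i]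
      simpa using ih1
    · have e : ∀ ω, (Y i ω + S ω) ^ 2 = S ω ^ 0 * Y i ω ^ 2 + 2 * (S ω ^ 1 * Y i ω ^ 1) + S ω ^ 2 * Y i ω ^ 0 := by
        intro ω; ring
      simp only [e]
      rw [integral_add ((hInt 0 2).fun_add ((hInt 1 1).const_mul 2)) (hInt 2 0),
        integral_add (hInt 0 2) ((hInt 1 1).const_mul 2), integral_const_mul, hmul, hmul, hmul, i1, ih2, h2 i]
      simp
      ring
    · have e : ∀ ω, (Y i ω + S ω) ^ 4 = S ω ^ 0 * Y i ω ^ 4 + 4 * (S ω ^ 1 * Y i ω ^ 3) + 6 * (S ω ^ 2 * Y i ω ^ 2)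
          + 4 * (S ω ^ 3 * Y i ω ^ 1) + S ω ^ 4 * Y i ω ^ 0 := by
        intro ω; ring
      simp only [e]
      rw [integral_add ((((hInt 0 4).fun_add ((hInt 1 3).const_mul 4)).fun_add ((hInt 2 2).const_mul 6)).fun_add ((hInt 3 1).const_mul 4)) (hInt 4 0),
        integral_add (((hInt 0 4).fun_add ((hInt 1 3).const_mul 4)).fun_add ((hInt 2 2).const_mul 6)) ((hInt 3 1).const_mul 4),
        integral_add ((hInt 0 4).fun_add ((hInt 1 3).const_mul 4)) ((hInt 2 2).const_mul 6),
        integral_add (hInt 0 4) ((hInt 1 3).const_mul 4), integral_const_mul, integral_const_mul, integral_const_mul,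
        hmul, hmul, hmul, hmul, hmul, i1, j1, ih2, h2 i]
      simp only [pow_zero, integral_const, probReal_univ, smul_eq_mul, mul_one, one_mul, zero_mul, mul_zero, add_zero]
      have hc : (0 : ℝ) ≤ s.card := by positivity
      have : (s.card : ℝ) * σ2 * σ2 ≤ s.card := by
        have : σ2 * σ2 ≤ 1 := by nlinarith
        nlinarith
      nlinarith

open ProbabilityTheory in
lemma abs_sum_lower {Ω : Type*} [MeasurableSpace Ω] (P : Measure Ω) [IsProbabilityMeasure P]
    (g : Ω → ℝ) (hg : Measurable g) (hb : ∀ x, |g x| ≤ 1) (h0 : ∫ x, g x ∂P = 0) (σ : ℝ) (hσ : 0 < σ)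
    (h2 : ∫ x, g x ^ 2 ∂P = σ ^ 2) (n : ℕ) (hn : 0 < n) :
    ENNReal.ofReal (σ ^ 3 / 4 * Real.sqrt n) ≤
      ∫⁻ Z, ENNReal.ofReal |∑ t, g (Z t)| ∂(Measure.pi fun _ : Fin n => P) := by
  have hnR : (0 : ℝ) < n := by exact_mod_cast hn
  set Pn := Measure.pi fun _ : Fin n => P
  have hgt : ∀ t : Fin n, Measurable fun Z : Fin n → Ω => g (Z t) := fun t => hg.comp (measurable_pi_apply t)
  obtain ⟨-, m2, m4⟩ := moments_sum Pn (fun (t : Fin n) Z => g (Z t))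
    (iIndepFun_pi (X := fun _ => g) fun _ => hg.aemeasurable) hgt (fun t Z => hb _)
    (fun t => by
      rw [← h0]
      exact integral_comp_eval (μ := fun _ => P) (i := t) hg.aestronglyMeasurable) (σ ^ 2)
    (fun t => by
      rw [← h2]
      exact integral_comp_eval (μ := fun _ => P) (i := t) (f := fun x => g x ^ 2) (hg.pow_const 2).aestronglyMeasurable)
    Finset.univ
  simp only [Finset.card_univ, Fintype.card_fin] at m2 m4
  set S : (Fin n → Ω) → ℝ := fun Z => ∑ t, g (Z t) with hS
  have hSm : Measurable S := Finset.measurable_sum _ fun t _ => hgt t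
  have hSb : ∀ Z, |S Z| ≤ n := by
    intro Z
    refine (Finset.abs_sum_le_sum_abs _ _).trans ?_
    refine (Finset.sum_le_sum fun j _ => hb (Z j)).trans ?_
    simp
  have hInt : ∀ k : ℕ, Integrable (fun Z => |S Z| ^ k) Pn := by
    intro k
    refine Integrable.of_bound (hSm.abs.pow_const k).aestronglyMeasurable ((n : ℝ) ^ k) (Filter.Eventually.of_forall fun Z => ?_)
    rw [norm_pow, Real.norm_eq_abs, abs_abs]
    gcongr
    exact hSb Z
  have hi1 : Integrable (fun Z => |S Z|) Pn := by simpa using hInt 1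
  rw [← ofReal_integral_eq_lintegral_ofReal hi1 (Filter.Eventually.of_forall fun Z => abs_nonneg _)]
  refine ENNReal.ofReal_le_ofReal ?_
  set r := Real.sqrt n with hr
  have hr0 : 0 < r := Real.sqrt_pos.2 hnR
  have hrr : r ^ 2 = n := Real.sq_sqrt hnR.le
  set l := σ / r with hl
  have hl0 : 0 < l := by positivity
  have key : l ^ 2 * ∫ Z, S Z ^ 2 ∂Pn - l ^ 4 / 4 * ∫ Z, S Z ^ 4 ∂Pn ≤ l * ∫ Z, |S Z| ∂Pn := by
    have hi2 : Integrable (fun Z => S Z ^ 2) Pn := by simpa using hInt 2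
    have hi4 : Integrable (fun Z => S Z ^ 4) Pn := by
      have := hInt 4
      simpa only [Even.pow_abs (show Even 4 by decide)] using this
    rw [← integral_const_mul, ← integral_const_mul, ← integral_const_mul,
      ← integral_sub (hi2.const_mul _) (hi4.const_mul _)]
    refine integral_mono ((hi2.const_mul _).sub (hi4.const_mul _)) (hi1.const_mul _) fun Z => ?_
    show l ^ 2 * S Z ^ 2 - l ^ 4 / 4 * S Z ^ 4 ≤ l * |S Z|
    rw [← Even.pow_abs (show Even 4 by decide) (S Z), ← sq_abs (S Z)]
    have hu : 0 ≤ l * |S Z| := by positivity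
    generalize hu' : l * |S Z| = u at hu
    have e : l ^ 2 * |S Z| ^ 2 - l ^ 4 / 4 * |S Z| ^ 4 = u ^ 2 - u ^ 4 / 4 := by rw [← hu']; ring
    rw [e]
    have : 0 ≤ 1 - u + u ^ 3 / 4 := by nlinarith [mul_nonneg hu (sq_nonneg (u - 1)), sq_nonneg (u - 1), sq_nonneg (u - 6/5), mul_nonneg hu (sq_nonneg (u - 6/5))]
    nlinarith
  rw [m2] at key
  have h3 : l ^ 4 / 4 * ∫ Z, S Z ^ 4 ∂Pn ≤ l ^ 4 / 4 * (3 * n ^ 2) := by gcongr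
  have e1 : l ^ 2 * (n * σ ^ 2) = σ ^ 4 := by rw [hl, ← hrr]; field_simp
  have e2 : l ^ 4 / 4 * (3 * (n : ℝ) ^ 2) = 3 * σ ^ 4 / 4 := by rw [hl, ← hrr]; field_simp
  have h5 : l * (σ ^ 3 / 4 * r) ≤ l * ∫ Z, |S Z| ∂Pn := by
    have : l * (σ ^ 3 / 4 * r) = σ ^ 4 / 4 := by rw [hl]; field_simp
    rw [this]; linarith
  exact le_of_mul_le_mul_left h5 hl0


section
variable {E : Type*} [MetricSpace E] [TopologicalSpace.SeparableSpace E]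
    [MeasurableSpace E] [BorelSpace E]

lemma Wp_swap_le {p : ℝ} (μ ν : Measure E) : Wp p μ ν ≤ Wp p ν μ := by
  haveI := UniformSpace.secondCountable_of_separable E
  refine le_iInf₂ fun γ hγ => ?_
  have hm : Measurable fun z : E × E => edist z.1 z.2 ^ p := by fun_prop
  refine (iInf₂_le (γ.map Prod.swap) ?_).trans (le_of_eq ?_)
  · refine ⟨?_, ?_⟩
    · rw [Measure.map_map measurable_fst measurable_swap]; exact hγ.2
    · rw [Measure.map_map measurable_snd measurable_swap]; exact hγ.1
  · rw [lintegral_map hm measurable_swap]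
    simp only [Prod.fst_swap, Prod.snd_swap, edist_comm]

instance sampleMeasure_prob (μ : Measure E) [IsProbabilityMeasure μ] (n : ℕ) :
    IsProbabilityMeasure (sampleMeasure μ n) := by unfold sampleMeasure; infer_instance

lemma quant_le_exp {p : ℝ} (hp : 1 ≤ p) (μ : Measure E) [IsProbabilityMeasure μ] (n : ℕ) :
    unifQuantErr p n μ ≤ expWpPow p μ n := by
  have hp0 : 0 < p := by linarith
  unfold expWpPow
  calc unifQuantErr p n μ = (∫⁻ _, unifQuantErr p n μ ^ p ∂(sampleMeasure μ n)) ^ (1 / p) := by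
        rw [lintegral_const, measure_univ, mul_one, ← ENNReal.rpow_mul, mul_one_div_cancel hp0.ne', ENNReal.rpow_one]
    _ ≤ _ := by
        gcongr with X
        exact (iInf_le _ X).trans (Wp_swap_le _ _)

lemma integral_emp (n : ℕ) (X : Fin n → E) (f : E → ℝ) (hf : Measurable f) :
    ∫ x, f x ∂(empiricalMeasure n X) = (n : ℝ)⁻¹ * ∑ t, f (X t) := by
  unfold empiricalMeasure
  rw [integral_smul_measure, integral_finsetSum_measure]
  · simp [integral_dirac]
  · intro i _
    exact integrable_dirac (by simp)

lemma Wp_lower {p : ℝ} (hp : 1 ≤ p) (μ ν : Measure E) [IsProbabilityMeasure μ]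
    (f : E → ℝ) (hf : LipschitzWith 1 f) (hb : ∀ x, |f x| ≤ 1) :
    ENNReal.ofReal |∫ x, f x ∂μ - ∫ x, f x ∂ν| ≤ Wp p μ ν := by
  haveI := UniformSpace.secondCountable_of_separable E
  have hp0 : 0 < p := by linarith
  have hfm : Measurable f := hf.continuous.measurable
  refine le_iInf₂ fun γ hγ => ?_
  haveI : IsProbabilityMeasure γ := by
    refine ⟨?_⟩
    have := congrArg (fun m => m Set.univ) hγ.1
    simp only [Measure.map_apply measurable_fst MeasurableSet.univ, Set.preimage_univ, measure_univ] at this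
    exact this
  have h1 : Integrable (fun z : E × E => f z.1) γ :=
    Integrable.of_bound (hfm.comp measurable_fst).aestronglyMeasurable 1 (Filter.Eventually.of_forall fun z => hb _)
  have h2 : Integrable (fun z : E × E => f z.2) γ :=
    Integrable.of_bound (hfm.comp measurable_snd).aestronglyMeasurable 1 (Filter.Eventually.of_forall fun z => hb _)
  have e : ∫ x, f x ∂μ - ∫ x, f x ∂ν = ∫ z, (f z.1 - f z.2) ∂γ := by
    rw [integral_sub h1 h2, ← hγ.1, ← hγ.2, integral_map measurable_fst.aemeasurable hfm.aestronglyMeasurable,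
      integral_map measurable_snd.aemeasurable hfm.aestronglyMeasurable]
  rw [e, ← Real.enorm_eq_ofReal_abs]
  calc ‖∫ z, (f z.1 - f z.2) ∂γ‖ₑ ≤ ∫⁻ z, ‖f z.1 - f z.2‖ₑ ∂γ := enorm_integral_le_lintegral_enorm _
    _ = eLpNorm' (fun z : E × E => f z.1 - f z.2) 1 γ := by simp [eLpNorm']
    _ ≤ eLpNorm' (fun z : E × E => f z.1 - f z.2) p γ :=
        eLpNorm'_le_eLpNorm'_of_exponent_le (by norm_num) hp γ (h1.sub h2).aestronglyMeasurable
    _ = (∫⁻ z, ‖f z.1 - f z.2‖ₑ ^ p ∂γ) ^ (1 / p) := rfl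
    _ ≤ _ := by
        gcongr with z
        rw [← edist_eq_enorm_sub]
        simpa using hf z.1 z.2

lemma exists_nonconst (μ : Measure E) [IsProbabilityMeasure μ]
    (hnotdirac : ∀ x : E, μ ≠ Measure.dirac x) :
    ∃ f : E → ℝ, LipschitzWith 1 f ∧ (∀ x, 0 ≤ f x ∧ f x ≤ 1) ∧
      0 < ∫ x, (f x - ∫ y, f y ∂μ) ^ 2 ∂μ := by
  haveI := UniformSpace.secondCountable_of_separable E
  obtain ⟨x0, hx0⟩ := Measure.nonempty_support (IsProbabilityMeasure.ne_zero μ)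
  rw [Measure.mem_support_iff_forall] at hx0
  set f : E → ℝ := fun x => min (dist x x0) 1 with hf
  have hL : LipschitzWith 1 f := by
    have := (LipschitzWith.dist_left x0).min_const 1
    simpa [hf] using this
  have hb : ∀ x, 0 ≤ f x ∧ f x ≤ 1 := fun x => ⟨le_min dist_nonneg zero_le_one, min_le_right _ _⟩
  refine ⟨f, hL, hb, ?_⟩
  have hfm : Measurable f := hL.continuous.measurable
  set c := ∫ y, f y ∂μ
  by_contra hcon
  have h0 : ∫ x, (f x - c) ^ 2 ∂μ = 0 := le_antisymm (not_lt.1 hcon) (integral_nonneg fun x => sq_nonneg _)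
  have hi : Integrable (fun x => (f x - c) ^ 2) μ := by
    refine Integrable.of_bound ((hfm.sub_const c).pow_const 2).aestronglyMeasurable ((1 + |c|) ^ 2) (Filter.Eventually.of_forall fun x => ?_)
    rw [norm_pow, Real.norm_eq_abs]
    gcongr
    refine (abs_sub _ _).trans ?_
    gcongr
    rw [abs_of_nonneg (hb x).1]; exact (hb x).2
  rw [integral_eq_zero_iff_of_nonneg (fun x => sq_nonneg _) hi] at h0
  have hae : ∀ᵐ x ∂μ, f x = c := by
    filter_upwards [h0] with x hx
    have : (f x - c) ^ 2 = 0 := hx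
    have := pow_eq_zero_iff (two_ne_zero) |>.1 this
    linarith
  have hc0 : 0 ≤ c := integral_nonneg fun x => (hb x).1
  have hc : c = 0 := by
    by_contra hne
    have hpos : 0 < c := lt_of_le_of_ne hc0 (Ne.symm hne)
    have hB := hx0 (Metric.ball x0 c) (Metric.ball_mem_nhds _ hpos)
    have : μ (Metric.ball x0 c) = 0 := by
      refine measure_mono_null (fun x hx => ?_) hae
      intro (h : f x = c)
      have h1 : f x ≤ dist x x0 := min_le_left _ _
      have h2 : dist x x0 < c := hx
      linarith
    exact hB.ne' this
  apply hnotdirac x0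
  have hae2 : (fun x => x) =ᵐ[μ] fun _ => x0 := by
    filter_upwards [hae] with x hx
    rw [hc] at hx
    have : dist x x0 = 0 := by
      by_contra hne
      have : 0 < dist x x0 := lt_of_le_of_ne dist_nonneg (Ne.symm hne)
      have : 0 < f x := lt_min this one_pos
      linarith
    exact dist_eq_zero.1 this
  calc μ = μ.map (fun x => x) := by simp
    _ = μ.map (fun _ => x0) := Measure.map_congr hae2
    _ = Measure.dirac x0 := by simp

lemma exp_lower {p : ℝ} (hp : 1 ≤ p) (μ : Measure E) [IsProbabilityMeasure μ]
    (hnotdirac : ∀ x : E, μ ≠ Measure.dirac x) :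
    ∃ c : ℝ, 0 < c ∧ ∀ n : ℕ, 0 < n → ENNReal.ofReal (c * (n : ℝ) ^ (-(1 / 2) : ℝ)) ≤ expWpPow p μ n := by
  obtain ⟨f, hL, hb, hv⟩ := exists_nonconst μ hnotdirac
  have hfm : Measurable f := hL.continuous.measurable
  set m := ∫ y, f y ∂μ with hm
  set v := ∫ x, (f x - m) ^ 2 ∂μ with hvdef
  have hp0 : 0 < p := by linarith
  have hfi : Integrable f μ := Integrable.of_bound hfm.aestronglyMeasurable 1 (Filter.Eventually.of_forall fun x => by
    rw [Real.norm_eq_abs, abs_of_nonneg (hb x).1]; exact (hb x).2)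
  have hm0 : 0 ≤ m := integral_nonneg fun x => (hb x).1
  have hm1 : m ≤ 1 := by
    calc m ≤ ∫ _, (1 : ℝ) ∂μ := integral_mono hfi (integrable_const _) fun x => (hb x).2
      _ = 1 := by simp
  have hσ : 0 < Real.sqrt v := Real.sqrt_pos.2 hv
  refine ⟨Real.sqrt v ^ 3 / 4, by positivity, fun n hn => ?_⟩
  have hnR : (0 : ℝ) < n := by exact_mod_cast hn
  have hfg : ∀ x, |f x| ≤ 1 := fun x => by rw [abs_of_nonneg (hb x).1]; exact (hb x).2
  have key := abs_sum_lower μ (fun x => f x - m) (hfm.sub_const m)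
    (fun x => by rw [abs_le]; constructor <;> linarith [(hb x).1, (hb x).2])
    (by rw [integral_sub hfi (integrable_const _)]; simp [hm]) (Real.sqrt v) hσ
    (by rw [Real.sq_sqrt hv.le]) n hn
  set S : (Fin n → E) → ℝ := fun X => ∑ t, (f (X t) - m) with hS
  have hSm : Measurable S := Finset.measurable_sum _ fun t _ => (hfm.comp (measurable_pi_apply t)).sub_const m
  have hemp : ∀ X : Fin n → E, IsProbabilityMeasure (empiricalMeasure n X) := by
    intro X
    refine ⟨?_⟩
    simp only [empiricalMeasure, Measure.smul_apply, Measure.finsetSum_apply, measure_univ, Finset.sum_const,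
      Finset.card_univ, Fintype.card_fin, nsmul_eq_mul, mul_one, smul_eq_mul]
    exact ENNReal.inv_mul_cancel (by exact_mod_cast hn.ne') (by simp)
  have hpt : ∀ X : Fin n → E, ‖(n : ℝ)⁻¹ * S X‖ₑ ≤ Wp p (empiricalMeasure n X) μ := by
    intro X
    haveI := hemp X
    refine le_trans (le_of_eq ?_) (Wp_lower hp (empiricalMeasure n X) μ f hL hfg)
    rw [integral_emp n X f hfm, Real.enorm_eq_ofReal_abs, hS]
    congr 2
    simp only [Finset.sum_sub_distrib, Finset.sum_const, Finset.card_univ, Fintype.card_fin, nsmul_eq_mul, mul_sub]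
    rw [inv_mul_cancel_left₀ hnR.ne']
  calc ENNReal.ofReal (Real.sqrt v ^ 3 / 4 * (n : ℝ) ^ (-(1 / 2) : ℝ))
      = ENNReal.ofReal (n : ℝ)⁻¹ * ENNReal.ofReal (Real.sqrt v ^ 3 / 4 * Real.sqrt n) := by
        rw [← ENNReal.ofReal_mul (by positivity)]
        congr 1
        rw [Real.rpow_neg hnR.le, ← Real.sqrt_eq_rpow]
        have : (n : ℝ) = Real.sqrt n * Real.sqrt n := (Real.mul_self_sqrt hnR.le).symm
        have hs : 0 < Real.sqrt n := Real.sqrt_pos.2 hnR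
        have e : (n : ℝ)⁻¹ = (Real.sqrt n)⁻¹ * (Real.sqrt n)⁻¹ := by rw [← mul_inv, ← this]
        rw [e]; field_simp
    _ ≤ ENNReal.ofReal (n : ℝ)⁻¹ * ∫⁻ Z, ENNReal.ofReal |S Z| ∂(sampleMeasure μ n) := by gcongr; exact key
    _ = ∫⁻ Z, ‖(n : ℝ)⁻¹ * S Z‖ₑ ∂(sampleMeasure μ n) := by
        rw [← lintegral_const_mul' _ _ ENNReal.ofReal_ne_top]
        refine lintegral_congr fun Z => ?_
        rw [Real.enorm_eq_ofReal_abs, abs_mul, abs_of_pos (inv_pos.2 hnR), ENNReal.ofReal_mul (by positivity)]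
    _ = eLpNorm' (fun Z => (n : ℝ)⁻¹ * S Z) 1 (sampleMeasure μ n) := by simp only [eLpNorm', ENNReal.rpow_one, div_one]
    _ ≤ eLpNorm' (fun Z => (n : ℝ)⁻¹ * S Z) p (sampleMeasure μ n) :=
        eLpNorm'_le_eLpNorm'_of_exponent_le (by norm_num) hp _ (hSm.const_mul _).aestronglyMeasurable
    _ = (∫⁻ Z, ‖(n : ℝ)⁻¹ * S Z‖ₑ ^ p ∂(sampleMeasure μ n)) ^ (1 / p) := rfl
    _ ≤ _ := by
        unfold expWpPow
        gcongr with Z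
        exact hpt Z

end


lemma log_ofReal_rpow {n : ℕ} (hn : 2 ≤ n) (β : ℝ) :
    ENNReal.log (ENNReal.ofReal ((n : ℝ) ^ β)) = ((Real.log n : ℝ) : EReal) * (β : EReal) := by
  have hnR : (0 : ℝ) < n := by positivity
  rw [ENNReal.log_ofReal_of_pos (Real.rpow_pos_of_pos hnR _), Real.log_rpow hnR, mul_comm, EReal.coe_mul]

lemma log_le_iff {n : ℕ} (hn : 2 ≤ n) (x : ℝ≥0∞) (β : ℝ) :
    ENNReal.log x * (((Real.log n)⁻¹ : ℝ) : EReal) ≤ (β : EReal) ↔ x ≤ ENNReal.ofReal ((n : ℝ) ^ β) := by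
  have hl : 0 < Real.log n := Real.log_pos (by exact_mod_cast hn)
  rw [EReal.coe_inv, ← div_eq_mul_inv, EReal.div_le_iff_le_mul (by exact_mod_cast hl) (EReal.coe_ne_top _),
    ← log_ofReal_rpow hn, ENNReal.log_le_log_iff]

lemma le_log_iff {n : ℕ} (hn : 2 ≤ n) (x : ℝ≥0∞) (β : ℝ) :
    (β : EReal) ≤ ENNReal.log x * (((Real.log n)⁻¹ : ℝ) : EReal) ↔ ENNReal.ofReal ((n : ℝ) ^ β) ≤ x := by
  have hl : 0 < Real.log n := Real.log_pos (by exact_mod_cast hn)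
  rw [EReal.coe_inv, ← div_eq_mul_inv, EReal.le_div_iff_mul_le (by exact_mod_cast hl) (EReal.coe_ne_top _),
    mul_comm, ← log_ofReal_rpow hn, ENNReal.log_le_log_iff]

/-- The final deterministic estimate. -/
lemma final_estimate {p : ℝ} (hp : 1 ≤ p) {q C : ℝ} (hC : 0 < C) (hq : -(1 / 2) ≤ q) {n : ℕ} (hn : 0 < n) :
    3 ^ (p - 1) * (2 * (C * ((2 : ℝ) ^ Nat.log 2 n) ^ q) + (Nat.log 2 n : ℝ) ^ (p - 1) * 2 ^ (p - 1) *
        ∑ s ∈ Finset.range (Nat.log 2 n), Real.sqrt (2 ^ (s + 1) / n) *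
          (2 ^ (p - 1) * (C * ((2 : ℝ) ^ s) ^ q + C * ((2 : ℝ) ^ (s + 1)) ^ q))) ≤
      3 ^ (p - 1) * C * (4 + 2 ^ (p - 1) * 2 ^ (p - 1) * 3) * ((Nat.log 2 n : ℝ) + 1) ^ p * (n : ℝ) ^ q := by
  set J := Nat.log 2 n with hJ
  have hnR : (0 : ℝ) < n := by exact_mod_cast hn
  have hJn : (2 : ℝ) ^ J ≤ n := by exact_mod_cast Nat.pow_log_le_self 2 hn.ne'
  have hnJ : (n : ℝ) < 2 ^ (J + 1) := by exact_mod_cast Nat.lt_pow_succ_log_self (by norm_num) n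
  have hnq : 0 < (n : ℝ) ^ q := Real.rpow_pos_of_pos hnR _
  have hA : ((2 : ℝ) ^ J) ^ q ≤ 2 * (n : ℝ) ^ q := by
    rcases le_or_gt 0 q with h | h
    · calc ((2 : ℝ) ^ J) ^ q ≤ (n : ℝ) ^ q := Real.rpow_le_rpow (by positivity) hJn h
        _ ≤ _ := by linarith
    · have h1 : (n : ℝ) / 2 ≤ 2 ^ J := by rw [pow_succ] at hnJ; linarith
      calc ((2 : ℝ) ^ J) ^ q ≤ ((n : ℝ) / 2) ^ q := Real.rpow_le_rpow_of_nonpos (by positivity) h1 h.le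
        _ = (2 : ℝ) ^ (-q) * (n : ℝ) ^ q := by
            rw [Real.div_rpow hnR.le (by norm_num), Real.rpow_neg (by norm_num)]; field_simp
        _ ≤ 2 * (n : ℝ) ^ q := by
            gcongr
            calc (2 : ℝ) ^ (-q) ≤ 2 ^ (1 : ℝ) := Real.rpow_le_rpow_of_exponent_le (by norm_num) (by linarith)
              _ = 2 := by simp
  have hbase : ∀ x : ℝ, 0 < x → x ≤ n → Real.sqrt (x / n) * x ^ q ≤ (n : ℝ) ^ q := by
    intro x hx hxn
    rw [Real.sqrt_eq_rpow, Real.div_rpow hx.le hnR.le, div_mul_eq_mul_div, ← Real.rpow_add hx,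
      div_le_iff₀ (by positivity), ← Real.rpow_add hnR, add_comm q]
    exact Real.rpow_le_rpow hx.le hxn (by linarith)
  have hterm : ∀ s ∈ Finset.range J, Real.sqrt (2 ^ (s + 1) / n) *
          (2 ^ (p - 1) * (C * ((2 : ℝ) ^ s) ^ q + C * ((2 : ℝ) ^ (s + 1)) ^ q)) ≤ 2 ^ (p - 1) * C * 3 * (n : ℝ) ^ q := by
    intro s hs
    have hsJ := Finset.mem_range.1 hs
    have h1 : (2 : ℝ) ^ (s + 1) ≤ n := le_trans (pow_le_pow_right₀ (by norm_num) hsJ) hJn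
    have h2 : (2 : ℝ) ^ s ≤ n := le_trans (pow_le_pow_right₀ (by norm_num) (by omega)) h1
    have b1 := hbase _ (by positivity) h1
    have b2 := hbase _ (by positivity) h2
    have e : Real.sqrt ((2 : ℝ) ^ (s + 1) / n) = Real.sqrt 2 * Real.sqrt (2 ^ s / n) := by
      rw [← Real.sqrt_mul (by norm_num)]; congr 1; rw [pow_succ]; ring
    have hs2 : Real.sqrt 2 ≤ 2 := by
      rw [Real.sqrt_le_left (by norm_num)]; norm_num
    have b3 : Real.sqrt ((2 : ℝ) ^ (s + 1) / n) * ((2 : ℝ) ^ s) ^ q ≤ 2 * (n : ℝ) ^ q := by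
      rw [e, mul_assoc]
      exact mul_le_mul hs2 b2 (by positivity) (by norm_num)
    calc _ = 2 ^ (p - 1) * C * (Real.sqrt ((2 : ℝ) ^ (s + 1) / n) * ((2 : ℝ) ^ s) ^ q + Real.sqrt ((2 : ℝ) ^ (s + 1) / n) * ((2 : ℝ) ^ (s + 1)) ^ q) := by ring
      _ ≤ 2 ^ (p - 1) * C * (2 * (n : ℝ) ^ q + (n : ℝ) ^ q) := by gcongr
      _ = _ := by ring
  have hsum := Finset.sum_le_sum hterm
  rw [Finset.sum_const, Finset.card_range, nsmul_eq_mul] at hsum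
  have hJ1 : (J : ℝ) ^ (p - 1) * J ≤ ((J : ℝ) + 1) ^ p := by
    calc (J : ℝ) ^ (p - 1) * J ≤ ((J : ℝ) + 1) ^ (p - 1) * (J + 1) := by
          have h1 : (J : ℝ) ≤ J + 1 := by linarith
          have h2 : 0 ≤ p - 1 := by linarith
          exact mul_le_mul (Real.rpow_le_rpow (by positivity) h1 h2) h1 (by positivity) (by positivity)
      _ = ((J : ℝ) + 1) ^ p := by
          rw [← Real.rpow_add_one (by positivity)]; congr 1; ring
  have hJ2 : 1 ≤ ((J : ℝ) + 1) ^ p := Real.one_le_rpow (by linarith [show (0 : ℝ) ≤ J by positivity]) (by linarith)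
  calc _ ≤ 3 ^ (p - 1) * (2 * (C * (2 * (n : ℝ) ^ q)) + (J : ℝ) ^ (p - 1) * 2 ^ (p - 1) * (J * (2 ^ (p - 1) * C * 3 * (n : ℝ) ^ q))) := by
        gcongr
    _ = 3 ^ (p - 1) * C * (n : ℝ) ^ q * (4 * 1 + 2 ^ (p - 1) * 2 ^ (p - 1) * 3 * ((J : ℝ) ^ (p - 1) * J)) := by ring
    _ ≤ 3 ^ (p - 1) * C * (n : ℝ) ^ q * (4 * ((J : ℝ) + 1) ^ p + 2 ^ (p - 1) * 2 ^ (p - 1) * 3 * ((J : ℝ) + 1) ^ p) := by gcongr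
    _ = _ := by ring

lemma eventually_log_le {p δ K : ℝ} (hp : 1 ≤ p) (hδ : 0 < δ) (hK : 0 < K) :
    ∀ᶠ n : ℕ in atTop, K * ((Nat.log 2 n : ℝ) + 1) ^ p ≤ (n : ℝ) ^ δ := by
  have h := (isLittleO_log_rpow_rpow_atTop p hδ).bound (c := 1 / (K * 4 ^ p)) (by positivity)
  have h' := tendsto_natCast_atTop_atTop (R := ℝ) |>.eventually h
  filter_upwards [h', eventually_ge_atTop 2] with n hn hn2
  have hnR : (2 : ℝ) ≤ n := by exact_mod_cast hn2
  have hl2 : (0.69 : ℝ) < Real.log 2 := by linarith [Real.log_two_gt_d9]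
  have hl : Real.log 2 ≤ Real.log n := Real.log_le_log (by norm_num) hnR
  have hJ : (Nat.log 2 n : ℝ) * Real.log 2 ≤ Real.log n := by
    rw [← Real.log_pow]
    refine Real.log_le_log (by positivity) ?_
    exact_mod_cast Nat.pow_log_le_self 2 (by omega)
  have hJ' : (Nat.log 2 n : ℝ) + 1 ≤ 4 * Real.log n := by
    have : (0 : ℝ) ≤ Nat.log 2 n := by positivity
    nlinarith
  have hl0 : 0 ≤ Real.log n := by linarith
  rw [Real.norm_of_nonneg (by positivity), Real.norm_of_nonneg (by positivity), one_div, inv_mul_eq_div,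
    le_div_iff₀ (by positivity)] at hn
  calc K * ((Nat.log 2 n : ℝ) + 1) ^ p ≤ K * (4 * Real.log n) ^ p := by
        gcongr
    _ = Real.log n ^ p * (K * 4 ^ p) := by rw [Real.mul_rpow (by norm_num) hl0]; ring
    _ ≤ _ := hn

section
variable {E : Type*} [MetricSpace E] [TopologicalSpace.SeparableSpace E]
    [MeasurableSpace E] [BorelSpace E]

lemma quant_bdd {p : ℝ} (μ : Measure E) [IsProbabilityMeasure μ] (x0 : E)
    {k : ℕ} (hk : 0 < k) : unifQuantErr p k μ ≤ (∫⁻ x, edist x x0 ^ p ∂μ) ^ (1 / p) := by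
  have := UniformSpace.secondCountable_of_separable E
  have hm : Measurable fun z : E × E => edist z.1 z.2 ^ p := by fun_prop
  have hmk : Measurable fun x : E => (x, x0) := measurable_prodMk_right
  refine (iInf_le _ (fun _ => x0)).trans ((iInf₂_le (μ.map fun x => (x, x0)) ?_).trans (le_of_eq ?_))
  · refine ⟨?_, ?_⟩
    · rw [Measure.map_map measurable_fst hmk]
      exact Measure.map_id
    · rw [Measure.map_map measurable_snd hmk]
      have : (Prod.snd ∘ fun x : E => (x, x0)) = fun _ => x0 := rfl
      rw [this, Measure.map_const, measure_univ, one_smul]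
      simp only [empiricalMeasure, Finset.sum_const, Finset.card_univ, Fintype.card_fin]
      rw [← Nat.cast_smul_eq_nsmul ℝ≥0∞, smul_smul, ENNReal.inv_mul_cancel (by exact_mod_cast hk.ne') (by simp), one_smul]
  · rw [lintegral_map hm hmk]

lemma exp_upper {p : ℝ} (hp : 1 ≤ p) (μ : Measure E) [IsProbabilityMeasure μ] {a r C : ℝ} (hC : 0 < C)
    (ha : -(1 / (2 * p)) ≤ a) (har : a < r)
    (hb : ∀ k : ℕ, 0 < k → unifQuantErr p k μ < ENNReal.ofReal (C * (k : ℝ) ^ a)) :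
    ∀ᶠ n : ℕ in atTop, expWpPow p μ n ≤ ENNReal.ofReal ((n : ℝ) ^ r) := by
  have hp0 : 0 < p := by linarith
  set c : ℕ → ℝ := fun s => C ^ p * ((2 : ℝ) ^ s) ^ (a * p) with hc
  have hc0 : ∀ s, 0 ≤ c s := fun s => by positivity
  have hex : ∀ s, ∃ y h, SP p μ (2 ^ s) y h (ENNReal.ofReal (c s)) := by
    intro s
    have h2 : 0 < 2 ^ s := by positivity
    have h := hb (2 ^ s) h2
    unfold unifQuantErr at h
    obtain ⟨x, hx⟩ := iInf_lt_iff.1 h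
    set y : ℕ → E := fun i => if h : i < 2 ^ s then x ⟨i, h⟩ else x ⟨0, h2⟩ with hy
    have hyx : (fun i : Fin (2 ^ s) => y i) = x := by
      ext i; simp [hy]
    rw [← hyx] at hx
    obtain ⟨g, hg⟩ := SP.extract h2 hp y hx
    refine ⟨y, g, ?_⟩
    convert hg using 1
    rw [ENNReal.ofReal_rpow_of_nonneg (by positivity) hp0.le]
    congr 1
    rw [hc, Real.mul_rpow hC.le (by positivity), ← Real.rpow_mul (by positivity)]
    push_cast
    rfl
  obtain ⟨Y, H, hSP, hY⟩ := SP.chain hp _ hex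
  have hY' : ∀ s, ∑ v ∈ Finset.range (2 ^ (s + 1)), dist (Y (s + 1) v) (Y s (v / 2)) ^ p ≤
        2 ^ (s + 1) * (2 ^ (p - 1) * (c s + c (s + 1))) := by
    intro s
    have h := hY s
    simp only [edist_rpow hp0.le] at h
    rw [← ENNReal.ofReal_sum_of_nonneg (fun v _ => by positivity), ← ENNReal.ofReal_add (hc0 _) (hc0 _)] at h
    have e : (2 : ℝ≥0∞) ^ (p - 1) = ENNReal.ofReal (2 ^ (p - 1)) := by
      rw [← ENNReal.ofReal_rpow_of_pos (by norm_num)]; norm_num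
    rw [e, ← ENNReal.ofReal_mul (by positivity), ← ENNReal.ofReal_natCast, ← ENNReal.ofReal_mul (by positivity)] at h
    have h0 : 0 ≤ c s + c (s + 1) := add_nonneg (hc0 _) (hc0 _)
    have := (ENNReal.ofReal_le_ofReal_iff (by positivity)).1 h
    push_cast at this
    exact this
  set K := 3 ^ (p - 1) * C ^ p * (4 + 2 ^ (p - 1) * 2 ^ (p - 1) * 3) with hK
  have hK0 : 0 < K := by positivity
  have hδ : 0 < (r - a) * p := mul_pos (by linarith) hp0
  filter_upwards [eventually_log_le hp hδ hK0, eventually_gt_atTop 0] with n hn hn0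
  have hnR : (0 : ℝ) < n := by exact_mod_cast hn0
  have h1 := expect_bound hp hn0 c hc0 Y H hSP hY' (Nat.log 2 n)
  have hq : -(1 / 2) ≤ a * p := by
    have := mul_le_mul_of_nonneg_right ha hp0.le
    have e : -(1 / (2 * p)) * p = -(1 / 2) := by field_simp
    linarith
  have h2 := final_estimate hp (C := C ^ p) (by positivity) hq hn0
  have h3 : ∫⁻ X, (Wp p (empiricalMeasure n X) μ) ^ p ∂(sampleMeasure μ n) ≤ ENNReal.ofReal ((n : ℝ) ^ (r * p)) := by
    refine h1.trans (ENNReal.ofReal_le_ofReal (h2.trans ?_))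
    calc _ ≤ (n : ℝ) ^ ((r - a) * p) * (n : ℝ) ^ (a * p) := by gcongr
      _ = (n : ℝ) ^ (r * p) := by rw [← Real.rpow_add hnR]; congr 1; ring
  unfold expWpPow
  calc _ ≤ (ENNReal.ofReal ((n : ℝ) ^ (r * p))) ^ (1 / p) := by gcongr
    _ = _ := by
      rw [ENNReal.ofReal_rpow_of_nonneg (by positivity) (by positivity), ← Real.rpow_mul hnR.le]
      congr 2; field_simp

lemma quant_const {p : ℝ} (hp : 1 ≤ p) (μ : Measure E) [IsProbabilityMeasure μ] (hμ : HasFiniteMoment p μ) {a : ℝ}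
    (h : ∀ᶠ n : ℕ in atTop, unifQuantErr p n μ ≤ ENNReal.ofReal ((n : ℝ) ^ a)) :
    ∃ C : ℝ, 0 < C ∧ ∀ k : ℕ, 0 < k → unifQuantErr p k μ < ENNReal.ofReal (C * (k : ℝ) ^ a) := by
  obtain ⟨x0, hx0⟩ := hμ
  obtain ⟨N, hN⟩ := eventually_atTop.1 h
  set B := (∫⁻ x, edist x x0 ^ p ∂μ) ^ (1 / p) with hB
  have hBf : B ≠ ∞ := ENNReal.rpow_ne_top_of_nonneg (by positivity) hx0
  have hsum : ∀ k : ℕ, 0 ≤ (B.toReal + 1) * ((k : ℝ) ^ a)⁻¹ := fun k => by positivity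
  have hS := Finset.sum_nonneg (s := Finset.range N) fun k _ => hsum k
  refine ⟨2 + ∑ k ∈ Finset.range N, (B.toReal + 1) * ((k : ℝ) ^ a)⁻¹, by linarith, fun k hk => ?_⟩
  have hkR : (0 : ℝ) < k := by exact_mod_cast hk
  have hka : 0 < (k : ℝ) ^ a := Real.rpow_pos_of_pos hkR _
  rcases lt_or_ge k N with hkN | hkN
  · refine (quant_bdd (p := p) μ x0 hk).trans_lt ?_
    rw [← hB]
    refine (ENNReal.ofReal_toReal hBf).symm.trans_lt ?_
    refine (ENNReal.ofReal_lt_ofReal_iff_of_nonneg (by positivity)).2 ?_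
    have h1 := Finset.single_le_sum (fun k _ => hsum k) (Finset.mem_range.2 hkN)
    have h2 := mul_le_mul_of_nonneg_right h1 hka.le
    rw [mul_assoc, inv_mul_cancel₀ hka.ne'] at h2
    nlinarith
  · refine (hN k hkN).trans_lt ?_
    refine (ENNReal.ofReal_lt_ofReal_iff_of_nonneg (by positivity)).2 ?_
    nlinarith

end


/-- **Corollary (main2corollary, part 1).** Let `(E, d_E)` be a separable metric
space, `p ≥ 1` and `μ ∈ 𝒫_p(E)` not a Dirac measure. Then
`max(−1/2, limsup ln b_{n,p}(μ)/ln n) ≤ limsup ln((𝔼[W_p(μ_n,μ)^p])^{1/p})/ln n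
 ≤ max(−1/(2p), limsup ln b_{n,p}(μ)/ln n)`.
The logarithms are taken in the extended sense (`ENNReal.log`, with values in `EReal`,
so that `ln 0 = −∞`), and `ln x / ln n` is rendered as `ln x · (ln n)⁻¹`. -/
theorem stmt_3 {E : Type*} [MetricSpace E] [TopologicalSpace.SeparableSpace E]
    [MeasurableSpace E] [BorelSpace E]
    (p : ℝ) (hp : 1 ≤ p)
    (μ : Measure E) [IsProbabilityMeasure μ] (hμ : HasFiniteMoment p μ)
    (hnotdirac : ∀ x : E, μ ≠ Measure.dirac x) :
    max ((- (1 / 2) : ℝ) : EReal)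
        (Filter.limsup
          (fun n : ℕ => ENNReal.log (unifQuantErr p n μ) * (((Real.log n)⁻¹ : ℝ) : EReal))
          Filter.atTop)
      ≤ Filter.limsup
          (fun n : ℕ => ENNReal.log (expWpPow p μ n) * (((Real.log n)⁻¹ : ℝ) : EReal))
          Filter.atTop ∧
    Filter.limsup
        (fun n : ℕ => ENNReal.log (expWpPow p μ n) * (((Real.log n)⁻¹ : ℝ) : EReal))
        Filter.atTop
      ≤ max ((- (1 / (2 * p)) : ℝ) : EReal)
          (Filter.limsup
            (fun n : ℕ => ENNReal.log (unifQuantErr p n μ) * (((Real.log n)⁻¹ : ℝ) : EReal))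
            Filter.atTop) := by
  refine ⟨max_le ?_ ?_, ?_⟩
  · obtain ⟨c, hc, hlow⟩ := exp_lower hp μ hnotdirac
    refine EReal.ge_of_forall_gt_iff_ge.1 fun z hz => ?_
    have hz' : z < -(1 / 2) := by exact_mod_cast hz
    refine le_limsup_of_frequently_le' (Eventually.frequently ?_)
    have ht := (tendsto_rpow_atTop (y := -(1 / 2) - z) (by linarith)).comp (tendsto_natCast_atTop_atTop (R := ℝ))
    filter_upwards [ht.eventually_ge_atTop (1 / c), eventually_ge_atTop 2] with n hn hn2
    rw [le_log_iff hn2]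
    refine le_trans (ENNReal.ofReal_le_ofReal ?_) (hlow n (by omega))
    have hnR : (0 : ℝ) < n := by positivity
    have hn' : 1 / c ≤ (n : ℝ) ^ (-(1 / 2) - z) := hn
    rw [div_le_iff₀ hc] at hn'
    have e : (n : ℝ) ^ (-(1 / 2) : ℝ) = (n : ℝ) ^ (-(1 / 2) - z) * (n : ℝ) ^ z := by
      rw [← Real.rpow_add hnR]; congr 1; ring
    rw [e]
    have : 0 < (n : ℝ) ^ z := Real.rpow_pos_of_pos hnR _
    nlinarith
  · refine limsup_le_limsup (Eventually.of_forall fun n => ?_)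
    have h0 : (0 : EReal) ≤ (((Real.log n)⁻¹ : ℝ) : EReal) := by
      exact_mod_cast inv_nonneg.2 (Real.log_natCast_nonneg n)
    exact mul_le_mul_of_nonneg_right (ENNReal.log_le_log (quant_le_exp hp μ n)) h0
  · refine EReal.le_of_forall_lt_iff_le.1 fun r hr => ?_
    obtain ⟨a, ha, har⟩ := EReal.lt_iff_exists_real_btwn.1 hr
    have ha1 : -(1 / (2 * p)) < a := by exact_mod_cast (le_max_left _ _).trans_lt ha
    have ha2 := eventually_lt_of_limsup_lt ((le_max_right _ _).trans_lt ha)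
    have ha3 : ∀ᶠ n : ℕ in atTop, unifQuantErr p n μ ≤ ENNReal.ofReal ((n : ℝ) ^ a) := by
      filter_upwards [ha2, eventually_ge_atTop 2] with n hn hn2
      exact (log_le_iff hn2 _ _).1 hn.le
    obtain ⟨C, hC, hb⟩ := quant_const hp μ hμ ha3
    refine limsup_le_of_le (by isBoundedDefault) ?_
    filter_upwards [exp_upper hp μ hC ha1.le (by exact_mod_cast har) hb, eventually_ge_atTop 2] with n hn hn2
    exact (log_le_iff hn2 _ _).2 hn
end
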